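/- For n = 63015 = 391 + 62624, the least index i with |a(63015,i)| = M_63015 is L(63015) = 63015·63016/4 - 124 - 19787. -/

import Mathlib

open Polynomial

/-- `a n i` is the coefficient of `q^i` in `(q;q)_n = ∏_{k=1}^n (1 - q^k)` over `ℤ`. -/
noncomputable def a (n i : ℕ) : ℤ :=
  (∏ k ∈ Finset.Icc 1 n, (1 - (X : Polynomial ℤ) ^ k)).coeff i

/-- `M n` is the maximum of `|a n i|` over `0 ≤ i ≤ n(n+1)/2`. -/
noncomputable def M (n : ℕ) : ℕ :=
  (Finset.range (n * (n + 1) / 2 + 1)).sup fun i => (a n i).natAbs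

/-- `L n` is the least index `i` with `|a n i| = M n`. -/
noncomputable def L (n : ℕ) : ℕ :=
  sInf {i : ℕ | (a n i).natAbs = M n}


namespace QP

noncomputable def S (n : ℕ) (θ : ℝ) : ℝ := ∏ k ∈ Finset.Icc 1 n, (2 * Real.sin (k * θ / 2))

lemma one_sub_exp (x : ℝ) : 1 - Complex.exp (Complex.I * x) =
    (-Complex.I) * ((2 * Real.sin (x / 2) : ℝ) : ℂ) * Complex.exp (Complex.I * (x / 2 : ℝ)) := by
  have h1 : Complex.exp (Complex.I * x) = Complex.exp (Complex.I * (x / 2 : ℝ)) ^ 2 := by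
    rw [← Complex.exp_nat_mul]; congr 1; push_cast; ring
  have h2 : Complex.exp (Complex.I * (x / 2 : ℝ)) =
      (Real.cos (x / 2) : ℂ) + (Real.sin (x / 2) : ℂ) * Complex.I := by
    rw [mul_comm, Complex.exp_mul_I]; simp
  rw [h1, h2]
  have h3 : (Real.cos (x / 2) : ℂ) ^ 2 + (Real.sin (x / 2) : ℂ) ^ 2 = 1 := by
    have := Real.cos_sq_add_sin_sq (x / 2)
    exact_mod_cast this
  generalize (Real.cos (x / 2) : ℂ) = c at *
  have : ((2 * Real.sin (x / 2) : ℝ) : ℂ) = 2 * (Real.sin (x / 2) : ℂ) := by push_cast; ring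
  rw [this]
  generalize (Real.sin (x / 2) : ℂ) = s at *
  have hI := Complex.I_sq
  linear_combination (-1 : ℂ) * h3 + (-s ^ 2 + 2 * s ^ 2) * hI

lemma prod_exp (n : ℕ) (θ : ℝ) :
    ∏ k ∈ Finset.Icc 1 n, (1 - Complex.exp (Complex.I * θ) ^ k) =
      (-Complex.I) ^ n * (S n θ : ℂ) * Complex.exp (Complex.I * ((n * (n + 1) / 4 : ℝ) * θ : ℝ)) := by
  induction n with
  | zero => simp [S]
  | succ m ih =>
    rw [Finset.prod_Icc_succ_top (by omega), ih]
    have h1 : Complex.exp (Complex.I * θ) ^ (m + 1) = Complex.exp (Complex.I * (((m + 1 : ℕ) : ℝ) * θ : ℝ)) := by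
      rw [← Complex.exp_nat_mul]; congr 1; push_cast; ring
    rw [h1, one_sub_exp]
    have h2 : S (m + 1) θ = S m θ * (2 * Real.sin (((m + 1 : ℕ) : ℝ) * θ / 2)) := by
      unfold S; rw [Finset.prod_Icc_succ_top (by omega)]
    have h3 : Complex.exp (Complex.I * ((((m + 1 : ℕ) : ℝ) * (((m + 1 : ℕ) : ℝ) + 1) / 4 : ℝ) * θ : ℝ)) =
        Complex.exp (Complex.I * ((m * (m + 1) / 4 : ℝ) * θ : ℝ)) *
        Complex.exp (Complex.I * (((m + 1 : ℕ) : ℝ) * θ / 2 : ℝ)) := by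
      rw [← Complex.exp_add]; congr 1; push_cast; ring
    rw [h2, h3]
    push_cast
    ring

lemma eval_eq (n : ℕ) (z : ℂ) : ∃ K : ℕ, (∀ i, K ≤ i → a n i = 0) ∧
    ∏ k ∈ Finset.Icc 1 n, (1 - z ^ k) = ∑ i ∈ Finset.range K, (a n i : ℂ) * z ^ i := by
  set P : Polynomial ℤ := ∏ k ∈ Finset.Icc 1 n, (1 - (X : Polynomial ℤ) ^ k) with hP
  refine ⟨P.natDegree + 1, fun i hi => Polynomial.coeff_eq_zero_of_natDegree_lt (p := P) (by omega), ?_⟩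
  have h1 : P.eval₂ (Int.castRingHom ℂ) z = ∏ k ∈ Finset.Icc 1 n, (1 - z ^ k) := by
    rw [hP, Polynomial.eval₂_finsetProd]
    simp
  rw [← h1, Polynomial.eval₂_eq_sum_range]
  rfl

lemma int_exp (m : ℤ) : ∫ θ in (-Real.pi)..Real.pi, Complex.exp (Complex.I * (m * θ : ℝ)) =
    if m = 0 then 2 * (Real.pi : ℂ) else 0 := by
  split_ifs with h
  · subst h; simp; ring
  · have hc : Complex.I * (m : ℂ) ≠ 0 := by simp [h]
    have := integral_exp_mul_complex (a := -Real.pi) (b := Real.pi) hc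
    have e : (fun θ : ℝ => Complex.exp (Complex.I * (m * θ : ℝ))) =
        fun θ : ℝ => Complex.exp (Complex.I * (m : ℂ) * θ) := by
      funext θ; congr 1; push_cast; ring
    rw [e, this]
    have : Complex.exp (Complex.I * (m : ℂ) * (Real.pi : ℝ)) =
        Complex.exp (Complex.I * (m : ℂ) * ((-Real.pi : ℝ) : ℂ)) := by
      rw [Complex.exp_eq_exp_iff_exists_int]
      exact ⟨m, by push_cast; ring⟩
    rw [this]; simp

lemma S_cont (n : ℕ) : Continuous (S n) := by unfold S; fun_prop

lemma S_odd (n : ℕ) (hn : n % 2 = 1) (θ : ℝ) : S n (-θ) = - S n θ := by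
  unfold S
  have : ∀ k ∈ Finset.Icc 1 n, 2 * Real.sin (k * (-θ) / 2) = (-1) * (2 * Real.sin (k * θ / 2)) := by
    intro k _
    rw [show (k : ℝ) * (-θ) / 2 = -(k * θ / 2) by ring, Real.sin_neg]; ring
  rw [Finset.prod_congr rfl this, Finset.prod_mul_distrib]
  simp
  rw [Odd.neg_one_pow (Nat.odd_iff.2 hn)]; simp

theorem coeff_int (n N2 : ℕ) (hn : n % 4 = 3) (hN : 4 * N2 = n * (n + 1)) (i : ℕ) :
    Real.pi * (a n i : ℝ) = - ∫ θ in (0:ℝ)..Real.pi, S n θ * Real.sin (((N2 : ℝ) - i) * θ) := by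
  -- complex
  have key : ∫ θ in (-Real.pi)..Real.pi,
      (Complex.I * (S n θ : ℂ)) * Complex.exp (Complex.I * (((N2 : ℝ) - i) * θ : ℝ)) = 2 * Real.pi * (a n i : ℂ) := by
    have hI : (-Complex.I) ^ n = Complex.I := by
      obtain ⟨m, hm⟩ : ∃ m, n = 4 * m + 3 := ⟨n / 4, by omega⟩
      rw [hm, pow_add, pow_mul]
      have : (-Complex.I) ^ 4 = 1 := by
        rw [neg_pow, Complex.I_pow_four]; norm_num
      rw [this, one_pow, one_mul, neg_pow, Complex.I_pow_three]; norm_num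
    obtain ⟨K, hK, -⟩ := eval_eq n 0
    have hev : ∀ θ : ℝ, (Complex.I * (S n θ : ℂ)) * Complex.exp (Complex.I * (((N2 : ℝ) - i) * θ : ℝ)) =
        ∑ j ∈ Finset.range (K + i + 1), (a n j : ℂ) * Complex.exp (Complex.I * (((j - i : ℤ) : ℝ) * θ : ℝ)) := by
      intro θ
      obtain ⟨K', hK', h⟩ := eval_eq n (Complex.exp (Complex.I * θ))
      have hsum : ∀ z : ℂ, ∑ j ∈ Finset.range K', (a n j : ℂ) * z ^ j =
          ∑ j ∈ Finset.range (K + i + 1), (a n j : ℂ) * z ^ j := by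
        intro z
        rcases le_total K' (K + i + 1) with hle | hle
        · refine Finset.sum_subset (Finset.range_mono hle) ?_
          intro j _ hj
          rw [hK' j (by simpa using hj)]; simp
        · symm
          refine Finset.sum_subset (Finset.range_mono hle) ?_
          intro j _ hj
          rw [hK j (by simp at hj; omega)]; simp
      rw [prod_exp, hI, hsum] at h
      have e1 : (((N2 : ℝ) - i) * θ : ℝ) = (n * (n + 1) / 4 : ℝ) * θ + (-(i : ℝ) * θ) := by
        have : (4 : ℝ) * N2 = n * (n + 1) := by exact_mod_cast hN
        rw [← this]; ring
      rw [e1, Complex.ofReal_add, mul_add, Complex.exp_add, ← mul_assoc, h, Finset.sum_mul]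
      refine Finset.sum_congr rfl fun j _ => ?_
      rw [mul_assoc, ← Complex.exp_nat_mul, ← Complex.exp_add]
      congr 2; push_cast; ring
    rw [intervalIntegral.integral_congr (fun θ _ => hev θ), intervalIntegral.integral_finsetSum]
    · simp_rw [intervalIntegral.integral_const_mul, int_exp]
      rw [Finset.sum_eq_single i]
      · simp; ring
      · intro j _ hj
        rw [if_neg (by omega)]; simp
      · intro hi; simp at hi
    · intro j _
      apply Continuous.intervalIntegrable
      fun_prop
  have hre := congrArg Complex.re key
  have hS : Continuous (fun θ => (S n θ : ℂ)) := Complex.continuous_ofReal.comp (S_cont n)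
  have hintg : IntervalIntegrable (fun θ : ℝ => (Complex.I * (S n θ : ℂ)) * Complex.exp (Complex.I * (((N2 : ℝ) - i) * θ : ℝ)))
      MeasureTheory.volume (-Real.pi) Real.pi := by
    apply Continuous.intervalIntegrable
    fun_prop
  have h2 := Complex.reCLM.intervalIntegral_comp_comm hintg
  simp only [Complex.reCLM_apply] at h2
  rw [← h2] at hre
  have h3 : ∀ θ : ℝ, ((Complex.I * (S n θ : ℂ)) * Complex.exp (Complex.I * (((N2 : ℝ) - i) * θ : ℝ))).re =
      - (S n θ * Real.sin (((N2 : ℝ) - i) * θ)) := by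
    intro θ
    rw [mul_comm Complex.I (((((N2 : ℝ) - i) * θ : ℝ) : ℂ)), Complex.exp_mul_I, ← Complex.ofReal_cos, ← Complex.ofReal_sin]
    generalize Real.cos (((N2 : ℝ) - i) * θ) = c
    generalize Real.sin (((N2 : ℝ) - i) * θ) = s
    simp [Complex.mul_re, Complex.mul_im]
  rw [intervalIntegral.integral_congr (fun θ _ => h3 θ), intervalIntegral.integral_neg] at hre
  have hc : Continuous fun θ => S n θ * Real.sin (((N2 : ℝ) - i) * θ) := by
    have := S_cont n; fun_prop
  have h4 : ∫ θ in (-Real.pi)..Real.pi, S n θ * Real.sin (((N2 : ℝ) - i) * θ) =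
      2 * ∫ θ in (0:ℝ)..Real.pi, S n θ * Real.sin (((N2 : ℝ) - i) * θ) := by
    rw [← intervalIntegral.integral_add_adjacent_intervals (hc.intervalIntegrable _ 0) (hc.intervalIntegrable 0 _)]
    have := intervalIntegral.integral_comp_neg (a := 0) (b := Real.pi) (fun θ => S n θ * Real.sin (((N2 : ℝ) - i) * θ))
    rw [neg_zero] at this
    rw [← this, two_mul]
    congr 1
    refine intervalIntegral.integral_congr fun θ _ => ?_
    simp only [S_odd n (by omega)]
    rw [mul_neg, Real.sin_neg]; ring
  rw [h4] at hre
  have h5 : (2 * (Real.pi : ℂ) * (a n i : ℂ)).re = 2 * Real.pi * (a n i : ℝ) := by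
    rw [show (2 * (Real.pi : ℂ) * (a n i : ℂ)) = ((2 * Real.pi * (a n i : ℝ) : ℝ) : ℂ) by push_cast; ring, Complex.ofReal_re]
  rw [h5] at hre
  linarith

end QP

namespace QP

/-- `log |1 - r e(x)|` -/
noncomputable def g (r x : ℝ) : ℝ := (1 / 2) * Real.log (1 - 2 * r * Real.cos (2 * Real.pi * x) + r ^ 2)

lemma g_arg_ge {r : ℝ} (h0 : 0 ≤ r) (x : ℝ) :
    (1 - r) ^ 2 ≤ 1 - 2 * r * Real.cos (2 * Real.pi * x) + r ^ 2 := by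
  nlinarith [Real.cos_le_one (2 * Real.pi * x)]

lemma g_arg_pos {r : ℝ} (h0 : 0 ≤ r) (h1 : r < 1) (x : ℝ) :
    0 < 1 - 2 * r * Real.cos (2 * Real.pi * x) + r ^ 2 :=
  lt_of_lt_of_le (by nlinarith) (g_arg_ge h0 x)

lemma norm_sq_e (r x : ℝ) : ‖(1 : ℂ) - r * Complex.exp (2 * Real.pi * x * Complex.I)‖ ^ 2 =
    1 - 2 * r * Real.cos (2 * Real.pi * x) + r ^ 2 := by
  rw [← Complex.normSq_eq_norm_sq, Complex.exp_mul_I]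
  have e1 : (2 * Real.pi * x : ℂ) = ((2 * Real.pi * x : ℝ) : ℂ) := by push_cast; ring
  rw [e1, ← Complex.ofReal_cos, ← Complex.ofReal_sin]
  have := Real.cos_sq_add_sin_sq (2 * Real.pi * x)
  generalize Real.cos (2 * Real.pi * x) = c at *
  generalize Real.sin (2 * Real.pi * x) = s at *
  simp [Complex.normSq_apply]
  linear_combination r ^ 2 * this

lemma g_eq_log (r x : ℝ) : g r x = Real.log ‖(1 : ℂ) - r * Complex.exp (2 * Real.pi * x * Complex.I)‖ := by
  unfold g
  rw [← norm_sq_e, Real.log_pow]; push_cast; ring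

lemma exp_g {r : ℝ} (h0 : 0 ≤ r) (h1 : r < 1) (x : ℝ) :
    Real.exp (g r x) = ‖(1 : ℂ) - r * Complex.exp (2 * Real.pi * x * Complex.I)‖ := by
  rw [g_eq_log, Real.exp_log]
  rcases (norm_nonneg ((1 : ℂ) - r * Complex.exp (2 * Real.pi * x * Complex.I))).lt_or_eq with h | h
  · exact h
  · have := norm_sq_e r x
    rw [← h] at this
    have := g_arg_pos h0 h1 x
    nlinarith

lemma g_cont {r : ℝ} (h0 : 0 ≤ r) (h1 : r < 1) : Continuous (g r) := by
  unfold g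
  refine continuous_const.mul (Continuous.log (by fun_prop) fun x => (g_arg_pos h0 h1 x).ne')

lemma g_neg (r x : ℝ) : g r (-x) = g r x := by
  unfold g; rw [mul_neg, Real.cos_neg]

lemma g_add_int (r x : ℝ) (m : ℤ) : g r (x + m) = g r x := by
  unfold g
  rw [show 2 * Real.pi * (x + m) = 2 * Real.pi * x + m * (2 * Real.pi) by ring, Real.cos_add_int_mul_two_pi]

lemma g_le_log2 {r : ℝ} (h0 : 0 ≤ r) (h1 : r < 1) (x : ℝ) : g r x ≤ Real.log 2 := by
  have h : Real.log (1 - 2 * r * Real.cos (2 * Real.pi * x) + r ^ 2) ≤ Real.log (2 ^ 2) := by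
    apply Real.log_le_log (g_arg_pos h0 h1 x)
    nlinarith [Real.neg_one_le_cos (2 * Real.pi * x)]
  rw [Real.log_pow] at h
  unfold g; push_cast at h; linarith

lemma g_mono {r : ℝ} (h0 : 0 ≤ r) (h1 : r < 1) {x y : ℝ} (hx : 0 ≤ x) (hxy : x ≤ y) (hy : y ≤ 1 / 2) :
    g r x ≤ g r y := by
  unfold g
  have : Real.cos (2 * Real.pi * y) ≤ Real.cos (2 * Real.pi * x) := by
    apply Real.cos_le_cos_of_nonneg_of_le_pi
    · have := Real.pi_pos; positivity
    · nlinarith [Real.pi_pos]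
    · nlinarith [Real.pi_pos]
  have := Real.log_le_log (g_arg_pos h0 h1 x) (show 1 - 2 * r * Real.cos (2 * Real.pi * x) + r ^ 2 ≤
     1 - 2 * r * Real.cos (2 * Real.pi * y) + r ^ 2 by nlinarith)
  linarith

lemma g_lip {r : ℝ} (h0 : 0 ≤ r) (h1 : r < 1) (x y : ℝ) :
    g r y ≤ g r x + 2 * Real.pi * r / (1 - r ^ 2) * |y - x| := by
  have hr2 : 0 < 1 - r ^ 2 := by nlinarith
  have hd : ∀ t, HasDerivAt (g r) ((1 / 2) * ((2 * r * Real.sin (2 * Real.pi * t) * (2 * Real.pi)) /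
      (1 - 2 * r * Real.cos (2 * Real.pi * t) + r ^ 2))) t := by
    intro t
    unfold g
    apply HasDerivAt.const_mul
    have hne := (g_arg_pos h0 h1 t).ne'
    have h1 : HasDerivAt (fun t : ℝ => 2 * Real.pi * t) (2 * Real.pi) t := by
      simpa using (hasDerivAt_id t).const_mul (2 * Real.pi)
    have h2 := (h1.cos.const_mul (2 * r)).const_sub 1 |>.add_const (r ^ 2)
    have h3 := h2.log hne
    refine h3.congr_deriv ?_
    congr 1; ring
  have hb : ∀ t ∈ (Set.univ : Set ℝ), ‖(1 / 2) * ((2 * r * Real.sin (2 * Real.pi * t) * (2 * Real.pi)) /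
      (1 - 2 * r * Real.cos (2 * Real.pi * t) + r ^ 2))‖ ≤ 2 * Real.pi * r / (1 - r ^ 2) := by
    intro t _
    have hp := g_arg_pos h0 h1 t
    rw [Real.norm_eq_abs, abs_mul, abs_of_pos (by norm_num : (0:ℝ) < 1 / 2), abs_div, abs_of_pos hp]
    rw [abs_mul, abs_mul, abs_of_nonneg (by positivity : 0 ≤ 2 * r), abs_of_nonneg (by positivity : 0 ≤ 2 * Real.pi)]
    have key : |Real.sin (2 * Real.pi * t)| * (1 - r ^ 2) ≤ 1 - 2 * r * Real.cos (2 * Real.pi * t) + r ^ 2 := by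
      have hs := Real.cos_sq_add_sin_sq (2 * Real.pi * t)
      rw [← sq_abs (Real.sin _)] at hs
      generalize |Real.sin (2 * Real.pi * t)| = s at *
      generalize Real.cos (2 * Real.pi * t) = c at *
      have : (s * (1 - r ^ 2) + c * (2 * r)) ^ 2 ≤ (1 + r ^ 2) ^ 2 := by
        have : (1 + r ^ 2) ^ 2 - (s * (1 - r ^ 2) + c * (2 * r)) ^ 2 = (s * (2 * r) - c * (1 - r ^ 2)) ^ 2 := by
          linear_combination (-(1 + r ^ 2) ^ 2) * hs
        nlinarith [sq_nonneg (s * (2 * r) - c * (1 - r ^ 2))]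
      have := abs_le_of_sq_le_sq' this (by positivity)
      linarith [this.2]
    rw [← mul_div_assoc, div_le_div_iff₀ hp hr2]
    have hq : 0 ≤ 2 * Real.pi * r := by have := Real.pi_pos; positivity
    nlinarith [mul_le_mul_of_nonneg_left key hq]
  have := convex_univ.norm_image_sub_le_of_norm_hasDerivWithin_le (f := g r)
    (fun t _ => (hd t).hasDerivWithinAt) hb (Set.mem_univ x) (Set.mem_univ y)
  rw [Real.norm_eq_abs, Real.norm_eq_abs] at this
  linarith [le_abs_self (g r y - g r x)]

lemma g_int {r : ℝ} (h0 : 0 ≤ r) (h1 : r < 1) : ∫ x in (0:ℝ)..1, g r x = 0 := by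
  have h := circleAverage_log_norm_sub_const₀ (a := (r : ℂ)) (by simpa [abs_of_nonneg h0] using h1)
  rw [Real.circleAverage_def] at h
  have hpi := Real.pi_pos
  have e : ∀ x : ℝ, g r x = (fun θ : ℝ => Real.log ‖circleMap 0 1 θ - r‖) (2 * Real.pi * x) := by
    intro x
    simp only
    rw [g_eq_log]
    congr 1
    have : ‖circleMap 0 1 (2 * Real.pi * x) - (r : ℂ)‖ = ‖(1 : ℂ) - r * Complex.exp (2 * Real.pi * (-x : ℝ) * Complex.I)‖ := by
      rw [show (circleMap 0 1 (2 * Real.pi * x) - (r : ℂ)) = Complex.exp (((2 * Real.pi * x : ℝ) : ℂ) * Complex.I) *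
         (1 - r * Complex.exp (2 * Real.pi * (-x : ℝ) * Complex.I)) by
           rw [mul_sub, mul_left_comm, ← Complex.exp_add, circleMap]
           push_cast
           ring_nf
           simp]
      rw [norm_mul, Complex.norm_exp_ofReal_mul_I, one_mul]
    rw [this]
    have h1 := norm_sq_e r x
    have h2 := norm_sq_e r (-x)
    rw [mul_neg, Real.cos_neg, ← h1] at h2
    exact ((sq_eq_sq₀ (norm_nonneg _) (norm_nonneg _)).1 h2).symm
  rw [intervalIntegral.integral_congr (fun x _ => e x),
    intervalIntegral.integral_comp_mul_left (fun θ : ℝ => Real.log ‖circleMap 0 1 θ - r‖) (by positivity)]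
  simpa using h

lemma g_block {r : ℝ} (h0 : 0 ≤ r) (h1 : r < 1) (p : ℤ) (q : ℕ) (hq : 0 < q) (hpq : IsCoprime p (q : ℤ))
    (x : ℝ) (m : ℕ) :
    ∑ j ∈ Finset.range q, g r (x + (m + j : ℕ) * (p / q : ℝ)) = g (r ^ q) (q * x) := by
  have hq' : (q : ℝ) ≠ 0 := by positivity
  have hζ := Complex.isPrimitiveRoot_exp_of_isCoprime p q hq.ne' hpq
  set ζ := Complex.exp (2 * Real.pi * Complex.I * (p / q)) with hζd
  set α := (r : ℂ) * Complex.exp (2 * Real.pi * (x + m * (p / q) : ℝ) * Complex.I) with hα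
  have h := X_pow_sub_C_eq_prod hζ (α := α) hq rfl
  have h2 := congrArg (Polynomial.eval 1) h
  rw [Polynomial.eval_prod] at h2
  simp only [eval_sub, eval_pow, eval_X, one_pow, eval_C] at h2
  have hrq : r ^ q < 1 := pow_lt_one₀ h0 h1 hq.ne'
  apply Real.exp_injective
  rw [Real.exp_sum, exp_g (pow_nonneg h0 q) hrq]
  have e1 : ∀ j ∈ Finset.range q, Real.exp (g r (x + (m + j : ℕ) * (p / q : ℝ))) = ‖1 - ζ ^ j * α‖ := by
    intro j _
    rw [exp_g h0 h1, hα, hζd, ← Complex.exp_nat_mul, mul_left_comm, ← Complex.exp_add]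
    congr 4; push_cast; ring
  rw [Finset.prod_congr rfl e1, ← norm_prod, ← h2, hα, mul_pow, ← Complex.exp_nat_mul]
  congr 2
  push_cast
  congr 1
  rw [Complex.exp_eq_exp_iff_exists_int]
  refine ⟨m * p, ?_⟩
  have : (q : ℂ) ≠ 0 := by exact_mod_cast hq.ne'
  field_simp
  push_cast; ring

end QP

namespace QP

noncomputable def GG (r w : ℝ) : ℝ := ∫ x in (0:ℝ)..w, g r x

section
variable {r : ℝ} (h0 : 0 ≤ r) (h1 : r < 1)
include h0 h1

lemma g_ii (u v : ℝ) : IntervalIntegrable (g r) MeasureTheory.volume u v :=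
  (g_cont h0 h1).intervalIntegrable u v

lemma GG_sub (u v : ℝ) : ∫ x in u..v, g r x = GG r v - GG r u := by
  unfold GG
  rw [intervalIntegral.integral_interval_sub_left (g_ii h0 h1 _ _) (g_ii h0 h1 _ _)]

lemma GG_refl (w : ℝ) : GG r (1 - w) = - GG r w := by
  have e : ∫ x in (0:ℝ)..w, g r x = ∫ x in (0:ℝ)..w, g r (1 - x) := by
    refine intervalIntegral.integral_congr fun x _ => ?_
    rw [show (1 - x : ℝ) = -x + ((1 : ℤ) : ℝ) by push_cast; ring, g_add_int, g_neg]
  have e2 := intervalIntegral.integral_comp_sub_left (fun x => g r x) 1 (a := 0) (b := w)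
  rw [← e, sub_zero, GG_sub h0 h1 (1 - w) 1] at e2
  have h : GG r 1 = 0 := g_int h0 h1
  have h' : GG r w = ∫ x in (0:ℝ)..w, g r x := rfl
  linarith

lemma GG_add_one (w : ℝ) : GG r (w + 1) = GG r w := by
  have := GG_refl h0 h1 (-w)
  rw [sub_neg_eq_add, add_comm] at this
  rw [this]
  have e : ∫ x in (0:ℝ)..(-w), g r x = ∫ x in (0:ℝ)..(-w), g r (-x) := by simp_rw [g_neg]
  have e2 := intervalIntegral.integral_comp_neg (fun x => g r x) (a := 0) (b := -w)
  rw [← e, neg_neg, neg_zero, intervalIntegral.integral_symm 0 w] at e2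
  unfold GG
  linarith

lemma GG_half : GG r (1 / 2) = 0 := by
  have := GG_refl h0 h1 (1 / 2)
  norm_num at this ⊢; linarith

lemma GG_nonpos {w : ℝ} (hw : 0 ≤ w) (hw2 : w ≤ 1 / 2) : GG r w ≤ 0 := by
  rcases le_total (g r w) 0 with h | h
  · have h2 : 0 ≤ ∫ x in (0:ℝ)..w, -g r x := by
      apply intervalIntegral.integral_nonneg hw
      intro x hx
      have := g_mono h0 h1 hx.1 hx.2 hw2
      linarith
    rw [intervalIntegral.integral_neg] at h2
    unfold GG; linarith
  · have := GG_sub h0 h1 w (1 / 2)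
    rw [GG_half h0 h1] at this
    have h2 : 0 ≤ ∫ x in w..(1 / 2), g r x := by
      apply intervalIntegral.integral_nonneg hw2
      intro x hx
      exact h.trans (g_mono h0 h1 hw hx.1 hx.2)
    linarith

lemma GG_mid {w : ℝ} (hw : 1 / 2 ≤ w) : GG r w ≤ (w - 1 / 2) * Real.log 2 := by
  have := GG_sub h0 h1 (1 / 2) w
  rw [GG_half h0 h1] at this
  have h2 : ∫ x in (1 / 2 : ℝ)..w, g r x ≤ ∫ x in (1 / 2 : ℝ)..w, Real.log 2 :=
    intervalIntegral.integral_mono_on hw (g_ii h0 h1 _ _) (by simp) (fun x _ => g_le_log2 h0 h1 x)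
  rw [intervalIntegral.integral_const, smul_eq_mul] at h2
  linarith

lemma GG_small {v : ℝ} (hv : 0 ≤ v) (hv2 : v ≤ 1 / 4) : -(1 / 4) ≤ GG r v := by
  have hlog : IntervalIntegrable (fun x : ℝ => Real.log (4 * x)) MeasureTheory.volume 0 v := by
    have := (intervalIntegral.intervalIntegrable_log' (a := 0) (b := 4 * v)).comp_mul_left (c := 4)
    simpa using this
  have h2 : ∫ x in (0:ℝ)..v, Real.log (4 * x) ≤ GG r v := by
    apply intervalIntegral.integral_mono_on_of_le_Ioo hv hlog (g_ii h0 h1 _ _)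
    intro x hx
    have hx1 : x < 1 / 4 := by linarith [hx.2]
    have hs : 4 * x ≤ Real.sin (2 * Real.pi * x) := by
      have := Real.mul_le_sin (x := 2 * Real.pi * x) (by have := Real.pi_pos; have := hx.1; positivity)
        (by nlinarith [Real.pi_pos])
      have e : 2 / Real.pi * (2 * Real.pi * x) = 4 * x := by
        field_simp; ring
      linarith
    have h4 : 0 < 4 * x := by linarith [hx.1]
    have : Real.log ((4 * x) ^ 2) ≤ Real.log (1 - 2 * r * Real.cos (2 * Real.pi * x) + r ^ 2) := by
      apply Real.log_le_log (by positivity)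
      have h5 : (4 * x) ^ 2 ≤ Real.sin (2 * Real.pi * x) ^ 2 := by
        apply pow_le_pow_left₀ h4.le hs
      nlinarith [Real.cos_sq_add_sin_sq (2 * Real.pi * x), sq_nonneg (r - Real.cos (2 * Real.pi * x))]
    rw [Real.log_pow] at this
    unfold g; push_cast at this; linarith
  have h3 : ∫ x in (0:ℝ)..v, Real.log (4 * x) = v * Real.log (4 * v) - v := by
    rw [intervalIntegral.integral_comp_mul_left (fun x => Real.log x) (by norm_num : (4:ℝ) ≠ 0), integral_log]
    simp; ring
  rw [h3] at h2
  rcases hv.eq_or_lt with rfl | hv'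
  · simp at h2; linarith
  · have := Real.one_sub_inv_le_log_of_pos (show 0 < 4 * v by linarith)
    have h5 : v * (1 - (4 * v)⁻¹) = v - 1 / 4 := by field_simp
    nlinarith [mul_le_mul_of_nonneg_left this hv]

lemma GG_01 {w : ℝ} (hw : 0 ≤ w) (hw1 : w ≤ 1) : GG r w ≤ 1 / 4 ∧ GG r w ≤ w / 3 := by
  have hl := Real.log_two_lt_d9
  have hl0 := Real.log_two_gt_d9
  rcases le_total w (1 / 2) with h | h
  · have := GG_nonpos h0 h1 hw h
    constructor <;> linarith
  · have h2 := GG_mid h0 h1 h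
    rcases le_total w (3 / 4) with h3 | h3
    · constructor <;> nlinarith
    · have h4 := GG_small h0 h1 (v := 1 - w) (by linarith) (by linarith)
      rw [GG_refl h0 h1] at h4
      constructor <;> linarith

lemma GG_fract (w : ℝ) : GG r (Int.fract w) = GG r w := by
  have hp : Function.Periodic (GG r) 1 := fun w => GG_add_one h0 h1 w
  have := hp.sub_int_mul_eq (x := w) ⌊w⌋
  rwa [mul_one] at this

lemma GG_le_quarter (w : ℝ) : GG r w ≤ 1 / 4 := by
  rw [← GG_fract h0 h1]
  exact (GG_01 h0 h1 (Int.fract_nonneg w) (Int.fract_lt_one w).le).1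

lemma GG_le_third {w : ℝ} (hw : 0 ≤ w) : GG r w ≤ w / 3 := by
  rw [← GG_fract h0 h1]
  have := (GG_01 h0 h1 (Int.fract_nonneg w) (Int.fract_lt_one w).le).2
  have h2 : Int.fract w ≤ w := by
    rw [Int.fract]; have : (0:ℝ) ≤ ⌊w⌋ := by exact_mod_cast Int.floor_nonneg.2 hw
    linarith
  linarith

lemma GG_one_half {w : ℝ} (hw : 1 ≤ w) (hw2 : w ≤ 3 / 2) : GG r w ≤ 0 := by
  have := GG_add_one h0 h1 (w - 1)
  rw [sub_add_cancel] at this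
  rw [this]
  exact GG_nonpos h0 h1 (by linarith) (by linarith)

lemma block_sum (p : ℤ) (q : ℕ) (hq : 0 < q) (hpq : IsCoprime p (q : ℤ)) {δ : ℝ} (hδ : 0 < δ) (b : ℕ) :
    ∑ j ∈ Finset.range q, g r ((b * q + 1 + j : ℕ) * (p / q + δ)) ≤
      (1 / (q ^ 2 * δ)) * (GG (r ^ q) ((b + 1 : ℕ) * (q ^ 2 * δ)) - GG (r ^ q) (b * (q ^ 2 * δ))) +
        q * (2 * Real.pi * r / (1 - r ^ 2)) * (q * δ) := by
  set K := 2 * Real.pi * r / (1 - r ^ 2) with hK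
  have hK0 : 0 ≤ K := by
    have := Real.pi_pos
    have : 0 < 1 - r ^ 2 := by nlinarith
    positivity
  have hq' : (0:ℝ) < q := by exact_mod_cast hq
  have hrq : r ^ q < 1 := pow_lt_one₀ h0 h1 hq.ne'
  have hrq0 := pow_nonneg h0 q
  set T := ∑ j ∈ Finset.range q, g r ((b * q + 1 + j : ℕ) * (p / q + δ)) with hT
  have hpt : ∀ x ∈ Set.Icc (b * (q * δ)) ((b + 1 : ℕ) * (q * δ)), T ≤ g (r ^ q) (q * x) + q * K * (q * δ) := by
    intro x hx
    rw [← g_block h0 h1 p q hq hpq x (b * q + 1)]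
    have : (q : ℝ) * K * (q * δ) = ∑ j ∈ Finset.range q, K * (q * δ) := by simp; ring
    rw [this, ← Finset.sum_add_distrib]
    refine Finset.sum_le_sum fun j hj => ?_
    refine (g_lip h0 h1 (x + (b * q + 1 + j : ℕ) * (p / q : ℝ)) _).trans ?_
    rw [← hK]
    have hj' : (j : ℝ) + 1 ≤ q := by exact_mod_cast Finset.mem_range.1 hj
    have hx1 := hx.1
    have hx2 := hx.2
    have hj0 : (0:ℝ) ≤ j := by positivity
    have : |((b * q + 1 + j : ℕ) : ℝ) * (p / q + δ) - (x + (b * q + 1 + j : ℕ) * (p / q : ℝ))| ≤ q * δ := by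
      rw [abs_le]
      push_cast at *
      constructor <;> nlinarith
    nlinarith [mul_le_mul_of_nonneg_left this hK0]
  have hle : (b : ℝ) * (q * δ) ≤ (b + 1 : ℕ) * (q * δ) := by
    push_cast; nlinarith [mul_pos hq' hδ]
  have hintg := intervalIntegral.integral_mono_on hle (by simp) (by
      apply Continuous.intervalIntegrable
      have := g_cont hrq0 hrq
      fun_prop) hpt (μ := MeasureTheory.volume) (f := fun _ => T)
  rw [intervalIntegral.integral_add (by
      apply Continuous.intervalIntegrable
      have := g_cont hrq0 hrq
      fun_prop) (by simp), intervalIntegral.integral_const, intervalIntegral.integral_const,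
      intervalIntegral.integral_comp_mul_left (fun x => g (r ^ q) x) hq'.ne', GG_sub hrq0 hrq] at hintg
  simp only [smul_eq_mul] at hintg
  rw [show (q : ℝ) * (((b + 1 : ℕ) : ℝ) * (q * δ)) = (b + 1 : ℕ) * (q ^ 2 * δ) by ring,
    show (q : ℝ) * (b * (q * δ)) = b * (q ^ 2 * δ) by ring,
    show ((b + 1 : ℕ) : ℝ) * (q * δ) - b * (q * δ) = q * δ by push_cast; ring] at hintg
  have hqd : 0 < q * δ := by positivity
  have : T ≤ (q * δ)⁻¹ * ((q : ℝ)⁻¹ * (GG (r ^ q) ((b + 1 : ℕ) * (q ^ 2 * δ)) - GG (r ^ q) (b * (q ^ 2 * δ))) + q * δ * (q * K * (q * δ))) := by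
    rw [inv_mul_eq_div, le_div_iff₀ hqd]; linarith
  refine this.trans (le_of_eq ?_)
  field_simp

lemma total_sum (p : ℤ) (q : ℕ) (hq : 0 < q) (hpq : IsCoprime p (q : ℤ)) {δ : ℝ} (hδ : 0 < δ) (n : ℕ) :
    ∑ k ∈ Finset.range n, g r ((k + 1 : ℕ) * (p / q + δ)) ≤
      (1 / (q ^ 2 * δ)) * GG (r ^ q) ((n / q : ℕ) * (q ^ 2 * δ)) +
        n * (2 * Real.pi * r / (1 - r ^ 2)) * (q * δ) + (n % q : ℕ) * Real.log 2 := by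
  set K := 2 * Real.pi * r / (1 - r ^ 2) with hK
  have hK0 : 0 ≤ K := by
    have := Real.pi_pos
    have : 0 < 1 - r ^ 2 := by nlinarith
    positivity
  have hB : ∀ B : ℕ, ∑ k ∈ Finset.range (B * q), g r ((k + 1 : ℕ) * (p / q + δ)) ≤
      (1 / (q ^ 2 * δ)) * GG (r ^ q) (B * (q ^ 2 * δ)) + (B * q : ℕ) * K * (q * δ) := by
    intro B
    induction B with
    | zero => simp [GG]
    | succ B ih =>
      rw [Nat.succ_mul, Finset.sum_range_add]
      have := block_sum h0 h1 p q hq hpq hδ B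
      have e : ∑ x ∈ Finset.range q, g r ((B * q + x + 1 : ℕ) * (p / q + δ)) =
          ∑ j ∈ Finset.range q, g r ((B * q + 1 + j : ℕ) * (p / q + δ)) := by
        refine Finset.sum_congr rfl fun j _ => ?_
        rw [add_right_comm]
      rw [e]
      push_cast at *
      linarith
  have hn : n = (n / q) * q + n % q := by rw [mul_comm]; exact (Nat.div_add_mod n q).symm
  have hs : ∑ k ∈ Finset.range n, g r ((k + 1 : ℕ) * (p / q + δ)) =
      ∑ k ∈ Finset.range ((n / q) * q), g r ((k + 1 : ℕ) * (p / q + δ)) +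
      ∑ k ∈ Finset.range (n % q), g r (((n / q) * q + k + 1 : ℕ) * (p / q + δ)) := by
    conv_lhs => rw [hn]
    rw [Finset.sum_range_add]
  rw [hs]
  have h3 : ∑ k ∈ Finset.range (n % q), g r (((n / q) * q + k + 1 : ℕ) * (p / q + δ)) ≤ (n % q : ℕ) * Real.log 2 := by
    refine (Finset.sum_le_card_nsmul _ _ _ fun k _ => g_le_log2 h0 h1 _).trans ?_
    simp
  have h4 : (((n / q) * q : ℕ) : ℝ) * K * (q * δ) ≤ n * K * (q * δ) := by
    have : (((n / q) * q : ℕ) : ℝ) ≤ n := by exact_mod_cast Nat.div_mul_le_self n q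
    have h5 : 0 ≤ K * (q * δ) := by positivity
    nlinarith [mul_le_mul_of_nonneg_right this h5]
  linarith [hB (n / q)]
end

lemma sin_reg {r : ℝ} (h0 : 0 ≤ r) (h1 : r < 1) (x : ℝ) :
    |2 * Real.sin (Real.pi * x)| ≤ Real.exp (Real.log (2 / (1 + r)) + g r x) := by
  rw [Real.exp_add, Real.exp_log (by positivity), exp_g h0 h1]
  apply abs_le_of_sq_le_sq _ (by positivity)
  rw [mul_pow, mul_pow _ ‖_‖, norm_sq_e, div_pow]
  have hc : Real.cos (2 * Real.pi * x) = 1 - 2 * Real.sin (Real.pi * x) ^ 2 := by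
    rw [mul_assoc, Real.cos_two_mul, Real.cos_sq']; ring
  have hs : Real.sin (Real.pi * x) ^ 2 ≤ 1 := Real.sin_sq_le_one _
  rw [hc, div_mul_eq_mul_div, le_div_iff₀ (by positivity)]
  nlinarith [sq_nonneg (1 - r)]

lemma minor_pos {n : ℕ} {r : ℝ} (h0 : 0 ≤ r) (h1 : r < 1) (α : ℝ) :
    ∏ k ∈ Finset.range n, |2 * Real.sin (Real.pi * ((k + 1 : ℕ) * α))| ≤
      Real.exp (n * Real.log (2 / (1 + r)) + ∑ k ∈ Finset.range n, g r ((k + 1 : ℕ) * α)) := by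
  have : n * Real.log (2 / (1 + r)) + ∑ k ∈ Finset.range n, g r ((k + 1 : ℕ) * α) =
     ∑ k ∈ Finset.range n, (Real.log (2 / (1 + r)) + g r ((k + 1 : ℕ) * α)) := by
    rw [Finset.sum_add_distrib]; simp
  rw [this, Real.exp_sum]
  exact Finset.prod_le_prod (fun _ _ => abs_nonneg _) (fun k _ => sin_reg h0 h1 _)

end QP

namespace QP

lemma minor_core {n : ℕ} (hn : (n : ℝ) = 63015) (p : ℤ) (q : ℕ) (hq : 0 < q) (hpq : IsCoprime p (q : ℤ)) {δ : ℝ}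
    (hδ : 0 < δ) (hq2 : q ≤ 2500) (hqd : q * δ ≤ 1 / 2501) (h1q : q = 1 → 1 / 63015 ≤ δ) :
    n * Real.log (2 / (1 + (49 / 50 : ℝ))) + ∑ k ∈ Finset.range n, g (49 / 50) ((k + 1 : ℕ) * (p / q + δ)) ≤ 11468 := by
  have h0 : (0:ℝ) ≤ 49 / 50 := by norm_num
  have h1 : (49 / 50 : ℝ) < 1 := by norm_num
  have hmain := total_sum h0 h1 p q hq hpq hδ n
  have hlam : Real.log (2 / (1 + (49 / 50 : ℝ))) ≤ 1 / 99 := by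
    have := Real.log_le_sub_one_of_pos (show (0:ℝ) < 2 / (1 + (49 / 50 : ℝ)) by norm_num)
    norm_num at this ⊢; linarith
  have hK : 2 * Real.pi * (49 / 50) / (1 - (49 / 50 : ℝ) ^ 2) ≤ 155.6 := by
    have := Real.pi_lt_d4
    rw [div_le_iff₀ (by norm_num)]; norm_num; nlinarith
  set K := 2 * Real.pi * (49 / 50) / (1 - (49 / 50 : ℝ) ^ 2)
  have hq' : (1:ℝ) ≤ q := by exact_mod_cast hq
  have hq2' : (q:ℝ) ≤ 2500 := by exact_mod_cast hq2
  have hl2 := Real.log_two_lt_d9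
  have hl0 := Real.log_two_gt_d9
  have hrq : (49 / 50 : ℝ) ^ q < 1 := pow_lt_one₀ h0 h1 hq.ne'
  have hrq0 : (0:ℝ) ≤ (49 / 50 : ℝ) ^ q := pow_nonneg h0 q
  set t := 63015 * (q * δ) with ht
  have htpos : 0 < t := by positivity
  have ht2 : t ≤ 25.2 := by rw [ht]; norm_num at hqd ⊢; linarith
  have hKt : (n:ℝ) * K * (q * δ) ≤ 155.6 * t := by
    rw [hn, ht]
    have : 0 < q * δ := by positivity
    nlinarith [mul_le_mul_of_nonneg_right hK this.le]
  have hmod : ((n % q : ℕ) : ℝ) ≤ q - 1 := by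
    have := Nat.mod_lt n hq
    have : n % q + 1 ≤ q := this
    have : ((n % q : ℕ) : ℝ) + 1 ≤ q := by exact_mod_cast this
    linarith
  have hmod0 : (0:ℝ) ≤ ((n % q : ℕ) : ℝ) := by positivity
  have hm2 : ((n % q : ℕ) : ℝ) * Real.log 2 ≤ (q - 1) * 0.6932 := by nlinarith
  have hnlam : n * Real.log (2 / (1 + (49 / 50 : ℝ))) ≤ 636.6 := by rw [hn]; linarith
  set w := ((n / q : ℕ) : ℝ) * ((q:ℝ) ^ 2 * δ) with hw
  have hqd2 : 0 < (q:ℝ) ^ 2 * δ := by positivity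
  have hw0 : 0 ≤ w := by positivity
  -- it suffices to bound the main term
  have hBn : ((n / q : ℕ) : ℝ) ≤ 63015 / q := by
    rw [← hn]; exact Nat.cast_div_le
  rcases le_total t 1.5 with h | h
  · by_cases hq1 : q = 1
    · have hdn := h1q hq1
      subst hq1
      have hw1 : GG ((49 / 50 : ℝ) ^ 1) w ≤ 0 := by
        apply GG_one_half hrq0 hrq
        · rw [hw]; simp only [Nat.div_one, hn]; norm_num; linarith
        · rw [hw]; simp only [Nat.div_one, hn]; norm_num at h ht ⊢; linarith
      have : (1 / (((1:ℕ):ℝ) ^ 2 * δ)) * GG ((49 / 50 : ℝ) ^ 1) w ≤ 0 :=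
        mul_nonpos_of_nonneg_of_nonpos (by positivity) hw1
      norm_num at hm2
      norm_num at *
      linarith
    · have hq2 : 2 ≤ q := by omega
      have hG := GG_le_third hrq0 hrq hw0
      have h3 : (1 / ((q:ℝ) ^ 2 * δ)) * GG ((49 / 50 : ℝ) ^ q) w ≤ 21005 / q := by
        calc (1 / ((q:ℝ) ^ 2 * δ)) * GG ((49 / 50 : ℝ) ^ q) w ≤ (1 / ((q:ℝ) ^ 2 * δ)) * (w / 3) :=
              mul_le_mul_of_nonneg_left hG (by positivity)
          _ = ((n / q : ℕ) : ℝ) / 3 := by rw [hw]; field_simp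
          _ ≤ (63015 / q) / 3 := by linarith
          _ = 21005 / q := by ring
      have h4 : 21005 / (q:ℝ) + (q - 1) * 0.6932 ≤ 10504 := by
        rcases hq2.eq_or_lt with h | h
        · rw [← h]; norm_num
        · have hq3 : (3:ℝ) ≤ q := by exact_mod_cast h
          have : 21005 / (q:ℝ) ≤ 21005 / 3 := by gcongr
          linarith
      linarith
  · have hG := GG_le_quarter hrq0 hrq w
    have h3 : (1 / ((q:ℝ) ^ 2 * δ)) * GG ((49 / 50 : ℝ) ^ q) w ≤ 63015 / (4 * q * t) := by
      calc (1 / ((q:ℝ) ^ 2 * δ)) * GG ((49 / 50 : ℝ) ^ q) w ≤ (1 / ((q:ℝ) ^ 2 * δ)) * (1 / 4) :=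
              mul_le_mul_of_nonneg_left hG (by positivity)
        _ = 63015 / (4 * q * t) := by rw [ht]; field_simp
    have h4 : 63015 / (4 * t) ≤ 416.8 * (26.7 - t) := by
      rw [div_le_iff₀ (by positivity)]
      nlinarith
    by_cases hq1 : q = 1
    · subst hq1
      norm_num at *
      linarith
    · have hq2 : (2:ℝ) ≤ q := by
        have : 2 ≤ q := by omega
        exact_mod_cast this
      have h5 : 63015 / (4 * q * t) ≤ 63015 / (4 * 2 * t) := by gcongr
      have h6 : 63015 / (4 * 2 * t) = 63015 / (4 * t) / 2 := by ring
      linarith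

theorem minor_arc {n : ℕ} (hn : (n : ℝ) = 63015) {θ : ℝ} (h1 : 2 * Real.pi / n ≤ θ) (h2 : θ ≤ Real.pi) :
    |S n θ| ≤ Real.exp 11468 := by
  have hpi := Real.pi_pos
  have hSform : ∀ α : ℝ, θ = 2 * Real.pi * α ∨ θ = 2 * Real.pi * (-α) →
      |S n θ| = ∏ k ∈ Finset.range n, |2 * Real.sin (Real.pi * ((k + 1 : ℕ) * α))| := by
    intro α h
    unfold S
    rw [Finset.abs_prod, show Finset.Icc 1 n = Finset.Ico 1 (n + 1) from rfl, Finset.prod_Ico_eq_prod_range]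
    refine Finset.prod_congr (by simp) fun k _ => ?_
    rcases h with h | h
    · congr 3; rw [h]; push_cast; ring
    · rw [show ((1 + k : ℕ) : ℝ) * θ / 2 = -(Real.pi * ((k + 1 : ℕ) * α)) by rw [h]; push_cast; ring, Real.sin_neg,
        mul_neg, abs_neg]
  set α := θ / (2 * Real.pi) with hα
  have hθ : θ = 2 * Real.pi * α := by rw [hα]; field_simp
  have hα1 : 1 / 63015 ≤ α := by
    rw [hα, le_div_iff₀ (by positivity), ← hn]; linarith [show 1 / (n:ℝ) * (2 * Real.pi) = 2 * Real.pi / n by ring]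
  have hα2 : α ≤ 1 / 2 := by rw [hα, div_le_iff₀ (by positivity)]; linarith
  obtain ⟨x, hx1, hx2⟩ := Real.exists_rat_abs_sub_le_and_den_le α (show 0 < 2500 by norm_num)
  set q := x.den with hqdef
  set p := x.num with hpdef
  have hq : 0 < q := x.den_pos
  have hq' : (0:ℝ) < q := by exact_mod_cast hq
  have hcop : IsCoprime p (q : ℤ) := Int.isCoprime_iff_nat_coprime.mpr x.reduced
  have hxe : (x : ℝ) = p / q := by rw [Rat.cast_def]
  rw [hxe] at hx1
  have hqb : q * |α - p / q| ≤ 1 / 2501 := by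
    have := mul_le_mul_of_nonneg_left hx1 hq'.le
    refine this.trans (le_of_eq ?_)
    push_cast
    field_simp; norm_num
  have hone : q = 1 → 1 / 63015 ≤ |α - p / q| := by
    intro h
    rw [h] at hqb ⊢
    simp only [Nat.cast_one, one_mul, div_one] at hqb ⊢
    have hp0 : p = 0 := by
      have := abs_le.1 hqb
      have h3 : (p : ℝ) < 1 := by linarith [this.1]
      have h4 : (-1 : ℝ) < p := by linarith [this.2]
      have h3' : p < 1 := by exact_mod_cast h3
      have h4' : -1 < p := by exact_mod_cast h4
      omega
    rw [hp0]; simp only [Int.cast_zero, sub_zero]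
    exact hα1.trans (le_abs_self _)
  rcases lt_trichotomy (α - p / q) 0 with h | h | h
  · -- use -α
    rw [hSform (-α) (Or.inr (by rw [hθ]; ring))]
    refine (minor_pos (r := 49 / 50) (by norm_num) (by norm_num) (-α)).trans (Real.exp_le_exp.2 ?_)
    have e : -α = ((-p : ℤ) : ℝ) / q + |α - p / q| := by rw [abs_of_neg h]; push_cast; ring
    rw [e]
    exact minor_core hn (-p) q hq hcop.neg_left (abs_pos.2 h.ne) hx2 hqb hone
  · -- zero
    have hqn : q ≤ n := by
      have : (q:ℝ) ≤ n := by
        rw [hn]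
        have : (q:ℝ) ≤ 2500 := by exact_mod_cast hx2
        linarith
      exact_mod_cast this
    have : S n θ = 0 := by
      unfold S
      apply Finset.prod_eq_zero (i := q) (Finset.mem_Icc.2 ⟨hq, hqn⟩)
      have e : (q:ℝ) * θ / 2 = p * Real.pi := by
        have : α = p / q := by linarith
        rw [hθ, this]; field_simp
      rw [e, Real.sin_int_mul_pi, mul_zero]
    rw [this, abs_zero]; positivity
  · rw [hSform α (Or.inl hθ)]
    refine (minor_pos (r := 49 / 50) (by norm_num) (by norm_num) α).trans (Real.exp_le_exp.2 ?_)
    have e : α = (p : ℝ) / q + |α - p / q| := by rw [abs_of_pos h]; ring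
    have := minor_core hn p q hq hcop (abs_pos.2 h.ne') hx2 hqb hone
    rwa [← e] at this

end QP

namespace QP

noncomputable def Gc (v : ℝ) : ℝ := 1 - Real.pi * v * (Real.cos (Real.pi * v) / Real.sin (Real.pi * v))

lemma Gc_hasSum0 {v : ℝ} (h0 : 0 < v) (h1 : v < 1) :
    HasSum (fun m : ℕ => 2 * v ^ 2 / (((m:ℝ) + 1) ^ 2 - v ^ 2)) (Gc v) := by
  have hz : (v : ℂ) ∈ Complex.integerComplement := by
    rw [Complex.mem_integerComplement_iff]
    rintro ⟨k, hk⟩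
    have hk' : (k : ℝ) = v := by exact_mod_cast hk
    rw [← hk'] at h0 h1
    have h0' : 0 < k := by exact_mod_cast h0
    have h1' : k < 1 := by exact_mod_cast h1
    omega
  have hs := (summable_cotTerm hz).hasSum
  have he := cot_series_rep' hz
  have hs2 : HasSum (fun m : ℕ => cotTerm (v:ℂ) m) (Real.pi * Complex.cot (Real.pi * v) - 1 / v) := by
    rw [he]; exact hs
  have hs3 := hs2.mul_left (-(v:ℂ))
  rw [← Complex.hasSum_ofReal]
  convert! hs3 using 1
  · funext m
    rw [cotTerm_identity hz]
    have hm : (0:ℝ) < ((m:ℝ) + 1) ^ 2 - v ^ 2 := by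
      have : (0:ℝ) ≤ m := by positivity
      nlinarith
    have hm2 : ((m:ℂ) + 1) ^ 2 - (v:ℂ) ^ 2 ≠ 0 := by exact_mod_cast hm.ne'
    push_cast
    have e : ((v:ℂ) + (m + 1)) * (v - (m + 1)) = -(((m:ℂ) + 1) ^ 2 - (v:ℂ) ^ 2) := by ring
    rw [e]
    field_simp
  · unfold Gc
    have hv : (v:ℂ) ≠ 0 := by exact_mod_cast h0.ne'
    rw [Complex.cot]
    push_cast
    field_simp
    ring

noncomputable def zt (j : ℕ) : ℝ := ∑' m : ℕ, 1 / ((m:ℝ) + 1) ^ (2 * (j + 1))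

lemma zt_sum (j : ℕ) : HasSum (fun m : ℕ => 1 / ((m:ℝ) + 1) ^ (2 * (j + 1))) (zt j) := by
  have : Summable (fun m : ℕ => 1 / ((m:ℝ) + 1) ^ (2 * (j + 1))) := by
    have := (Real.summable_one_div_nat_pow (p := 2 * (j + 1))).2 (by omega)
    have := (summable_nat_add_iff 1).2 this
    simpa using this
  exact this.hasSum

lemma geo_term {v b : ℝ} (h0 : 0 ≤ v) (h1 : v < b) :
    HasSum (fun j : ℕ => 2 * (1 / b ^ (2 * (j + 1))) * v ^ (2 * (j + 1))) (2 * v ^ 2 / (b ^ 2 - v ^ 2)) := by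
  have hb : 0 < b := by linarith
  have hr : (v / b) ^ 2 < 1 := by
    rw [div_pow, div_lt_one (by positivity)]; nlinarith
  have h := (hasSum_geometric_of_lt_one (sq_nonneg (v / b)) hr).mul_left (2 * (v / b) ^ 2)
  convert! h using 1
  · funext j
    rw [← pow_mul, mul_assoc 2, mul_assoc 2, ← pow_add]; congr 1
    rw [div_pow, show 2 + 2 * j = 2 * (j + 1) by ring]; ring
  · have : b ^ 2 - v ^ 2 ≠ 0 := by nlinarith
    rw [div_pow]; field_simp

lemma Gc_hasSum {v : ℝ} (h0 : 0 < v) (h1 : v < 1) :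
    HasSum (fun j : ℕ => 2 * zt j * v ^ (2 * (j + 1))) (Gc v) := by
  let f : ℕ × ℕ → ℝ := fun x => 2 * (1 / ((x.1:ℝ) + 1) ^ (2 * (x.2 + 1))) * v ^ (2 * (x.2 + 1))
  have hf0 : 0 ≤ f := fun x => by simp only [f, Pi.zero_apply]; positivity
  have hrow : ∀ m : ℕ, HasSum (fun j => f (m, j)) (2 * v ^ 2 / (((m:ℝ) + 1) ^ 2 - v ^ 2)) := by
    intro m
    have hm : (0:ℝ) ≤ m := by positivity
    have := geo_term (v := v) (b := (m:ℝ) + 1) h0.le (by linarith)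
    simpa only [f] using this
  have hG := Gc_hasSum0 h0 h1
  have hsum : Summable f := by
    rw [summable_prod_of_nonneg hf0]
    refine ⟨fun m => (hrow m).summable, ?_⟩
    simp_rw [fun m => (hrow m).tsum_eq]
    exact hG.summable
  have h2 : HasSum f (Gc v) := by
    have := hsum.hasSum.prod_fiberwise hrow
    rw [hG.unique this]; exact hsum.hasSum
  have h3 : HasSum (f ∘ Prod.swap) (Gc v) := (Equiv.prodComm ℕ ℕ).hasSum_iff.2 h2
  refine h3.prod_fiberwise fun j => ?_
  simp only [f, Function.comp, Prod.swap]
  exact ((zt_sum j).mul_left 2).mul_right _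

/-- normalized power sums -/
noncomputable def ps (n j : ℕ) : ℝ := (1 / (n:ℝ)) * ∑ k ∈ Finset.range n, (((k:ℝ) + 1) / n) ^ (2 * (j + 1))

noncomputable def sg (n : ℕ) (y : ℝ) : ℝ := (1 / (n:ℝ)) * ∑ k ∈ Finset.range n, Gc (((k:ℝ) + 1) / n * y)

noncomputable def aj (n j : ℕ) : ℝ := 2 * zt j * ps n j

lemma sg_hasSum {n : ℕ} {y : ℝ} (h0 : 0 < y) (h1 : y < 1) :
    HasSum (fun j : ℕ => aj n j * y ^ (2 * (j + 1))) (sg n y) := by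
  have : ∀ k ∈ Finset.range n, HasSum (fun j : ℕ => 2 * zt j * (((k:ℝ) + 1) / n * y) ^ (2 * (j + 1)))
      (Gc (((k:ℝ) + 1) / n * y)) := by
    intro k hk
    have hk' : k + 1 ≤ n := Finset.mem_range.1 hk
    have hk2 : (k:ℝ) + 1 ≤ n := by exact_mod_cast hk'
    have hn : (0:ℝ) < n := by have : (0:ℝ) ≤ k := by positivity
                              linarith
    have h3 : ((k:ℝ) + 1) / n ≤ 1 := by rw [div_le_one hn]; exact hk2
    have h4 : 0 < ((k:ℝ) + 1) / n := by positivity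
    exact Gc_hasSum (by positivity) (by nlinarith)
  have h := (hasSum_sum this).mul_left (1 / (n:ℝ))
  convert! h using 1
  funext j
  unfold aj ps
  rw [Finset.mul_sum, Finset.mul_sum, Finset.mul_sum, Finset.sum_mul]
  refine Finset.sum_congr rfl fun k _ => ?_
  rw [mul_pow]; ring

/-- trapezoid for monomials -/
lemma mono_step (d : ℕ) {a b : ℝ} (ha : 0 ≤ a) (hab : a ≤ b) :
    b ^ (d + 1) - a ^ (d + 1) ≤ (d + 1) * ((b - a) * (a ^ d + b ^ d) / 2) ∧
      b ^ (d + 1) - a ^ (d + 1) ≥ (d + 1) * ((b - a) * a ^ d) := by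
  have hb : 0 ≤ b := by linarith
  constructor
  · induction d with
    | zero => simp; linarith
    | succ d ih =>
      have h1 : a ^ (d + 1) ≤ b ^ (d + 1) := by gcongr
      have e1 : b ^ (d + 2) - a ^ (d + 2) = ((a + b) * (b ^ (d + 1) - a ^ (d + 1)) + (b - a) * (a ^ (d + 1) + b ^ (d + 1))) / 2 := by
        ring
      have h2 : (a + b) * (b ^ (d + 1) - a ^ (d + 1)) ≤ (a + b) * ((d + 1) * ((b - a) * (a ^ d + b ^ d) / 2)) :=
        mul_le_mul_of_nonneg_left ih (by linarith)
      have h3 : (a + b) * (a ^ d + b ^ d) ≤ 2 * (a ^ (d + 1) + b ^ (d + 1)) := by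
        have h4 : a ^ d ≤ b ^ d := by gcongr
        have : 0 ≤ (b - a) * (b ^ d - a ^ d) := mul_nonneg (by linarith) (by linarith)
        rw [pow_succ, pow_succ]; nlinarith
      have h5 : (a + b) * ((d + 1) * ((b - a) * (a ^ d + b ^ d) / 2)) =
          ((d:ℝ) + 1) * (b - a) / 2 * ((a + b) * (a ^ d + b ^ d)) := by ring
      have h6 : ((d:ℝ) + 1) * (b - a) / 2 * ((a + b) * (a ^ d + b ^ d)) ≤
          ((d:ℝ) + 1) * (b - a) / 2 * (2 * (a ^ (d + 1) + b ^ (d + 1))) :=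
        mul_le_mul_of_nonneg_left h3 (by have : 0 ≤ b - a := by linarith
                                         positivity)
      rw [e1]; push_cast
      linarith
  · induction d with
    | zero => simp
    | succ d ih =>
      have h1 : a ^ (d + 1) ≤ b ^ (d + 1) := by gcongr
      have h2 := mul_le_mul_of_nonneg_left ih ha
      have e1 : b ^ (d + 2) - a ^ (d + 2) = (b - a) * b ^ (d + 1) + a * (b ^ (d + 1) - a ^ (d + 1)) := by ring
      have h3 : (b - a) * a ^ (d + 1) ≤ (b - a) * b ^ (d + 1) := mul_le_mul_of_nonneg_left h1 (by linarith)
      rw [e1]; push_cast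
      have e2 : a * (((d:ℝ) + 1) * ((b - a) * a ^ d)) = ((d:ℝ) + 1) * ((b - a) * a ^ (d + 1)) := by ring
      linarith

lemma pow_sum_bounds (d n : ℕ) :
    (n:ℝ) ^ (d + 2) / (d + 2) + (n:ℝ) ^ (d + 1) / 2 ≤ ∑ k ∈ Finset.range n, ((k:ℝ) + 1) ^ (d + 1) ∧
    ∑ k ∈ Finset.range n, ((k:ℝ) + 1) ^ (d + 1) ≤ (n:ℝ) ^ (d + 2) / (d + 2) + (n:ℝ) ^ (d + 1) := by
  induction n with
  | zero => simp
  | succ n ih =>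
    rw [Finset.sum_range_succ]
    have h := mono_step (d + 1) (a := (n:ℝ)) (b := n + 1) (by positivity) (by linarith)
    have e : ((d + 1 : ℕ) : ℝ) + 1 = d + 2 := by push_cast; ring
    rw [e] at h
    have hd : (0:ℝ) < d + 2 := by positivity
    have h1 : ((n:ℝ) + 1) ^ (d + 2) / (d + 2) - (n:ℝ) ^ (d + 2) / (d + 2) ≤ ((n:ℝ) ^ (d + 1) + ((n:ℝ) + 1) ^ (d + 1)) / 2 := by
      rw [← sub_div, div_le_iff₀ hd]
      have := h.1
      linarith
    have h2 : (n:ℝ) ^ (d + 1) ≤ ((n:ℝ) + 1) ^ (d + 2) / (d + 2) - (n:ℝ) ^ (d + 2) / (d + 2) := by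
      rw [← sub_div, le_div_iff₀ hd]
      have := h.2
      linarith
    push_cast
    constructor <;> linarith [ih.1, ih.2]

lemma ps_bounds {n : ℕ} (hn : 0 < n) (j : ℕ) :
    1 / (2 * (j:ℝ) + 3) + 1 / (2 * n) ≤ ps n j ∧ ps n j ≤ 1 / (2 * (j:ℝ) + 3) + 1 / n := by
  have hn' : (0:ℝ) < n := by exact_mod_cast hn
  have e : ps n j = (∑ k ∈ Finset.range n, ((k:ℝ) + 1) ^ (2 * j + 1 + 1)) / (n:ℝ) ^ (2 * j + 1 + 2) := by
    unfold ps
    simp_rw [div_pow]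
    rw [← Finset.sum_div, show 2 * (j + 1) = 2 * j + 1 + 1 by ring]
    rw [show (n:ℝ) ^ (2 * j + 1 + 2) = n * (n:ℝ) ^ (2 * j + 1 + 1) by ring]
    field_simp
  obtain ⟨h1, h2⟩ := pow_sum_bounds (2 * j + 1) n
  have e3 : ((2 * j + 1 : ℕ) : ℝ) + 2 = 2 * (j:ℝ) + 3 := by push_cast; ring
  rw [e3] at h1 h2
  rw [e]
  have hp : (0:ℝ) < (n:ℝ) ^ (2 * j + 1 + 2) := by positivity
  have e4 : (n:ℝ) ^ (2 * j + 1 + 2) = n * (n:ℝ) ^ (2 * j + 1 + 1) := by ring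
  constructor
  · rw [le_div_iff₀ hp]
    refine le_trans (le_of_eq ?_) h1
    rw [e4]; field_simp
  · rw [div_le_iff₀ hp]
    refine le_trans h2 (le_of_eq ?_)
    rw [e4]; field_simp

end QP

namespace QP

lemma zt_zero : zt 0 = Real.pi ^ 2 / 6 := by
  have h := (hasSum_nat_add_iff' 1).2 hasSum_zeta_two
  have := zt_sum 0
  refine this.unique ?_
  simpa using h

lemma zt_one : zt 1 = Real.pi ^ 4 / 90 := by
  have h := (hasSum_nat_add_iff' 1).2 hasSum_zeta_four
  have := zt_sum 1
  refine this.unique ?_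
  simpa using h

lemma zt_lower (j K : ℕ) : ∑ m ∈ Finset.range K, 1 / ((m:ℝ) + 1) ^ (2 * (j + 1)) ≤ zt j :=
  sum_le_hasSum _ (fun m _ => by positivity) (zt_sum j)

lemma zt_upper (i j K : ℕ) (hij : i ≤ j) :
    zt j - ∑ m ∈ Finset.range K, 1 / ((m:ℝ) + 1) ^ (2 * (j + 1)) ≤
      (1 / ((K:ℝ) + 1) ^ (2 * (j - i))) * (zt i - ∑ m ∈ Finset.range K, 1 / ((m:ℝ) + 1) ^ (2 * (i + 1))) := by
  have h1 := (hasSum_nat_add_iff' K).2 (zt_sum j)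
  have h2 := ((hasSum_nat_add_iff' K).2 (zt_sum i)).mul_left (1 / ((K:ℝ) + 1) ^ (2 * (j - i)))
  refine hasSum_le (fun m => ?_) h1 h2
  have e : 2 * (j + 1) = 2 * (j - i) + 2 * (i + 1) := by omega
  rw [e, pow_add]
  rw [div_mul_div_comm, one_mul]
  push_cast
  have : (0:ℝ) ≤ m := by positivity
  gcongr
  linarith

lemma zt_ge_one (j : ℕ) : 1 ≤ zt j := by
  have := zt_lower j 1
  simpa using this

lemma zt0_b : 1.644934 ≤ zt 0 ∧ zt 0 ≤ 1.644935 := by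
  rw [zt_zero]
  have h1 := Real.pi_gt_d20
  have h2 := Real.pi_lt_d20
  constructor
  · have : (3.14159265:ℝ) ^ 2 ≤ Real.pi ^ 2 := by gcongr; linarith
    norm_num at this ⊢; linarith
  · have : Real.pi ^ 2 ≤ (3.14159266:ℝ) ^ 2 := by gcongr; linarith
    norm_num at this ⊢; linarith

lemma zt1_b : 1.082323 ≤ zt 1 ∧ zt 1 ≤ 1.0823233 := by
  rw [zt_one]
  have h1 := Real.pi_gt_d20
  have h2 := Real.pi_lt_d20
  constructor
  · have : (3.14159265:ℝ) ^ 4 ≤ Real.pi ^ 4 := by gcongr; linarith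
    norm_num at this ⊢; linarith
  · have : Real.pi ^ 4 ≤ (3.14159266:ℝ) ^ 4 := by gcongr; linarith
    norm_num at this ⊢; linarith

lemma zt_mono {i j : ℕ} (hij : i ≤ j) : zt j ≤ zt i := by
  have := zt_upper i j 0 hij
  simpa using this

lemma zt2_b : 1.0173 ≤ zt 2 ∧ zt 2 ≤ 1.0174642 := by
  have h1 := zt_lower 2 5
  have h2 := zt_upper 1 2 3 (by norm_num)
  have h3 := zt1_b.2
  norm_num [Finset.sum_range_succ] at h1 h2 h3 ⊢
  constructor <;> linarith

lemma zt3_b : 1.004058 ≤ zt 3 ∧ zt 3 ≤ 1.004088 := by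
  have h1 := zt_lower 3 3
  have h2 := zt_upper 1 3 3 (by norm_num)
  have h3 := zt1_b.2
  norm_num [Finset.sum_range_succ] at h1 h2 h3 ⊢
  constructor <;> linarith

lemma zt4_b : 1.00097 ≤ zt 4 ∧ zt 4 ≤ 1.000996 := by
  have h1 := zt_lower 4 2
  have h2 := zt_upper 1 4 3 (by norm_num)
  have h3 := zt1_b.2
  norm_num [Finset.sum_range_succ] at h1 h2 h3 ⊢
  constructor <;> linarith

lemma zt5_b : zt 5 ≤ 1.00025 := by
  have h2 := zt_upper 1 5 3 (by norm_num)
  have h3 := zt1_b.2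
  norm_num [Finset.sum_range_succ] at h2 h3 ⊢
  linarith

lemma zt_tail (j : ℕ) : zt (j + 5) - 1 ≤ 0.00025 * (1 / 4) ^ j := by
  have h := zt_upper 5 (j + 5) 1 (by omega)
  have h5 := zt5_b
  simp only [Finset.sum_range_one, Nat.cast_zero, zero_add, one_pow, div_one, Nat.cast_one,
    Nat.add_sub_cancel] at h
  refine h.trans ?_
  have e : (1:ℝ) / (1 + 1) ^ (2 * j) = (1 / 4) ^ j := by
    rw [pow_mul, one_div_pow]; norm_num
  rw [e, mul_comm]
  gcongr
  linarith

noncomputable def Lg (c : ℝ) : ℝ := Real.log ((1 + c) / (1 - c)) / c - 2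

lemma S1_sum {c : ℝ} (h0 : 0 < c) (h1 : c < 1) :
    HasSum (fun j : ℕ => 2 * c ^ (2 * (j + 1))) (2 * c ^ 2 / (1 - c ^ 2)) := by
  have := geo_term h0.le h1
  simpa using this

lemma S2_sum {c : ℝ} (h0 : 0 < c) (h1 : c < 1) :
    HasSum (fun j : ℕ => 2 * (1 / (2 * (j:ℝ) + 3)) * c ^ (2 * (j + 1))) (Lg c) := by
  have h := Real.hasSum_log_sub_log_of_abs_lt_one (x := c) (by rw [abs_of_pos h0]; exact h1)
  rw [← Real.log_div (by linarith) (by linarith)] at h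
  have h2 := ((hasSum_nat_add_iff' 1).2 h).mul_left (1 / c)
  convert! h2 using 1
  · funext j
    push_cast
    rw [show 2 * (j + 1) + 1 = (2 * (j + 1)).succ from rfl, pow_succ]
    field_simp; ring
  · unfold Lg; simp; field_simp

lemma S3_sum {c : ℝ} (h0 : 0 < c) (h1 : c < 1) :
    HasSum (fun j : ℕ => 2 * (2 * (j:ℝ) + 2) * c ^ (2 * (j + 1))) (4 * c ^ 2 / (1 - c ^ 2) ^ 2) := by
  have hc : c ^ 2 < 1 := by nlinarith
  have h := hasSum_coe_mul_geometric_of_norm_lt_one (r := c ^ 2) (by rw [Real.norm_eq_abs, abs_of_nonneg (sq_nonneg c)]; exact hc)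
  have h2 := ((hasSum_nat_add_iff' 1).2 h).mul_left 4
  convert! h2 using 1
  · funext j
    push_cast
    rw [pow_mul]; ring
  · simp; ring

lemma ps_nonneg (n j : ℕ) : 0 ≤ ps n j := by unfold ps; positivity
lemma aj_nonneg (n j : ℕ) : 0 ≤ aj n j := by
  have := ps_nonneg n j; have := zt_ge_one j; unfold aj; positivity

section
variable {n : ℕ} (hn : 0 < n) {c : ℝ} (h0 : 0 < c) (h1 : c < 1)
include hn h0 h1

lemma sg_lower : Lg c + (2 * c ^ 2 / (1 - c ^ 2)) / (2 * n) +
    ∑ j ∈ Finset.range 5, 2 * (zt j - 1) * (1 / (2 * (j:ℝ) + 3) + 1 / (2 * n)) * c ^ (2 * (j + 1)) ≤ sg n c := by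
  have h := ((sg_hasSum (n := n) h0 h1).sub (S2_sum h0 h1)).sub ((S1_sum h0 h1).div_const (2 * (n:ℝ)))
  have hnn : ∀ j : ℕ, 2 * (zt j - 1) * (1 / (2 * (j:ℝ) + 3) + 1 / (2 * n)) * c ^ (2 * (j + 1)) ≤
      aj n j * c ^ (2 * (j + 1)) - 2 * (1 / (2 * (j:ℝ) + 3)) * c ^ (2 * (j + 1)) - 2 * c ^ (2 * (j + 1)) / (2 * n) := by
    intro j
    have hp := (ps_bounds hn j).1
    have hz := zt_ge_one j
    have hc : 0 < c ^ (2 * (j + 1)) := by positivity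
    have : 2 * zt j * (1 / (2 * (j:ℝ) + 3) + 1 / (2 * n)) * c ^ (2 * (j + 1)) ≤ aj n j * c ^ (2 * (j + 1)) := by
      unfold aj; gcongr
    have e : 2 * c ^ (2 * (j + 1)) / (2 * n) = 2 * (1 / (2 * (n:ℝ))) * c ^ (2 * (j + 1)) := by ring
    rw [e]; linarith
  have h2 := sum_le_hasSum (Finset.range 5) (fun j _ => ?_) h
  · have h3 := Finset.sum_le_sum (s := Finset.range 5) (fun j _ => hnn j)
    linarith
  · refine le_trans ?_ (hnn j)
    have hz := zt_ge_one j
    have : 0 ≤ zt j - 1 := by linarith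
    positivity

/-- upper bound for a weighted tail-type sum -/
lemma R_upper {w : ℕ → ℝ} (hw0 : ∀ j, 0 ≤ w j) {wb : ℝ} (hw : ∀ j, w (j + 5) ≤ wb) {s : ℝ}
    (hs : HasSum (fun j : ℕ => 2 * (zt j - 1) * w j * c ^ (2 * (j + 1))) s) :
    s ≤ ∑ j ∈ Finset.range 5, 2 * (zt j - 1) * w j * c ^ (2 * (j + 1)) +
      2 * 0.00025 * wb * c ^ 12 / (1 - c ^ 2 / 4) := by
  have h := (hasSum_nat_add_iff' 5).2 hs
  have hr : c ^ 2 / 4 < 1 := by nlinarith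
  have hg := (hasSum_geometric_of_lt_one (r := c ^ 2 / 4) (by positivity) hr).mul_left (2 * 0.00025 * wb * c ^ 12)
  have hwb : 0 ≤ wb := (hw0 5).trans (by simpa using hw 0)
  have := hasSum_le (fun j => ?_) h hg
  · rw [← div_eq_mul_inv] at this
    linarith
  · have ht := zt_tail j
    have hz := zt_ge_one (j + 5)
    have e : c ^ (2 * (j + 5 + 1)) = c ^ 12 * (c ^ 2) ^ j := by rw [← pow_mul, ← pow_add]; congr 1; ring
    have hcp : 0 < c ^ 12 * (c ^ 2) ^ j := by positivity
    have hz0 : 0 ≤ zt (j + 5) - 1 := by linarith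
    have h5 : 2 * (zt (j + 5) - 1) * w (j + 5) ≤ 2 * (0.00025 * (1 / 4) ^ j) * wb := by
      have := hw j
      have := hw0 (j + 5)
      gcongr
    rw [e, div_pow]
    calc _ ≤ 2 * (0.00025 * (1 / 4) ^ j) * wb * (c ^ 12 * (c ^ 2) ^ j) := by gcongr
      _ = _ := by rw [div_pow]; ring

lemma R_summable {w : ℕ → ℝ} (hw0 : ∀ j, 0 ≤ w j) {wb : ℝ} (hw : ∀ j, w j ≤ wb) :
    Summable (fun j : ℕ => 2 * (zt j - 1) * w j * c ^ (2 * (j + 1))) := by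
  have hs := (S1_sum h0 h1).summable.mul_left wb
  refine Summable.of_nonneg_of_le (fun j => ?_) (fun j => ?_) hs
  · have hz := zt_ge_one j
    have := hw0 j
    have : 0 ≤ zt j - 1 := by linarith
    positivity
  · have hz := zt_ge_one j
    have hz2 := (zt_mono (Nat.zero_le j)).trans zt0_b.2
    have hc : 0 < c ^ (2 * (j + 1)) := by positivity
    have h1 : (zt j - 1) * w j ≤ 1 * wb := by
      have := hw j
      have := hw0 j
      have : 0 ≤ zt j - 1 := by linarith
      gcongr
      linarith
    nlinarith

lemma sg_upper : sg n c ≤ Lg c + (2 * c ^ 2 / (1 - c ^ 2)) / n +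
    ∑ j ∈ Finset.range 5, 2 * (zt j - 1) * (1 / (2 * (j:ℝ) + 3) + 1 / n) * c ^ (2 * (j + 1)) +
     2 * 0.00025 * (1 / 13 + 1 / n) * c ^ 12 / (1 - c ^ 2 / 4) := by
  have hn' : (0:ℝ) < n := by exact_mod_cast hn
  have hw0 : ∀ j : ℕ, 0 ≤ 1 / (2 * (j:ℝ) + 3) + 1 / n := fun j => by positivity
  have hsm := R_summable hn h0 h1 hw0 (wb := 1 + 1 / n) (fun j => by
    have : 1 / (2 * (j:ℝ) + 3) ≤ 1 := by rw [div_le_one (by positivity)]; linarith [show (0:ℝ) ≤ j by positivity]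
    linarith)
  have hR := R_upper hn h0 h1 hw0 (wb := 1 / 13 + 1 / n) (fun j => by
    have : 1 / (2 * ((j + 5 : ℕ):ℝ) + 3) ≤ 1 / 13 := by
      apply one_div_le_one_div_of_le (by norm_num); push_cast; linarith [show (0:ℝ) ≤ j by positivity]
    linarith) hsm.hasSum
  have h := ((S2_sum h0 h1).add ((S1_sum h0 h1).div_const (n:ℝ))).add hsm.hasSum
  have := hasSum_le (fun j => ?_) (sg_hasSum (n := n) h0 h1) h
  · linarith
  · have hp := (ps_bounds hn j).2
    have hz := zt_ge_one j
    have hc : 0 < c ^ (2 * (j + 1)) := by positivity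
    have : aj n j * c ^ (2 * (j + 1)) ≤ 2 * zt j * (1 / (2 * (j:ℝ) + 3) + 1 / n) * c ^ (2 * (j + 1)) := by
      unfold aj; gcongr
    have e : 2 * c ^ (2 * (j + 1)) / n = 2 * (1 / (n:ℝ)) * c ^ (2 * (j + 1)) := by ring
    rw [e]; linarith

/-- derivative-type sum with bounds -/
lemma D_exists : ∃ D, HasSum (fun j : ℕ => aj n j * (2 * (j:ℝ) + 2) * c ^ (2 * (j + 1))) D ∧
    2 * c ^ 2 / (1 - c ^ 2) - Lg c +
      ∑ j ∈ Finset.range 5, 2 * (zt j - 1) * (1 - 1 / (2 * (j:ℝ) + 3)) * c ^ (2 * (j + 1)) ≤ D ∧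
    D ≤ 2 * c ^ 2 / (1 - c ^ 2) - Lg c +
      ∑ j ∈ Finset.range 5, 2 * (zt j - 1) * (1 - 1 / (2 * (j:ℝ) + 3)) * c ^ (2 * (j + 1)) +
       2 * 0.00025 * 1 * c ^ 12 / (1 - c ^ 2 / 4) + 1.645 / n * (4 * c ^ 2 / (1 - c ^ 2) ^ 2) := by
  have hn' : (0:ℝ) < n := by exact_mod_cast hn
  have hjj : ∀ j : ℕ, 1 / (2 * (j:ℝ) + 3) ≤ 1 := fun j => by
    rw [div_le_one (by positivity)]; linarith [show (0:ℝ) ≤ j by positivity]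
  have hw0 : ∀ j : ℕ, 0 ≤ 1 - 1 / (2 * (j:ℝ) + 3) := fun j => by linarith [hjj j]
  have hw1 : ∀ j : ℕ, 1 - 1 / (2 * (j:ℝ) + 3) ≤ 1 := fun j => by
    have : 0 ≤ 1 / (2 * (j:ℝ) + 3) := by positivity
    linarith
  have hsm := R_summable hn h0 h1 hw0 hw1
  have hR := R_upper hn h0 h1 hw0 (wb := 1) (fun j => hw1 (j + 5)) hsm.hasSum
  have hbase := (((S1_sum h0 h1).sub (S2_sum h0 h1)).add hsm.hasSum)
  have hup := hbase.add ((S3_sum h0 h1).mul_left (1.645 / (n:ℝ)))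
  have hterm : ∀ j : ℕ, 2 * c ^ (2 * (j + 1)) - 2 * (1 / (2 * (j:ℝ) + 3)) * c ^ (2 * (j + 1)) +
      2 * (zt j - 1) * (1 - 1 / (2 * (j:ℝ) + 3)) * c ^ (2 * (j + 1)) =
      2 * zt j * (1 - 1 / (2 * (j:ℝ) + 3)) * c ^ (2 * (j + 1)) := fun j => by ring
  have hfr : ∀ j : ℕ, 1 - 1 / (2 * (j:ℝ) + 3) = (2 * (j:ℝ) + 2) * (1 / (2 * (j:ℝ) + 3)) := fun j => by
    field_simp; ring
  have hlow : ∀ j : ℕ, 2 * zt j * (1 - 1 / (2 * (j:ℝ) + 3)) * c ^ (2 * (j + 1)) ≤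
      aj n j * (2 * (j:ℝ) + 2) * c ^ (2 * (j + 1)) := by
    intro j
    have hp := (ps_bounds hn j).1
    have hz := zt_ge_one j
    have hc : 0 < c ^ (2 * (j + 1)) := by positivity
    have h5 : 1 / (2 * (j:ℝ) + 3) ≤ ps n j := by
      have : 0 < 1 / (2 * (n:ℝ)) := by positivity
      linarith
    rw [hfr]; unfold aj
    have : 2 * zt j * ((2 * (j:ℝ) + 2) * (1 / (2 * (j:ℝ) + 3))) ≤ 2 * zt j * ((2 * (j:ℝ) + 2) * ps n j) := by gcongr
    nlinarith
  have hhigh : ∀ j : ℕ, aj n j * (2 * (j:ℝ) + 2) * c ^ (2 * (j + 1)) ≤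
      2 * zt j * (1 - 1 / (2 * (j:ℝ) + 3)) * c ^ (2 * (j + 1)) + 1.645 / (n:ℝ) * (2 * (2 * (j:ℝ) + 2) * c ^ (2 * (j + 1))) := by
    intro j
    have hp := (ps_bounds hn j).2
    have hz := zt_ge_one j
    have hz2 : zt j ≤ 1.645 := ((zt_mono (Nat.zero_le j)).trans zt0_b.2).trans (by norm_num)
    have hc : 0 < c ^ (2 * (j + 1)) := by positivity
    rw [hfr]; unfold aj
    have h5 : 2 * zt j * ps n j * (2 * (j:ℝ) + 2) ≤ 2 * zt j * (1 / (2 * (j:ℝ) + 3) + 1 / n) * (2 * (j:ℝ) + 2) := by gcongr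
    have h6 : zt j * (1 / n) * (2 * (j:ℝ) + 2) ≤ 1.645 * (1 / n) * (2 * (j:ℝ) + 2) := by gcongr
    calc _ ≤ (2 * zt j * ((2 * (j:ℝ) + 2) * (1 / (2 * (j:ℝ) + 3))) + 2 * (1.645 * (1 / n) * (2 * (j:ℝ) + 2))) * c ^ (2 * (j + 1)) := by
          apply mul_le_mul_of_nonneg_right _ hc.le
          linarith
      _ = _ := by ring
  have hsumm : Summable (fun j : ℕ => aj n j * (2 * (j:ℝ) + 2) * c ^ (2 * (j + 1))) := by
    refine Summable.of_nonneg_of_le (fun j => ?_) (fun j => ?_) hup.summable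
    · have := aj_nonneg n j; positivity
    · rw [hterm]; exact hhigh j
  refine ⟨_, hsumm.hasSum, ?_, ?_⟩
  · have h2 := hasSum_le (fun j => by rw [hterm]; exact hlow j) hbase hsumm.hasSum
    have h3 := sum_le_hasSum (Finset.range 5) (fun j _ => ?_) hsm.hasSum
    · linarith
    · have : 0 ≤ zt j - 1 := by linarith [zt_ge_one j]
      have := hw0 j
      positivity
  · have h2 := hasSum_le (fun j => by rw [hterm]; exact hhigh j) hsumm.hasSum hup
    linarith

end

end QP

namespace QP

lemma pow_three_lower (e : ℕ) {x : ℝ} (hx : 0 ≤ x) : ((e:ℝ) + 1) * x ^ 2 - e * x ≤ x ^ (e + 2) := by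
  induction e with
  | zero => simp
  | succ e ih =>
    have h := mul_le_mul_of_nonneg_left ih hx
    have e1 : x ^ (e + 1 + 2) = x * x ^ (e + 2) := by ring
    rw [e1]; push_cast
    have : 0 ≤ ((e:ℝ) + 1) * (x * (x - 1) ^ 2) := by positivity
    nlinarith

noncomputable def Rp : ℕ → ℝ → ℝ
  | 0, _ => 0
  | (e + 1), x => x * Rp e x + e

lemma Rp_nonneg (e : ℕ) {x : ℝ} (hx : 0 ≤ x) : 0 ≤ Rp e x := by
  induction e with
  | zero => simp [Rp]
  | succ e ih => rw [Rp]; positivity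

lemma Rp_mono (e : ℕ) {x y : ℝ} (hx : 0 ≤ x) (hxy : x ≤ y) : Rp e x ≤ Rp e y := by
  induction e with
  | zero => simp [Rp]
  | succ e ih =>
    rw [Rp, Rp]
    have := Rp_nonneg e hx
    have : 0 ≤ y := hx.trans hxy
    gcongr

lemma Rp_eq (e : ℕ) (x : ℝ) : x ^ e = 1 + e * (x - 1) + Rp e x * (x - 1) ^ 2 := by
  induction e with
  | zero => simp [Rp]
  | succ e ih => rw [pow_succ, ih, Rp]; push_cast; ring

lemma pow_three_upper (e : ℕ) {x y : ℝ} (hx : 0 ≤ x) (hxy : x ≤ y) :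
    (x ^ e - 1 - e * (x - 1)) * (y - 1) ^ 2 ≤ (y ^ e - 1 - e * (y - 1)) * (x - 1) ^ 2 := by
  have h := Rp_mono e hx hxy
  rw [Rp_eq e x, Rp_eq e y]
  have : 0 ≤ (x - 1) ^ 2 * (y - 1) ^ 2 := by positivity
  nlinarith [mul_le_mul_of_nonneg_right h this]

section
variable {n : ℕ} {c : ℝ} (h0 : 0 < c) (h1 : c < 1) {D : ℝ}
  (hD : HasSum (fun j : ℕ => aj n j * (2 * (j:ℝ) + 2) * c ^ (2 * (j + 1))) D)
include h0 h1 hD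

lemma sg_three_lower {y : ℝ} (hy0 : 0 < y) (hy1 : y < 1) :
    (D - sg n c) * (y / c) ^ 2 - (D - 2 * sg n c) * (y / c) ≤ sg n y := by
  have hc := sg_hasSum (n := n) h0 h1
  have hy := sg_hasSum (n := n) hy0 hy1
  have hl := ((hD.sub hc).mul_right ((y / c) ^ 2)).sub ((hD.sub (hc.mul_left 2)).mul_right (y / c))
  refine hasSum_le (fun j => ?_) hl hy
  have hp := pow_three_lower (2 * j) (x := y / c) (by positivity)
  have ha : 0 ≤ aj n j * c ^ (2 * (j + 1)) := mul_nonneg (aj_nonneg n j) (by positivity)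
  have e : aj n j * y ^ (2 * (j + 1)) = aj n j * c ^ (2 * (j + 1)) * (y / c) ^ (2 * j + 2) := by
    rw [show 2 * (j + 1) = 2 * j + 2 by ring, div_pow]; field_simp
  rw [e]
  refine le_trans (le_of_eq ?_) (mul_le_mul_of_nonneg_left hp ha)
  push_cast; ring

lemma sg_three_upper {y z : ℝ} (hy0 : 0 < y) (hyz : y ≤ z) (hz1 : z < 1) :
    (sg n y - sg n c - D * (y / c - 1)) * (z / c - 1) ^ 2 ≤ (sg n z - sg n c - D * (z / c - 1)) * (y / c - 1) ^ 2 := by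
  have hc := sg_hasSum (n := n) h0 h1
  have hy := sg_hasSum (n := n) hy0 (hyz.trans_lt hz1)
  have hz := sg_hasSum (n := n) (hy0.trans_le hyz) hz1
  have hl := ((hy.sub hc).sub (hD.mul_right (y / c - 1))).mul_right ((z / c - 1) ^ 2)
  have hr := ((hz.sub hc).sub (hD.mul_right (z / c - 1))).mul_right ((y / c - 1) ^ 2)
  refine hasSum_le (fun j => ?_) hl hr
  have hp := pow_three_upper (2 * (j + 1)) (x := y / c) (y := z / c) (by positivity) (by gcongr)
  have ha : 0 ≤ aj n j * c ^ (2 * (j + 1)) := mul_nonneg (aj_nonneg n j) (by positivity)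
  have e : ∀ y : ℝ, aj n j * y ^ (2 * (j + 1)) = aj n j * c ^ (2 * (j + 1)) * (y / c) ^ (2 * (j + 1)) := by
    intro y
    rw [div_pow]; field_simp
  rw [e y, e z]
  have h2 := mul_le_mul_of_nonneg_left hp ha
  push_cast at h2
  refine le_trans (le_of_eq ?_) (h2.trans (le_of_eq ?_)) <;> ring

end

lemma sg_sq_upper {n : ℕ} {y z : ℝ} (hy0 : 0 < y) (hyz : y ≤ z) (hz1 : z < 1) :
    sg n y ≤ sg n z * (y / z) ^ 2 := by
  have hz0 := hy0.trans_le hyz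
  have hy := sg_hasSum (n := n) hy0 (hyz.trans_lt hz1)
  have hz := (sg_hasSum (n := n) hz0 hz1).mul_right ((y / z) ^ 2)
  refine hasSum_le (fun j => ?_) hy hz
  have ha : 0 ≤ aj n j * z ^ (2 * (j + 1)) := mul_nonneg (aj_nonneg n j) (by positivity)
  have e : aj n j * y ^ (2 * (j + 1)) = aj n j * z ^ (2 * (j + 1)) * (y / z) ^ (2 * (j + 1)) := by
    rw [div_pow]; field_simp
  rw [e]
  apply mul_le_mul_of_nonneg_left _ ha
  exact pow_le_pow_of_le_one (by positivity) (by rw [div_le_one hz0]; exact hyz) (by omega)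

lemma log_bounds {x : ℝ} (h0 : 0 ≤ x) (h : x < 1) :
    2 * (x + x ^ 3 / 3 + x ^ 5 / 5) ≤ Real.log ((1 + x) / (1 - x)) ∧
      Real.log ((1 + x) / (1 - x)) ≤ 2 * (x + x ^ 3 / 3 + x ^ 5 / 5 + x ^ 7 / (1 - x ^ 2)) := by
  have a1 := Real.sum_range_le_log_div h0 h 3
  have a2 := Real.log_div_le_sum_range_add h0 h 3
  norm_num [Finset.sum_range_succ] at a1 a2
  constructor <;> linarith

lemma log163 : 2.149311219 ≤ Real.log (163 / 19) ∧ Real.log (163 / 19) ≤ 2.149311225 := by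
  have h := log_bounds (x := 11 / 315) (by norm_num) (by norm_num)
  have e : Real.log (163 / 19) = 3 * Real.log 2 + Real.log ((1 + 11 / 315) / (1 - 11 / 315)) := by
    rw [← Real.log_rpow (by norm_num), ← Real.log_mul (by norm_num) (by norm_num)]; norm_num
  rw [e]
  have := Real.log_two_gt_d9
  have := Real.log_two_lt_d9
  norm_num at h ⊢
  constructor <;> linarith

lemma log181 : Real.log (181 / 19) ≤ 2.2540582 := by
  have h := log_bounds (x := 29 / 333) (by norm_num) (by norm_num)
  have e : Real.log (181 / 19) = 3 * Real.log 2 + Real.log ((1 + 29 / 333) / (1 - 29 / 333)) := by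
    rw [← Real.log_rpow (by norm_num), ← Real.log_mul (by norm_num) (by norm_num)]; norm_num
  rw [e]
  have := Real.log_two_lt_d9
  norm_num at h ⊢
  linarith

lemma log19 : Real.log 19 ≤ 2.94446 := by
  have h := log_bounds (x := 3 / 35) (by norm_num) (by norm_num)
  have e : Real.log 19 = 4 * Real.log 2 + Real.log ((1 + 3 / 35) / (1 - 3 / 35)) := by
    rw [← Real.log_rpow (by norm_num), ← Real.log_mul (by norm_num) (by norm_num)]; norm_num
  rw [e]
  have := Real.log_two_lt_d9
  norm_num at h ⊢
  linarith

lemma log33 : Real.log (33 / 7) ≤ 1.5507 := by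
  have h := log_bounds (x := 5 / 61) (by norm_num) (by norm_num)
  have e : Real.log (33 / 7) = 2 * Real.log 2 + Real.log ((1 + 5 / 61) / (1 - 5 / 61)) := by
    rw [← Real.log_rpow (by norm_num), ← Real.log_mul (by norm_num) (by norm_num)]; norm_num
  rw [e]
  have := Real.log_two_lt_d9
  norm_num at h ⊢
  linarith

section
variable {n : ℕ} (hn : (n:ℝ) = 63015)
include hn

lemma n_pos : 0 < n := by
  have : (0:ℝ) < n := by rw [hn]; norm_num
  exact_mod_cast this

lemma sgc_b : 1 - 2.8885 / 63015 ≤ sg n (72 / 91) ∧ sg n (72 / 91) ≤ 1 + 0.262 / 63015 := by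
  have hl := sg_lower (n_pos hn) (c := 72 / 91) (by norm_num) (by norm_num)
  have hu := sg_upper (n_pos hn) (c := 72 / 91) (by norm_num) (by norm_num)
  have z0 := zt0_b; have z1 := zt1_b; have z2 := zt2_b; have z3 := zt3_b; have z4 := zt4_b
  have lb := log163
  rw [hn] at hl hu
  unfold Lg at hl hu
  norm_num [Finset.sum_range_succ] at hl hu lb z0 z1 z2 z3 z4 ⊢
  constructor <;> linarith

lemma D_b : ∃ D, HasSum (fun j : ℕ => aj n j * (2 * (j:ℝ) + 2) * (72 / 91 : ℝ) ^ (2 * (j + 1))) D ∧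
    4.0820 * (72 / 91) ≤ D ∧ D ≤ 4.0828 * (72 / 91) := by
  obtain ⟨D, hD, hl, hu⟩ := D_exists (n_pos hn) (c := 72 / 91) (by norm_num) (by norm_num)
  refine ⟨D, hD, ?_⟩
  have z0 := zt0_b; have z1 := zt1_b; have z2 := zt2_b; have z3 := zt3_b; have z4 := zt4_b
  have lb := log163
  rw [hn] at hu
  unfold Lg at hl hu
  norm_num [Finset.sum_range_succ] at hl hu lb z0 z1 z2 z3 z4 ⊢
  constructor <;> linarith

lemma sg81 : sg n (81 / 100) ≤ 1.080738 := by
  have hu := sg_upper (n_pos hn) (c := 81 / 100) (by norm_num) (by norm_num)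
  have z0 := zt0_b; have z1 := zt1_b; have z2 := zt2_b; have z3 := zt3_b; have z4 := zt4_b
  have lb := log181
  rw [hn] at hu
  unfold Lg at hu
  norm_num [Finset.sum_range_succ] at hu lb z0 z1 z2 z3 z4 ⊢
  linarith

lemma sg90 : sg n (9 / 10) ≤ 1.6449 := by
  have hu := sg_upper (n_pos hn) (c := 9 / 10) (by norm_num) (by norm_num)
  have z0 := zt0_b; have z1 := zt1_b; have z2 := zt2_b; have z3 := zt3_b; have z4 := zt4_b
  have lb := log19
  rw [hn] at hu
  unfold Lg at hu
  norm_num [Finset.sum_range_succ] at hu lb z0 z1 z2 z3 z4 ⊢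
  linarith

lemma sg65 : sg n (65 / 100) ≤ 0.5737 := by
  have hu := sg_upper (n_pos hn) (c := 65 / 100) (by norm_num) (by norm_num)
  have z0 := zt0_b; have z1 := zt1_b; have z2 := zt2_b; have z3 := zt3_b; have z4 := zt4_b
  have lb := log33
  rw [hn] at hu
  unfold Lg at hu
  norm_num [Finset.sum_range_succ] at hu lb z0 z1 z2 z3 z4 ⊢
  linarith

/-- global quadratic lower bound -/
lemma Lw {y : ℝ} (hy0 : 0 < y) (hy1 : y < 1) :
    1 - 2.94 / 63015 + 4.0824 * (y - 72 / 91) + 3.5 * (y - 72 / 91) ^ 2 ≤ sg n y := by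
  obtain ⟨D, hD, hl, hu⟩ := D_b hn
  have h := sg_three_lower (c := 72 / 91) (by norm_num) (by norm_num) hD hy0 hy1
  obtain ⟨fl, fu⟩ := sgc_b hn
  set f := sg n (72 / 91)
  set u := y - 72 / 91 with hu'
  have e : (D - f) * (y / (72 / 91)) ^ 2 - (D - 2 * f) * (y / (72 / 91)) =
      f + (D / (72 / 91)) * u + (D - f) / (72 / 91) ^ 2 * u ^ 2 := by
    rw [show y = u + 72 / 91 by rw [hu']; ring]; ring
  rw [e] at h
  refine le_trans ?_ h
  have h1 : 4.0820 ≤ D / (72 / 91) := by rw [le_div_iff₀ (by norm_num)]; exact hl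
  have h2 : D / (72 / 91) ≤ 4.0828 := by rw [div_le_iff₀ (by norm_num)]; exact hu
  have h3 : 3.56 ≤ (D - f) / (72 / 91) ^ 2 := by
    rw [le_div_iff₀ (by norm_num)]; norm_num at hl fu ⊢; linarith
  have h4 : 3.56 * u ^ 2 ≤ (D - f) / (72 / 91) ^ 2 * u ^ 2 := mul_le_mul_of_nonneg_right h3 (sq_nonneg u)
  have h5 : (4.0824 - D / (72 / 91)) * u ≤ 0.06 * u ^ 2 + 0.045 / 63015 := by
    have a1 : (4.0824 - D / (72 / 91)) ^ 2 ≤ 0.0004 ^ 2 := by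
      apply sq_le_sq'<;> linarith
    norm_num at a1 ⊢
    nlinarith [sq_nonneg (0.12 * u - (4.0824 - D / (72 / 91)))]
  linarith

lemma U_gen {z q : ℝ} (hz1 : z < 1) (hz : 72 / 91 < z)
    (hq : sg n z ≤ 1 - 2.8885 / 63015 + 4.0820 * (z - 72 / 91) + q * (z - 72 / 91) ^ 2) {y : ℝ} (hy0 : 0 < y) (hyz : y ≤ z) :
    sg n y ≤ 1 + 0.3 / 63015 + 4.0824 * (y - 72 / 91) + (q + 0.07) * (y - 72 / 91) ^ 2 := by
  obtain ⟨D, hD, hl, hu⟩ := D_b hn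
  have h := sg_three_upper (c := 72 / 91) (by norm_num) (by norm_num) hD hy0 hyz hz1
  obtain ⟨fl, fu⟩ := sgc_b hn
  set f := sg n (72 / 91)
  set u := y - 72 / 91 with hu'
  set w := z - 72 / 91 with hw'
  have hw : 0 < w := by rw [hw']; linarith
  have h1 : 4.0820 ≤ D / (72 / 91) := by rw [le_div_iff₀ (by norm_num)]; exact hl
  have h2 : D / (72 / 91) ≤ 4.0828 := by rw [div_le_iff₀ (by norm_num)]; exact hu
  have ey : y / (72 / 91) - 1 = u / (72 / 91) := by rw [hu']; ring
  have ez : z / (72 / 91) - 1 = w / (72 / 91) := by rw [hw']; ring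
  rw [ey, ez, show D * (u / (72 / 91)) = D / (72 / 91) * u by ring, show D * (w / (72 / 91)) = D / (72 / 91) * w by ring,
    div_pow, div_pow] at h
  set d := D / (72 / 91)
  have h3 : sg n z - f - d * w ≤ q * w ^ 2 := by nlinarith
  have h6 : (sg n y - f - d * u) * w ^ 2 ≤ (q * u ^ 2) * w ^ 2 := by
    have h7 := mul_le_mul_of_nonneg_right h3 (sq_nonneg u)
    have : (sg n y - f - d * u) * w ^ 2 ≤ (sg n z - f - d * w) * u ^ 2 := by
      have hh := mul_le_mul_of_nonneg_right h (show (0:ℝ) ≤ (72 / 91) ^ 2 by norm_num)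
      refine le_trans (le_of_eq ?_) (hh.trans (le_of_eq ?_)) <;> ring
    nlinarith
  have h8 := le_of_mul_le_mul_right h6 (by positivity)
  have h5 : (d - 4.0824) * u ≤ 0.07 * u ^ 2 + 0.038 / 63015 := by
    have a1 : (d - 4.0824) ^ 2 ≤ 0.0004 ^ 2 := by
      apply sq_le_sq'<;> linarith
    norm_num at a1 ⊢
    nlinarith [sq_nonneg (0.14 * u - (d - 4.0824))]
  linarith

lemma U1 {y : ℝ} (hy0 : 0 < y) (hy : y ≤ 81 / 100) :
    sg n y ≤ 1 + 0.3 / 63015 + 4.0824 * (y - 72 / 91) + 11.65 * (y - 72 / 91) ^ 2 := by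
  have := U_gen hn (z := 81 / 100) (q := 11.58) (by norm_num) (by norm_num)
    ((sg81 hn).trans (by norm_num)) hy0 hy
  norm_num at this ⊢; linarith

lemma U2 {y : ℝ} (hy0 : 0 < y) (hy : y ≤ 9 / 10) :
    sg n y ≤ 1 + 0.3 / 63015 + 4.0824 * (y - 72 / 91) + 17.1 * (y - 72 / 91) ^ 2 := by
  have := U_gen hn (z := 9 / 10) (q := 17.03) (by norm_num) (by norm_num)
    ((sg90 hn).trans (by norm_num)) hy0 hy
  norm_num at this ⊢; linarith

lemma V1 {y : ℝ} (hy0 : 0 < y) (hy : y ≤ 65 / 100) : sg n y ≤ 1.358 * y ^ 2 := by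
  have := sg_sq_upper (n := n) hy0 hy (by norm_num)
  have h := sg65 hn
  rw [div_pow] at this
  have h2 : 0 ≤ y ^ 2 := sq_nonneg y
  norm_num at this h ⊢; nlinarith

/-- bound near one -/
lemma N1 {y : ℝ} (hy0 : 0 < y) (hy1 : y < 1) :
    sg n y ≤ Lg y + (2 * y ^ 2 / (1 - y ^ 2)) / 63015 + 0.4701 * y ^ 2 := by
  have hu := sg_upper (n_pos hn) hy0 hy1
  rw [hn] at hu
  have z0 := zt0_b.2; have z1 := zt1_b.2; have z2 := zt2_b.2; have z3 := zt3_b.2; have z4 := zt4_b.2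
  have hp : ∀ k : ℕ, 1 ≤ k → y ^ (2 * k) ≤ y ^ 2 := fun k hk => pow_le_pow_of_le_one hy0.le hy1.le (by omega)
  have ht : 2 * 0.00025 * (1 / 13 + 1 / (63015:ℝ)) * y ^ 12 / (1 - y ^ 2 / 4) ≤ 0.0001 * y ^ 2 := by
    rw [div_le_iff₀ (by nlinarith)]
    have := hp 6 (by norm_num)
    norm_num at this ⊢
    nlinarith [mul_nonneg (sq_nonneg y) (show 0 ≤ 1 - y ^ 2 by nlinarith), sq_nonneg y]
  have hs : ∑ j ∈ Finset.range 5, 2 * (zt j - 1) * (1 / (2 * (j:ℝ) + 3) + 1 / 63015) * y ^ (2 * (j + 1)) ≤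
      ∑ j ∈ Finset.range 5, 2 * (zt j - 1) * (1 / (2 * (j:ℝ) + 3) + 1 / 63015) * y ^ 2 := by
    refine Finset.sum_le_sum fun j _ => ?_
    have := zt_ge_one j
    have : 0 ≤ zt j - 1 := by linarith
    apply mul_le_mul_of_nonneg_left (hp (j + 1) (by omega)) (by positivity)
  have hs2 : ∑ j ∈ Finset.range 5, 2 * (zt j - 1) * (1 / (2 * (j:ℝ) + 3) + 1 / 63015) * y ^ 2 ≤ 0.47 * y ^ 2 := by
    rw [← Finset.sum_mul]
    apply mul_le_mul_of_nonneg_right _ (sq_nonneg y)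
    norm_num [Finset.sum_range_succ] at z0 z1 z2 z3 z4 ⊢
    linarith
  linarith

end
end QP

namespace QP

noncomputable def E (n : ℕ) (y : ℝ) : ℝ := S n (2 * Real.pi * y / n)

lemma E_eq {n : ℕ} (hn : 0 < n) (y : ℝ) : E n y = ∏ k ∈ Finset.range n, (2 * Real.sin (Real.pi * (((k:ℝ) + 1) / n * y))) := by
  unfold E S
  rw [show Finset.Icc 1 n = Finset.Ico 1 (n + 1) from rfl, Finset.prod_Ico_eq_prod_range]
  simp only [Nat.add_sub_cancel]
  refine Finset.prod_congr rfl fun k _ => ?_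
  have : (n:ℝ) ≠ 0 := by positivity
  congr 2; push_cast; field_simp; ring

lemma E_contDiff (n : ℕ) : ContDiff ℝ 1 (E n) := by
  unfold E S
  apply contDiff_prod
  intro k _
  fun_prop

lemma E_cont (n : ℕ) : Continuous (E n) := (E_contDiff n).continuous

lemma E1_cont (n : ℕ) : Continuous (deriv (E n)) := (E_contDiff n).continuous_deriv le_rfl

lemma E_hasDeriv (n : ℕ) (y : ℝ) : HasDerivAt (E n) (deriv (E n) y) y :=
  ((E_contDiff n).differentiable one_ne_zero y).hasDerivAt

lemma arg_mem {n : ℕ} {k : ℕ} (hk : k < n) {y : ℝ} (h0 : 0 < y) (h1 : y < 1) :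
    0 < ((k:ℝ) + 1) / n * y ∧ ((k:ℝ) + 1) / n * y < 1 := by
  have hn : (0:ℝ) < n := by exact_mod_cast (Nat.zero_le k).trans_lt hk
  refine ⟨by positivity, ?_⟩
  have : ((k:ℝ) + 1) / n ≤ 1 := by rw [div_le_one hn]; exact_mod_cast hk
  nlinarith

lemma sin_fac_pos {n : ℕ} {k : ℕ} (hk : k < n) {y : ℝ} (h0 : 0 < y) (h1 : y < 1) :
    0 < Real.sin (Real.pi * (((k:ℝ) + 1) / n * y)) := by
  obtain ⟨a1, a2⟩ := arg_mem hk h0 h1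
  apply Real.sin_pos_of_pos_of_lt_pi
  · have := Real.pi_pos; positivity
  · nlinarith [Real.pi_pos]

lemma E_pos {n : ℕ} (hn : 0 < n) {y : ℝ} (h0 : 0 < y) (h1 : y < 1) : 0 < E n y := by
  rw [E_eq hn]
  refine Finset.prod_pos fun k hk => ?_
  have := sin_fac_pos (Finset.mem_range.1 hk) h0 h1
  positivity

lemma E_zero {n : ℕ} (hn : 0 < n) : E n 0 = 0 := by
  rw [E_eq hn]
  exact Finset.prod_eq_zero (Finset.mem_range.2 hn) (by simp)

lemma E_one {n : ℕ} (hn : 0 < n) : E n 1 = 0 := by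
  rw [E_eq hn]
  refine Finset.prod_eq_zero (i := n - 1) (Finset.mem_range.2 (by omega)) ?_
  have : (n:ℝ) ≠ 0 := by positivity
  have e : (((n - 1 : ℕ) : ℝ) + 1) / n * 1 = 1 := by
    rw [Nat.cast_sub hn]; push_cast; field_simp; ring
  rw [e]; simp

lemma E_nonneg {n : ℕ} (hn : 0 < n) {y : ℝ} (h0 : 0 ≤ y) (h1 : y ≤ 1) : 0 ≤ E n y := by
  rcases h0.eq_or_lt with h | h
  · rw [← h, E_zero hn]
  rcases h1.eq_or_lt with h' | h'
  · rw [h', E_one hn]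
  exact (E_pos hn h h').le

lemma E_ode {n : ℕ} (hn : 0 < n) {y : ℝ} (h0 : 0 < y) (h1 : y < 1) :
    y * deriv (E n) y = n * E n y * (1 - sg n y) := by
  have hn' : (n:ℝ) ≠ 0 := by positivity
  have hE : E n = fun y => ∏ k ∈ Finset.range n, (2 * Real.sin (Real.pi * (((k:ℝ) + 1) / n * y))) := by
    funext y; exact E_eq hn y
  have hl : logDeriv (E n) y = ∑ k ∈ Finset.range n, logDeriv (fun y => 2 * Real.sin (Real.pi * (((k:ℝ) + 1) / n * y))) y := by
    rw [hE]
    rw [logDeriv_prod]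
    · intro k hk
      have := sin_fac_pos (Finset.mem_range.1 hk) h0 h1
      positivity
    · intro k hk
      fun_prop
  have ht : ∀ k ∈ Finset.range n, y * logDeriv (fun y => 2 * Real.sin (Real.pi * (((k:ℝ) + 1) / n * y))) y =
      1 - Gc (((k:ℝ) + 1) / n * y) := by
    intro k hk
    have hp := sin_fac_pos (Finset.mem_range.1 hk) h0 h1
    have hd : HasDerivAt (fun y : ℝ => 2 * Real.sin (Real.pi * (((k:ℝ) + 1) / n * y)))
        (2 * (Real.cos (Real.pi * (((k:ℝ) + 1) / n * y)) * (Real.pi * (((k:ℝ) + 1) / n * 1)))) y :=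
      ((((hasDerivAt_id y).const_mul _).const_mul _).sin).const_mul 2
    rw [logDeriv_apply, hd.deriv, Gc]
    field_simp
    ring
  have hp := (E_pos hn h0 h1)
  rw [logDeriv_apply] at hl
  have h2 : y * (deriv (E n) y / E n y) = ∑ k ∈ Finset.range n, (1 - Gc (((k:ℝ) + 1) / n * y)) := by
    rw [hl, Finset.mul_sum]
    exact Finset.sum_congr rfl ht
  rw [Finset.sum_sub_distrib] at h2
  have h3 : ∑ k ∈ Finset.range n, Gc (((k:ℝ) + 1) / n * y) = n * sg n y := by
    unfold sg; rw [← mul_assoc, mul_one_div_cancel hn', one_mul]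
  rw [h3] at h2
  simp at h2
  field_simp at h2
  linarith

lemma stein {n : ℕ} (hn : 0 < n) {a b : ℝ} (ha : 0 ≤ a) (hab : a ≤ b) (hb : b ≤ 1) {k k' f : ℝ → ℝ}
    (hk : ∀ y, HasDerivAt k (k' y) y) (hk' : Continuous k') (hf : Continuous f)
    (hbd : E n a * (a * k a) ≤ E n b * (b * k b))
    (h : ∀ y, a < y → y < b → n * k y * (1 - sg n y) + (k y + y * k' y) ≤ n * f y) :
    0 ≤ ∫ y in a..b, E n y * f y := by
  have hkc : Continuous k := continuous_iff_continuousAt.2 fun y => (hk y).continuousAt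
  have hEc := E_cont n
  have hE1 := E1_cont n
  have hd : ∀ y, HasDerivAt (fun y => E n y * (y * k y)) (deriv (E n) y * (y * k y) + E n y * (1 * k y + y * k' y)) y :=
    fun y => (E_hasDeriv n y).mul ((hasDerivAt_id y).mul (hk y))
  have hintg := intervalIntegral.integral_eq_sub_of_hasDerivAt (a := a) (b := b) (fun y _ => hd y)
    (Continuous.intervalIntegrable (by fun_prop) _ _)
  have hle : ∫ y in a..b, (deriv (E n) y * (y * k y) + E n y * (1 * k y + y * k' y)) ≤ ∫ y in a..b, n * (E n y * f y) := by
    refine intervalIntegral.integral_mono_on_of_le_Ioo hab (Continuous.intervalIntegrable (by fun_prop) _ _)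
      (Continuous.intervalIntegrable (by fun_prop) _ _) fun y hy => ?_
    have h0 : 0 < y := ha.trans_lt hy.1
    have h1 : y < 1 := hy.2.trans_le hb
    have ho := E_ode hn h0 h1
    have hp := (E_pos hn h0 h1).le
    have := mul_le_mul_of_nonneg_left (h y hy.1 hy.2) hp
    calc _ = (y * deriv (E n) y) * k y + E n y * (k y + y * k' y) := by ring
      _ = E n y * (n * k y * (1 - sg n y) + (k y + y * k' y)) := by rw [ho]; ring
      _ ≤ E n y * (n * f y) := this
      _ = _ := by ring
  rw [hintg, intervalIntegral.integral_const_mul] at hle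
  have hn' : (0:ℝ) < n := by exact_mod_cast hn
  have : 0 ≤ n * ∫ y in a..b, E n y * f y := by linarith
  exact nonneg_of_mul_nonneg_right this hn'

lemma comp_mono {n : ℕ} (hn : 0 < n) {a b : ℝ} (ha : 0 ≤ a) (hab : a ≤ b) (hb : b ≤ 1) {p p' : ℝ → ℝ}
    (hp : ∀ y, HasDerivAt p (p' y) y)
    (h : ∀ y, a < y → y < b → 0 ≤ n * (1 - sg n y) + y * p' y) :
    E n a * Real.exp (p a) ≤ E n b * Real.exp (p b) := by
  have hd : ∀ y, HasDerivAt (fun y => E n y * Real.exp (p y)) (deriv (E n) y * Real.exp (p y) + E n y * (Real.exp (p y) * p' y)) y :=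
    fun y => (E_hasDeriv n y).mul ((hp y).exp)
  have hm : MonotoneOn (fun y => E n y * Real.exp (p y)) (Set.Icc a b) := by
    apply monotoneOn_of_deriv_nonneg (convex_Icc a b)
    · exact fun y _ => (hd y).continuousAt.continuousWithinAt
    · exact fun y _ => (hd y).differentiableAt.differentiableWithinAt
    · intro y hy
      rw [interior_Icc] at hy
      rw [(hd y).deriv]
      have h0 : 0 < y := ha.trans_lt hy.1
      have h1 : y < 1 := hy.2.trans_le hb
      have ho := E_ode hn h0 h1
      have h2 := (E_pos hn h0 h1).le
      have h3 : 0 ≤ y * (deriv (E n) y * Real.exp (p y) + E n y * (Real.exp (p y) * p' y)) := by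
        have : y * (deriv (E n) y * Real.exp (p y) + E n y * (Real.exp (p y) * p' y)) =
          (y * deriv (E n) y) * Real.exp (p y) + y * E n y * Real.exp (p y) * p' y := by ring
        rw [this, ho]
        have := mul_nonneg (mul_nonneg h2 (Real.exp_pos (p y)).le) (h y hy.1 hy.2)
        nlinarith
      exact nonneg_of_mul_nonneg_right h3 h0
  exact hm ⟨le_rfl, hab⟩ ⟨hab, le_rfl⟩ hab

lemma comp_anti {n : ℕ} (hn : 0 < n) {a b : ℝ} (ha : 0 ≤ a) (hab : a ≤ b) (hb : b ≤ 1) {p p' : ℝ → ℝ}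
    (hp : ∀ y, HasDerivAt p (p' y) y)
    (h : ∀ y, a < y → y < b → n * (1 - sg n y) + y * p' y ≤ 0) :
    E n b * Real.exp (p b) ≤ E n a * Real.exp (p a) := by
  have hd : ∀ y, HasDerivAt (fun y => E n y * Real.exp (p y)) (deriv (E n) y * Real.exp (p y) + E n y * (Real.exp (p y) * p' y)) y :=
    fun y => (E_hasDeriv n y).mul ((hp y).exp)
  have hm : AntitoneOn (fun y => E n y * Real.exp (p y)) (Set.Icc a b) := by
    apply antitoneOn_of_deriv_nonpos (convex_Icc a b)
    · exact fun y _ => (hd y).continuousAt.continuousWithinAt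
    · exact fun y _ => (hd y).differentiableAt.differentiableWithinAt
    · intro y hy
      rw [interior_Icc] at hy
      rw [(hd y).deriv]
      have h0 : 0 < y := ha.trans_lt hy.1
      have h1 : y < 1 := hy.2.trans_le hb
      have ho := E_ode hn h0 h1
      have h2 := (E_pos hn h0 h1).le
      have h3 : 0 ≤ y * -(deriv (E n) y * Real.exp (p y) + E n y * (Real.exp (p y) * p' y)) := by
        have : y * -(deriv (E n) y * Real.exp (p y) + E n y * (Real.exp (p y) * p' y)) =
          -((y * deriv (E n) y) * Real.exp (p y) + y * E n y * Real.exp (p y) * p' y) := by ring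
        rw [this, ho]
        have := mul_nonpos_of_nonneg_of_nonpos (mul_nonneg h2 (Real.exp_pos (p y)).le) (h y hy.1 hy.2)
        nlinarith
      have := nonneg_of_mul_nonneg_right h3 h0
      linarith
  exact hm ⟨le_rfl, hab⟩ ⟨hab, le_rfl⟩ hab

end QP

namespace QP

noncomputable def wt (y : ℝ) : ℝ := Real.sin (Real.pi * (y / 63015))

lemma wt_deriv (y : ℝ) : HasDerivAt wt (Real.cos (Real.pi * (y / 63015)) * (Real.pi * (1 / 63015))) y :=
  (((hasDerivAt_id y).div_const _).const_mul _).sin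

lemma wt_cont : Continuous wt := by unfold wt; fun_prop

lemma x_cos_le_sin {x : ℝ} (h0 : 0 ≤ x) (h1 : x < Real.pi / 2) : x * Real.cos x ≤ Real.sin x := by
  have h := Real.le_tan h0 h1
  have hc : 0 < Real.cos x := Real.cos_pos_of_mem_Ioo ⟨by linarith, h1⟩
  rw [Real.tan_eq_sin_div_cos, le_div_iff₀ hc] at h
  exact h

lemma wt_facts {y : ℝ} (h0 : 0 < y) (h1 : y < 1) : 0 ≤ wt y ∧
    0 ≤ y * (Real.cos (Real.pi * (y / 63015)) * (Real.pi * (1 / 63015))) ∧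
    y * (Real.cos (Real.pi * (y / 63015)) * (Real.pi * (1 / 63015))) ≤ wt y := by
  have hp := Real.pi_pos
  have a0 : 0 ≤ Real.pi * (y / 63015) := by positivity
  have a1 : Real.pi * (y / 63015) < Real.pi / 2 := by nlinarith
  have e : y * (Real.cos (Real.pi * (y / 63015)) * (Real.pi * (1 / 63015))) =
    Real.pi * (y / 63015) * Real.cos (Real.pi * (y / 63015)) := by ring
  rw [e]
  have := x_cos_le_sin a0 a1
  have hc : 0 < Real.cos (Real.pi * (y / 63015)) := Real.cos_pos_of_mem_Ioo ⟨by linarith, a1⟩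
  have h2 : 0 ≤ Real.pi * (y / 63015) * Real.cos (Real.pi * (y / 63015)) := by positivity
  unfold wt
  exact ⟨h2.trans this, h2, this⟩

section
variable {n : ℕ} (hn : (n:ℝ) = 63015)
include hn

set_option maxHeartbeats 1000000 in
lemma A1_pt {y : ℝ} (h0 : 0 < y) (h1 : y < 1) :
    63015 * (0.4863 - 0.3 * (y - 72 / 91)) * (1 - sg n y) + (2 * (0.4863 - 0.3 * (y - 72 / 91)) + y * (-0.3)) ≤
      63015 * (Real.cos (Real.pi * (39821 / 63015) * y) - 0.1 / 63015) := by
  have hL := Lw hn h0 h1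
  have p1 := Real.pi_gt_d6
  have p2 := Real.pi_lt_d6
  obtain ⟨u, hu⟩ : ∃ u, u = y - 72 / 91 := ⟨_, rfl⟩
  have hy : y = u + 72 / 91 := by rw [hu]; ring
  rw [← hu] at hL ⊢
  generalize sg n y = σ at hL ⊢
  have u0 : -(72 / 91) < u := by rw [hu]; linarith
  have u1 : u < 19 / 91 := by rw [hu]; linarith
  have hk : 0 ≤ 0.4863 - 0.3 * u := by norm_num at u1 ⊢; linarith
  have hs := mul_le_mul_of_nonneg_left hL hk
  rw [← Real.sin_pi_div_two_sub]
  set z := Real.pi / 2 - Real.pi * (39821 / 63015) * y with hz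
  have ez : z = Real.pi * (70.5 / 5734365) - Real.pi * (39821 / 63015) * u := by
    rw [hz, hy]; ring
  rcases le_total u 0 with hu0 | hu0
  · have z0 : 0 ≤ z := by
      rw [ez]; have : 0 ≤ Real.pi * (39821 / 63015) * (-u) := by have := Real.pi_pos; have : 0 ≤ -u := by linarith
                                                                 positivity
      have : 0 ≤ Real.pi * (70.5 / 5734365) := by positivity
      linarith
    have zl : 0.00003862 - 1.98526 * u ≤ z := by rw [ez]; norm_num at p1 p2 ⊢; nlinarith
    have zu : z ≤ 0.000039 - 1.98529 * u := by rw [ez]; norm_num at p1 p2 ⊢; nlinarith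
    have h3 := Real.sin_ge_sub_cube z0
    have h4 := pow_le_pow_left₀ z0 zu 3
    obtain ⟨v, hv⟩ : ∃ v, v = -u := ⟨_, rfl⟩
    have hv0 : 0 ≤ v := by linarith
    have hv1 : 0 ≤ 72 / 91 - v := by linarith
    have e : u = -v := by linarith
    rw [e] at hs h4 zl zu ⊢
    rw [hy, e]
    have q1 := mul_nonneg (sq_nonneg v) hv1
    have q2 := mul_nonneg (sq_nonneg v) hv0
    have q3 := sq_nonneg (v - 0.0001)
    clear hL hz ez hu p1 p2
    norm_num at *
    linarith
  · have zl : 0.00003862 - 1.98529 * u ≤ z := by rw [ez]; norm_num at p1 p2 ⊢; nlinarith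
    have h3 : 0.00003862 - 1.98529 * u - 0.0000000001 ≤ Real.sin z := by
      rcases le_total z 0 with hz0 | hz0
      · have := Real.le_sin hz0
        norm_num at *; linarith
      · have h3 := Real.sin_ge_sub_cube hz0
        have zu : z ≤ 0.0001 := by rw [ez]; norm_num at p1 p2 ⊢; nlinarith
        have h4 := pow_le_pow_left₀ hz0 zu 3
        norm_num at *; linarith
    have q1 := mul_nonneg (sq_nonneg u) (sub_nonneg.2 u1.le)
    rw [hy]
    norm_num at *
    linarith [sq_nonneg (u - 0.0001), mul_nonneg (sq_nonneg u) hu0]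

lemma A1 : 0 ≤ ∫ y in (0:ℝ)..1, E n y * (wt y * (Real.cos (Real.pi * (39821 / 63015) * y) - 0.1 / 63015)) := by
  have hn0 := n_pos hn
  refine stein hn0 le_rfl zero_le_one le_rfl (k := fun y => (0.4863 - 0.3 * (y - 72 / 91)) * wt y)
    (k' := fun y => (-(0.3 * 1)) * wt y + (0.4863 - 0.3 * (y - 72 / 91)) * (Real.cos (Real.pi * (y / 63015)) * (Real.pi * (1 / 63015))))
    ?_ ?_ ?_ ?_ ?_
  · intro y
    exact (((((hasDerivAt_id y).sub_const _).const_mul _).const_sub _).mul (wt_deriv y))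
  · have := wt_cont; fun_prop
  · have := wt_cont; fun_prop
  · rw [E_zero hn0, E_one hn0]; simp
  · intro y h0 h1
    obtain ⟨w0, w1, w2⟩ := wt_facts h0 h1
    have h := mul_le_mul_of_nonneg_right (A1_pt hn h0 h1) w0
    rw [hn]
    have hk : 0 ≤ 0.4863 - 0.3 * (y - 72 / 91) := by norm_num; linarith
    have h2 := mul_le_mul_of_nonneg_left w2 hk
    nlinarith

set_option maxHeartbeats 1000000 in
lemma A2_pt {y : ℝ} (h0 : 0 < y) (h1 : y < 1) :
    63015 * (Real.cos (Real.pi * (39823 / 63015) * y) + 0.1 / 63015) ≤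
    63015 * (2.3294 * (1 - y)) * (1 - sg n y) + (2.3294 * (1 - y) + y * (-2.3294)) := by
  have p1 := Real.pi_gt_d6
  have p2 := Real.pi_lt_d6
  have hk : 0 ≤ 2.3294 * (1 - y) := by norm_num; linarith
  rw [← Real.sin_pi_div_two_sub]
  set z := Real.pi / 2 - Real.pi * (39823 / 63015) * y with hz
  rcases le_total y 0.65 with hy | hy
  · have hV := mul_le_mul_of_nonneg_left (V1 hn h0 (by norm_num at hy ⊢; exact hy)) hk
    have zb : z ≤ 1.5708 - 1.9853 * y := by rw [hz]; norm_num at *; nlinarith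
    have z0 : 0 ≤ z := by rw [hz]; norm_num at *; nlinarith
    have := Real.sin_le z0
    have q1 := mul_nonneg h0.le (sub_nonneg.2 hy)
    norm_num at *
    nlinarith [mul_nonneg h0.le (sq_nonneg (y - 0.6)), sq_nonneg (y - 0.6), mul_nonneg q1 h0.le]
  obtain ⟨u, hu⟩ : ∃ u, u = y - 72 / 91 := ⟨_, rfl⟩
  have hyu : y = u + 72 / 91 := by rw [hu]; ring
  have ez : z = -(Real.pi * (73.5 / 5734365)) - Real.pi * (39823 / 63015) * u := by
    rw [hz, hyu]; ring
  rcases le_total 0 z with z0 | z0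
  · have hu0 : u ≤ 0 := by
      rw [ez] at z0
      by_contra hc; push Not at hc
      have := mul_pos Real.pi_pos hc
      norm_num at *
      nlinarith
    have hV := mul_le_mul_of_nonneg_left (U1 hn h0 (by rw [hyu]; linarith)) hk
    have hs := Real.sin_le z0
    have zb : z ≤ -0.00004026 - 1.98537 * u := by rw [ez]; norm_num at *; nlinarith
    rw [← hu] at hV
    obtain ⟨v, hv⟩ : ∃ v, v = -u := ⟨_, rfl⟩
    have hv0 : 0 ≤ v := by linarith
    have e : u = -v := by linarith
    rw [hyu] at hy
    have hv1 : 0 ≤ 72 / 91 - 0.65 - v := by linarith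
    rw [hyu] at hk hV ⊢
    rw [e] at hV zb hk ⊢
    have q1 := mul_nonneg (sq_nonneg v) hv1
    norm_num at *
    nlinarith [sq_nonneg v]
  have u0 : -0.00003 ≤ u := by
    rw [ez] at z0
    by_contra hc; push Not at hc
    norm_num at *
    nlinarith
  have hs : Real.sin z ≤ z - z ^ 3 / 6 := by
    have := Real.sin_ge_sub_cube (x := -z) (by linarith)
    rw [Real.sin_neg] at this
    have e : (-z) ^ 3 = - z ^ 3 := by ring
    rw [e] at this; linarith
  rcases le_total y 0.9 with hy9 | hy9
  · have hV := mul_le_mul_of_nonneg_left (U2 hn h0 (by norm_num at hy9 ⊢; exact hy9)) hk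
    rw [← hu] at hV
    have zb : z ≤ -0.00004026 - 1.98535 * u + 0.000000001 := by rw [ez]; norm_num at *; nlinarith
    have zl : -0.0002 - 1.98538 * u ≤ z := by rw [ez]; norm_num at *; nlinarith
    have zc : -z ^ 3 ≤ (0.0002 + 1.98538 * u) ^ 3 := by
      have := pow_le_pow_left₀ (show 0 ≤ -z by linarith) (show -z ≤ 0.0002 + 1.98538 * u by linarith) 3
      have e : (-z) ^ 3 = - z ^ 3 := by ring
      rw [e] at this; exact this
    rw [hyu] at hk hV hy9 ⊢
    obtain ⟨v, hv⟩ : ∃ v, v = u + 0.00003 := ⟨_, rfl⟩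
    have hv0 : 0 ≤ v := by linarith
    have e : u = v - 0.00003 := by linarith
    rw [e] at hk hV hy9 zb zc ⊢
    norm_num at *
    linarith [sq_nonneg (v - 0.0001), mul_nonneg hv0 (sq_nonneg v), sq_nonneg v]
  · have hN := N1 hn h0 h1
    obtain ⟨t, ht⟩ : ∃ t, t = 1 - y := ⟨_, rfl⟩
    have hyt : y = 1 - t := by linarith
    have t0 : 0 < t := by linarith
    have t1 : t ≤ 0.1 := by norm_num at *; linarith
    have l2 := Real.log_two_lt_d9
    have hlog : Real.log ((1 + y) / (1 - y)) ≤ 4 * Real.log 2 + (1 / (8 * t) - 1) := by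
      have a1 := Real.log_le_sub_one_of_pos (show 0 < 1 / (8 * t) by positivity)
      have a2 : Real.log ((1 + y) / (1 - y)) ≤ Real.log (2 ^ 4 * (1 / (8 * t))) := by
        apply Real.log_le_log
        · apply div_pos <;> linarith
        · rw [← ht, div_le_iff₀ t0]; field_simp; linarith
      rw [Real.log_mul (by norm_num) (by positivity), Real.log_pow] at a2
      push_cast at a2; linarith
    have hlog2 : t * Real.log ((1 + y) / (1 - y)) ≤ 1 / 8 + 1.7727 * t := by
      have := mul_le_mul_of_nonneg_left hlog t0.le
      have e : t * (4 * Real.log 2 + (1 / (8 * t) - 1)) = 1 / 8 + t * (4 * Real.log 2 - 1) := by field_simp; ring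
      rw [e] at this
      norm_num at *; nlinarith
    have hlog3 : t * (Real.log ((1 + y) / (1 - y)) / y) ≤ (1 / 8 + 1.7727 * t) / 0.9 := by
      rw [← mul_div_assoc]
      apply div_le_div₀ (by positivity) hlog2 (by norm_num) hy9
    have h5 : t * (2 * y ^ 2 / (1 - y ^ 2)) ≤ 2 := by
      have : 1 - y ^ 2 = t * (1 + y) := by rw [ht]; ring
      rw [this, ← mul_div_assoc, div_le_iff₀ (by positivity)]
      have : 0 ≤ t * (1 + y - y ^ 2) := mul_nonneg t0.le (by nlinarith)
      linarith
    have h6 : t * sg n y ≤ (1 / 8 + 1.7727 * t) / 0.9 - 2 * t + 2 / 63015 + 0.4701 * t := by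
      have := mul_le_mul_of_nonneg_left hN t0.le
      unfold Lg at this
      have h7 : t * (0.4701 * y ^ 2) ≤ 0.4701 * t := by
        have : y ^ 2 ≤ 1 := by nlinarith
        norm_num; nlinarith
      refine this.trans ?_
      have e : t * (Real.log ((1 + y) / (1 - y)) / y - 2 + 2 * y ^ 2 / (1 - y ^ 2) / 63015 + 0.4701 * y ^ 2) =
        t * (Real.log ((1 + y) / (1 - y)) / y) - 2 * t + (t * (2 * y ^ 2 / (1 - y ^ 2))) / 63015 + t * (0.4701 * y ^ 2) := by ring
      rw [e]
      linarith
    have zb : z ≤ -0.4145 + 1.9854 * t := by rw [hz, hyt]; norm_num at *; nlinarith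
    have zl : -0.415 ≤ z := by rw [hz]; norm_num at *; nlinarith
    have zc : -z ^ 3 ≤ 0.415 ^ 3 := by
      have := pow_le_pow_left₀ (show 0 ≤ -z by linarith) (show -z ≤ 0.415 by linarith) 3
      have e : (-z) ^ 3 = - z ^ 3 := by ring
      rw [e] at this; exact this
    rw [← ht]
    have e : 63015 * (2.3294 * t) * (1 - sg n y) = 63015 * (2.3294 * t - 2.3294 * (t * sg n y)) := by ring
    rw [e, hyt]
    rw [hyt] at h6
    norm_num at *
    linarith

lemma A2 : 0 ≤ ∫ y in (0:ℝ)..1, E n y * (wt y * (-Real.cos (Real.pi * (39823 / 63015) * y) - 0.1 / 63015)) := by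
  have hn0 := n_pos hn
  refine stein hn0 le_rfl zero_le_one le_rfl (k := fun y => (-(2.3294 * (1 - y))) * wt y)
    (k' := fun y => (-(2.3294 * (-1))) * wt y + (-(2.3294 * (1 - y))) * (Real.cos (Real.pi * (y / 63015)) * (Real.pi * (1 / 63015))))
    ?_ ?_ ?_ ?_ ?_
  · intro y
    exact ((((hasDerivAt_id y).const_sub _).const_mul _).neg.mul (wt_deriv y))
  · have := wt_cont; fun_prop
  · have := wt_cont; fun_prop
  · rw [E_zero hn0, E_one hn0]; simp
  · intro y h0 h1
    obtain ⟨w0, w1, w2⟩ := wt_facts h0 h1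
    have h := mul_le_mul_of_nonneg_right (A2_pt hn h0 h1) w0
    rw [hn]
    have hk : 0 ≤ 2.3294 * (1 - y) := by norm_num; linarith
    have h2 := mul_nonneg hk w1
    nlinarith

end
end QP

namespace QP

section
variable {n : ℕ} (hn : (n:ℝ) = 63015)
include hn

lemma M2_right : 0 ≤ ∫ y in (72 / 91 : ℝ)..1, E n y * (0.21 / 63015 - (y - 72 / 91) ^ 2) := by
  have hn0 := n_pos hn
  refine stein hn0 (by norm_num) (by norm_num) le_rfl (k := fun y => 0.25 * (y - 72 / 91)) (k' := fun _ => 0.25 * 1)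
    ?_ ?_ ?_ ?_ ?_
  · intro y
    exact ((hasDerivAt_id y).sub_const _).const_mul _
  · fun_prop
  · fun_prop
  · rw [E_one hn0]; simp
  · intro y h0 h1
    have hL := Lw hn (lt_trans (by norm_num) h0) h1
    obtain ⟨u, hu⟩ : ∃ u, u = y - 72 / 91 := ⟨_, rfl⟩
    have hy : y = u + 72 / 91 := by rw [hu]; ring
    have u0 : 0 ≤ u := by linarith
    rw [hn]
    rw [← hu] at hL ⊢
    generalize sg n y = σ at hL ⊢
    rw [hy]
    have h2 := mul_le_mul_of_nonneg_left hL u0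
    have q1 := sq_nonneg (u - 0.0005)
    have q2 := mul_nonneg (sq_nonneg u) u0
    clear hu hL h0 h1 hy
    norm_num at *
    linarith

lemma M2_left : 0 ≤ ∫ y in (0:ℝ)..(72 / 91 : ℝ), E n y * (0.21 / 63015 - (y - 72 / 91) ^ 2) := by
  have hn0 := n_pos hn
  refine stein hn0 le_rfl (by norm_num) (by norm_num)
    (k := fun y => 0.25 * (y - 72 / 91) - 2 * (y - 72 / 91) ^ 2)
    (k' := fun y => 0.25 * 1 - 2 * (2 * (y - 72 / 91) ^ 1 * 1)) ?_ ?_ ?_ ?_ ?_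
  · intro y
    have h := (hasDerivAt_id y).sub_const (72 / 91 : ℝ)
    exact (h.const_mul _).sub ((h.pow 2).const_mul _)
  · fun_prop
  · fun_prop
  · rw [E_zero hn0]; simp
  · intro y h0 h1
    obtain ⟨v, hv⟩ : ∃ v, v = 72 / 91 - y := ⟨_, rfl⟩
    have hy : y = 72 / 91 - v := by rw [hv]; ring
    have hu : y - 72 / 91 = - v := by rw [hv]; ring
    have v0 : 0 ≤ v := by linarith
    rw [hn]
    rw [hu]
    have hk : 0 ≤ 0.25 * v + 2 * v ^ 2 := by positivity
    rcases le_total y 0.65 with h65 | h65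
    · have hV := V1 hn h0 (by norm_num at h65 ⊢; exact h65)
      have hb : 0 ≤ v - 0.14 := by norm_num at *; linarith
      have hb2 : 0 ≤ 72 / 91 - v := by linarith
      have hs := mul_le_mul_of_nonneg_left hV hk
      rw [hy] at hs ⊢
      generalize sg n (72 / 91 - v) = σ at hs ⊢
      have key : v * (v + 0.05) ≤ (0.25 * v + 2 * v ^ 2) * (1 - 1.358 * (72 / 91 - v) ^ 2) := by
        have : v + 0.05 ≤ (0.25 + 2 * v) * (1 - 1.358 * (72 / 91 - v) ^ 2) := by
          have r1 := mul_nonneg hb hb2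
          have r2 := mul_nonneg (mul_nonneg hb hb2) hb
          norm_num at *
          nlinarith
        nlinarith [mul_le_mul_of_nonneg_left this v0]
      clear hV h65 hy hv hu h0 h1
      norm_num at *
      nlinarith
    · have hV := U1 hn h0 (by norm_num; linarith)
      rw [hu] at hV
      have hb : 0 ≤ 0.15 - v := by norm_num at *; linarith
      have hs := mul_le_mul_of_nonneg_left hV hk
      rw [hy] at hs ⊢
      generalize sg n (72 / 91 - v) = σ at hs ⊢
      have q1 := sq_nonneg (v - 0.0012)
      have q2 := mul_nonneg (mul_nonneg (sq_nonneg v) v0) hb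
      have q3 := mul_nonneg (sq_nonneg v) v0
      have q4 := mul_nonneg v0 hb
      clear hV h65 hy hv hu h0 h1
      norm_num at *
      linarith

lemma M2 : 0 ≤ ∫ y in (0:ℝ)..1, E n y * (0.21 / 63015 - (y - 72 / 91) ^ 2) := by
  have hEc := E_cont n
  have hc : Continuous fun y => E n y * (0.21 / 63015 - (y - 72 / 91) ^ 2) := by fun_prop
  rw [← intervalIntegral.integral_add_adjacent_intervals (hc.intervalIntegrable 0 (72 / 91)) (hc.intervalIntegrable (72 / 91) 1)]
  exact add_nonneg (M2_left hn) (M2_right hn)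

lemma C1_pt (y : ℝ) : 1 - 0.0005 / 63015 - 1.972 * (y - 72 / 91) ^ 2 ≤ Real.sin (Real.pi * (39822 / 63015) * y) := by
  rw [← Real.cos_pi_div_two_sub]
  refine le_trans ?_ (Real.one_sub_sq_div_two_le_cos)
  obtain ⟨u, hu⟩ : ∃ u, u = y - 72 / 91 := ⟨_, rfl⟩
  have hy : y = u + 72 / 91 := by rw [hu]; ring
  rw [← hu, hy]
  have e : Real.pi / 2 - Real.pi * (39822 / 63015) * (u + 72 / 91) =
    -Real.pi * (1.5 / 5734365 + (39822 / 63015) * u) := by ring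
  rw [e, mul_pow, neg_sq]
  have p1 := Real.pi_lt_d6
  have p2 : Real.pi ^ 2 ≤ 3.141593 ^ 2 := pow_le_pow_left₀ Real.pi_pos.le p1.le 2
  have h2 := mul_le_mul_of_nonneg_right p2 (sq_nonneg (1.5 / 5734365 + (39822 / 63015) * u))
  have q := sq_nonneg (u - 0.005)
  have q2 := sq_nonneg (u - 0.001)
  norm_num at h2 ⊢
  nlinarith [sq_nonneg u]

lemma C1 : (1 - 0.415 / 63015) * (∫ y in (0:ℝ)..1, E n y) ≤ ∫ y in (0:ℝ)..1, E n y * Real.sin (Real.pi * (39822 / 63015) * y) := by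
  have hn0 := n_pos hn
  have hEc := E_cont n
  have h : ∫ y in (0:ℝ)..1, ((1 - 0.415 / 63015) * E n y + 1.972 * (E n y * (0.21 / 63015 - (y - 72 / 91) ^ 2))) ≤
      ∫ y in (0:ℝ)..1, E n y * Real.sin (Real.pi * (39822 / 63015) * y) := by
    refine intervalIntegral.integral_mono_on zero_le_one (Continuous.intervalIntegrable (by fun_prop) _ _)
      (Continuous.intervalIntegrable (by fun_prop) _ _) fun y hy => ?_
    have h1 := mul_le_mul_of_nonneg_left (C1_pt hn y) (E_nonneg hn0 hy.1 hy.2)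
    have h2 := E_nonneg hn0 hy.1 hy.2
    refine le_trans ?_ h1
    generalize E n y = e at *
    norm_num at *
    nlinarith
  rw [intervalIntegral.integral_add (Continuous.intervalIntegrable (by fun_prop) _ _) (Continuous.intervalIntegrable (by fun_prop) _ _),
    intervalIntegral.integral_const_mul, intervalIntegral.integral_const_mul] at h
  have := M2 hn
  have h3 : 0 ≤ 1.972 * ∫ y in (0:ℝ)..1, E n y * (0.21 / 63015 - (y - 72 / 91) ^ 2) := mul_nonneg (by norm_num) this
  linarith

end
end QP

namespace QP

lemma int_nonpos {f : ℝ → ℝ} {a b : ℝ} (hab : a ≤ b) (h : ∀ y ∈ Set.Icc a b, f y ≤ 0) : ∫ y in a..b, f y ≤ 0 := by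
  have := intervalIntegral.integral_nonneg (f := fun y => - f y) (μ := MeasureTheory.volume) hab
    (fun y hy => by have := h y hy; linarith)
  rw [intervalIntegral.integral_neg] at this
  linarith

section
variable {n : ℕ} (hn : (n:ℝ) = 63015)
include hn

/-- on the left of the centre, `E` is nearly increasing -/
lemma q_left {y : ℝ} (h0 : 0 < y) (h1 : y ≤ 72 / 91) : -0.3 + 63015 * 0.1 * (72 / 91 - y) ≤ 63015 * (1 - sg n y) := by
  obtain ⟨v, hv⟩ : ∃ v, v = 72 / 91 - y := ⟨_, rfl⟩
  have hu : y - 72 / 91 = - v := by rw [hv]; ring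
  have v0 : 0 ≤ v := by linarith
  rcases le_total y 0.65 with h65 | h65
  · have hV := V1 hn h0 (by norm_num at h65 ⊢; exact h65)
    have : y ^ 2 ≤ 0.65 ^ 2 := pow_le_pow_left₀ h0.le h65 2
    norm_num at *
    nlinarith
  · have hV := U1 hn h0 (by norm_num; linarith)
    rw [hu] at hV
    have hb : 0 ≤ 0.15 - v := by norm_num at *; linarith
    rw [← hv]
    have q4 := mul_nonneg v0 hb
    norm_num at *
    linarith

lemma q_right {y : ℝ} (h0 : 72 / 91 ≤ y) (h1 : y < 1) : 63015 * (1 - sg n y) ≤ 2.94 - 63015 * 4 * (y - 72 / 91) := by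
  have hL := Lw hn (lt_of_lt_of_le (by norm_num) h0) h1
  have := sq_nonneg (y - 72 / 91)
  norm_num at *
  linarith

lemma exp_small {x : ℝ} (h0 : 0 ≤ x) (h : x ≤ 0.005) : Real.exp x ≤ 1.01 := by
  have := Real.exp_bound_div_one_sub_of_interval h0 (by norm_num at *; linarith)
  refine this.trans ?_
  rw [div_le_iff₀ (by norm_num at *; linarith)]
  norm_num at *; linarith

lemma E_max_left {y : ℝ} (h0 : 0 ≤ y) (h1 : y ≤ 72 / 91) : E n y ≤ 1.01 * E n (72 / 91) := by
  have hn0 := n_pos hn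
  have near : ∀ y : ℝ, 72 / 91 - 0.001 ≤ y → y ≤ 72 / 91 → E n y ≤ 1.01 * E n (72 / 91) := by
    intro y h2 h3
    have h := comp_mono hn0 (a := y) (b := 72 / 91) (by norm_num at *; linarith) h3 (by norm_num)
      (p := fun x => 0.5 * (x - y)) (p' := fun _ => 0.5 * 1)
      (fun x => ((hasDerivAt_id x).sub_const _).const_mul _) (by
        intro x hx1 hx2
        have := q_left hn (y := x) (by norm_num at *; linarith) hx2.le
        rw [hn]
        norm_num at *
        linarith)
    have e := exp_small hn (x := 0.5 * (72 / 91 - y)) (by norm_num at *; linarith) (by norm_num at *; linarith)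
    have hp := E_nonneg hn0 (y := 72 / 91) (by norm_num) (by norm_num)
    have := mul_le_mul_of_nonneg_left e hp
    simp only [sub_self, mul_zero, Real.exp_zero, mul_one] at h
    linarith
  rcases le_total (72 / 91 - 0.001) y with h2 | h2
  · exact near y h2 h1
  · have h := comp_mono hn0 (a := y) (b := 72 / 91 - 0.001) h0 h2 (by norm_num)
      (p := fun x => 0) (p' := fun _ => 0)
      (fun x => hasDerivAt_const _ _) (by
        intro x hx1 hx2
        have := q_left hn (y := x) (by linarith) (by norm_num at *; linarith)
        rw [hn]
        norm_num at *
        linarith)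
    simp only [Real.exp_zero, mul_one] at h
    exact h.trans (near _ le_rfl (by norm_num))

lemma E_max_right {y : ℝ} (h0 : 72 / 91 ≤ y) (h1 : y ≤ 1) : E n y ≤ 1.01 * E n (72 / 91) := by
  have hn0 := n_pos hn
  have near : ∀ y : ℝ, 72 / 91 ≤ y → y ≤ 72 / 91 + 0.001 → E n y ≤ 1.01 * E n (72 / 91) := by
    intro y h2 h3
    have h := comp_anti hn0 (a := 72 / 91) (b := y) (by norm_num) h2 (by norm_num at *; linarith)
      (p := fun x => (-4) * (x - y)) (p' := fun _ => (-4) * 1)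
      (fun x => ((hasDerivAt_id x).sub_const _).const_mul _) (by
        intro x hx1 hx2
        have := q_right hn (y := x) hx1.le (by norm_num at *; linarith)
        rw [hn]
        norm_num at *
        linarith)
    have e := exp_small hn (x := (-4) * (72 / 91 - y)) (by norm_num at *; linarith) (by norm_num at *; linarith)
    have hp := E_nonneg hn0 (y := 72 / 91) (by norm_num) (by norm_num)
    have := mul_le_mul_of_nonneg_left e hp
    simp only [sub_self, mul_zero, Real.exp_zero, mul_one] at h
    linarith
  rcases le_total y (72 / 91 + 0.001) with h2 | h2
  · exact near y h0 h2
  · have h := comp_anti hn0 (a := 72 / 91 + 0.001) (b := y) (by norm_num) h2 h1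
      (p := fun x => 0) (p' := fun _ => 0)
      (fun x => hasDerivAt_const _ _) (by
        intro x hx1 hx2
        have := q_right hn (y := x) (by norm_num at *; linarith) (by linarith)
        rw [hn]
        norm_num at *
        linarith)
    simp only [Real.exp_zero, mul_one] at h
    exact h.trans (near _ (by norm_num) le_rfl)

lemma E_max {y : ℝ} (h0 : 0 ≤ y) (h1 : y ≤ 1) : E n y ≤ 1.01 * E n (72 / 91) := by
  rcases le_total y (72 / 91) with h | h
  · exact E_max_left hn h0 h
  · exact E_max_right hn h h1

omit hn in
lemma exp16 : Real.exp 1.6 ≤ 4.96 := by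
  have h1 := Real.exp_one_lt_d9
  have h2 : Real.exp 1.6 ^ 5 = Real.exp 1 ^ 8 := by
    rw [← Real.exp_nat_mul, ← Real.exp_nat_mul]; norm_num
  have h3 : Real.exp 1 ^ 8 ≤ 2.7182818286 ^ 8 := pow_le_pow_left₀ (Real.exp_pos _).le h1.le 8
  by_contra hc
  push Not at hc
  have h4 : (4.96:ℝ) ^ 5 ≤ Real.exp 1.6 ^ 5 := pow_le_pow_left₀ (by norm_num) hc.le 5
  rw [h2] at h4
  have := h4.trans h3
  norm_num at this

lemma E_local {y : ℝ} (h0 : 72 / 91 - 0.00304 ≤ y) (h1 : y ≤ 72 / 91 + 0.00304) :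
    E n (72 / 91) ≤ 4.96 * E n y := by
  have hn0 := n_pos hn
  have hy0 := E_nonneg hn0 (y := y) (by norm_num at *; linarith) (by norm_num at *; linarith)
  have fin : ∀ x : ℝ, x ≤ 1.6 → E n (72 / 91) ≤ E n y * Real.exp x → E n (72 / 91) ≤ 4.96 * E n y := by
    intro x hx h
    have h2 := (Real.exp_le_exp.2 hx).trans exp16
    have := mul_le_mul_of_nonneg_left h2 hy0
    linarith
  rcases le_total y (72 / 91) with h | h
  · have hh := comp_anti hn0 (a := y) (b := 72 / 91) (by norm_num at *; linarith) h (by norm_num)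
      (p := fun x => (-4) * (x - 72 / 91) + 63015 * 2.65 * (x - 72 / 91) ^ 2)
      (p' := fun x => (-4) * 1 + 63015 * 2.65 * (((2 : ℕ) : ℝ) * (x - 72 / 91) ^ 1 * 1))
      (fun x => (((hasDerivAt_id x).sub_const _).const_mul _).add ((((hasDerivAt_id x).sub_const _).pow 2).const_mul _)) (by
        intro x hx1 hx2
        have hL := Lw hn (y := x) (by norm_num at *; linarith) (by norm_num at *; linarith)
        rw [hn]
        generalize sg n x = σ at *
        obtain ⟨v, hv⟩ : ∃ v, v = 72 / 91 - x := ⟨_, rfl⟩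
        have hu : x - 72 / 91 = - v := by rw [hv]; ring
        have v0 : 0 ≤ v := by linarith
        have v1 : v ≤ 0.00304 := by norm_num at *; linarith
        have hx : x = 72 / 91 - v := by linarith
        rw [hu] at hL ⊢
        rw [hx]
        norm_num at *
        nlinarith [mul_nonneg v0 (sub_nonneg.2 v1)])
    simp only [sub_self] at hh
    norm_num at hh
    refine fin _ ?_ hh
    have : (y - 72 / 91) ^ 2 ≤ 0.00304 ^ 2 := by apply sq_le_sq' <;> linarith
    norm_num at *
    linarith
  · have hh := comp_mono hn0 (a := 72 / 91) (b := y) (by norm_num) h (by norm_num at *; linarith)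
      (p := fun x => 4 * (x - 72 / 91) + 63015 * 2.65 * (x - 72 / 91) ^ 2)
      (p' := fun x => 4 * 1 + 63015 * 2.65 * (((2 : ℕ) : ℝ) * (x - 72 / 91) ^ 1 * 1))
      (fun x => (((hasDerivAt_id x).sub_const _).const_mul _).add ((((hasDerivAt_id x).sub_const _).pow 2).const_mul _)) (by
        intro x hx1 hx2
        have hL := U1 hn (y := x) (by norm_num at *; linarith) (by norm_num at *; linarith)
        rw [hn]
        generalize sg n x = σ at *
        obtain ⟨v, hv⟩ : ∃ v, v = x - 72 / 91 := ⟨_, rfl⟩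
        have v0 : 0 ≤ v := by linarith
        have v1 : v ≤ 0.00304 := by norm_num at *; linarith
        have hx : x = 72 / 91 + v := by linarith
        rw [← hv] at hL ⊢
        rw [hx]
        norm_num at *
        nlinarith [mul_nonneg v0 (sub_nonneg.2 v1)])
    simp only [sub_self] at hh
    norm_num at hh
    refine fin _ ?_ hh
    have : (y - 72 / 91) ^ 2 ≤ 0.00304 ^ 2 := by apply sq_le_sq' <;> linarith
    norm_num at *
    linarith

noncomputable def Zt (n : ℕ) : ℝ := ∫ y in (0:ℝ)..1, E n y

lemma Z_nonneg : 0 ≤ Zt n := by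
  apply intervalIntegral.integral_nonneg zero_le_one
  intro y hy
  exact E_nonneg (n_pos hn) hy.1 hy.2

lemma M2' : ∫ y in (0:ℝ)..1, E n y * (y - 72 / 91) ^ 2 ≤ 0.21 / 63015 * Zt n := by
  have h := M2 hn
  have hEc := E_cont n
  have e : ∀ y : ℝ, E n y * (0.21 / 63015 - (y - 72 / 91) ^ 2) = 0.21 / 63015 * E n y - E n y * (y - 72 / 91) ^ 2 := by
    intro y; ring
  simp only [e] at h
  rw [intervalIntegral.integral_sub (Continuous.intervalIntegrable (by fun_prop) _ _) (Continuous.intervalIntegrable (by fun_prop) _ _),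
    intervalIntegral.integral_const_mul] at h
  unfold Zt
  linarith

/-- bathtub bound -/
lemma bathtub : Zt n ≤ 0.0064 * (1.01 * E n (72 / 91)) := by
  have hn0 := n_pos hn
  have hEc := E_cont n
  set B := 1.01 * E n (72 / 91) with hB
  have hc : Continuous fun y => E n y * (0.00316 ^ 2 - (y - 72 / 91) ^ 2) := by fun_prop
  have hlow : (0.00316 ^ 2 - 0.21 / 63015) * Zt n ≤ ∫ y in (0:ℝ)..1, E n y * (0.00316 ^ 2 - (y - 72 / 91) ^ 2) := by
    have e : ∀ y : ℝ, E n y * (0.00316 ^ 2 - (y - 72 / 91) ^ 2) = 0.00316 ^ 2 * E n y - E n y * (y - 72 / 91) ^ 2 := by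
      intro y; ring
    simp only [e]
    rw [intervalIntegral.integral_sub (Continuous.intervalIntegrable (by fun_prop) _ _) (Continuous.intervalIntegrable (by fun_prop) _ _),
      intervalIntegral.integral_const_mul]
    have := M2' hn
    unfold Zt at *
    linarith
  rw [← intervalIntegral.integral_add_adjacent_intervals (hc.intervalIntegrable 0 (72 / 91 - 0.00316)) (hc.intervalIntegrable (72 / 91 - 0.00316) 1),
    ← intervalIntegral.integral_add_adjacent_intervals (hc.intervalIntegrable (72 / 91 - 0.00316) (72 / 91 + 0.00316)) (hc.intervalIntegrable (72 / 91 + 0.00316) 1)] at hlow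
  have i1 : ∫ y in (0:ℝ)..(72 / 91 - 0.00316), E n y * (0.00316 ^ 2 - (y - 72 / 91) ^ 2) ≤ 0 := by
    apply int_nonpos (by norm_num)
    intro y hy
    apply mul_nonpos_of_nonneg_of_nonpos (E_nonneg hn0 hy.1 (hy.2.trans (by norm_num)))
    have := hy.2
    nlinarith
  have i3 : ∫ y in (72 / 91 + 0.00316 : ℝ)..1, E n y * (0.00316 ^ 2 - (y - 72 / 91) ^ 2) ≤ 0 := by
    apply int_nonpos (by norm_num)
    intro y hy
    apply mul_nonpos_of_nonneg_of_nonpos (E_nonneg hn0 (le_trans (by norm_num) hy.1) hy.2)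
    have := hy.1
    nlinarith
  have i2 : ∫ y in (72 / 91 - 0.00316 : ℝ)..(72 / 91 + 0.00316), E n y * (0.00316 ^ 2 - (y - 72 / 91) ^ 2) ≤ B * (4 / 3 * 0.00316 ^ 3) := by
    have h1 : ∫ y in (72 / 91 - 0.00316 : ℝ)..(72 / 91 + 0.00316), E n y * (0.00316 ^ 2 - (y - 72 / 91) ^ 2) ≤
        ∫ y in (72 / 91 - 0.00316 : ℝ)..(72 / 91 + 0.00316), B * (0.00316 ^ 2 - (y - 72 / 91) ^ 2) := by
      refine intervalIntegral.integral_mono_on (by norm_num) (hc.intervalIntegrable _ _) (Continuous.intervalIntegrable (by fun_prop) _ _) fun y hy => ?_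
      apply mul_le_mul_of_nonneg_right
      · exact E_max hn (le_trans (by norm_num) hy.1) (hy.2.trans (by norm_num))
      · have : (y - 72 / 91) ^ 2 ≤ 0.00316 ^ 2 := by apply sq_le_sq' <;> linarith [hy.1, hy.2]
        linarith
    refine h1.trans (le_of_eq ?_)
    rw [intervalIntegral.integral_const_mul]
    congr 1
    have hd : ∀ y : ℝ, HasDerivAt (fun y : ℝ => 0.00316 ^ 2 * y - (y - 72 / 91) ^ 3 / 3)
        (0.00316 ^ 2 * 1 - (((3:ℕ):ℝ) * (y - 72 / 91) ^ 2 * 1) / 3) y := fun y =>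
      ((hasDerivAt_id y).const_mul _).sub ((((hasDerivAt_id y).sub_const _).pow 3).div_const _)
    have := intervalIntegral.integral_eq_sub_of_hasDerivAt (a := 72 / 91 - 0.00316) (b := 72 / 91 + 0.00316) (fun y _ => hd y)
      (Continuous.intervalIntegrable (by fun_prop) _ _)
    have e : ∀ y : ℝ, 0.00316 ^ 2 * 1 - (((3:ℕ):ℝ) * (y - 72 / 91) ^ 2 * 1) / 3 = 0.00316 ^ 2 - (y - 72 / 91) ^ 2 := by
      intro y; push_cast; ring
    simp only [e] at this
    rw [this]; norm_num
  have hZ := Z_nonneg hn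
  norm_num at *
  linarith

end
end QP

namespace QP

noncomputable def Jc (n : ℕ) (c : ℝ) : ℝ := ∫ y in (0:ℝ)..1, E n y * Real.sin (c * y)

lemma sin_rel {x : ℝ} (hx : 0.0172 ≤ x) : |Real.sin x| ≤ x * (1 - 0.0000484) := by
  rcases le_total x 1 with h1 | h1
  · have hb := Real.sin_bound (x := x) (by rw [abs_of_nonneg (by linarith)]; exact h1)
    have x0 : 0 ≤ x := le_trans (by norm_num) hx
    have hs : 0 ≤ Real.sin x := Real.sin_nonneg_of_nonneg_of_le_pi x0 (by linarith [Real.pi_gt_three])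
    rw [abs_of_nonneg hs]
    rw [abs_of_nonneg x0] at hb
    have := (abs_le.1 hb).2
    have h2 : x ^ 5 ≤ x ^ 3 := pow_le_pow_of_le_one x0 h1 (by norm_num)
    have h3 : x * 0.0172 ^ 2 ≤ x ^ 3 := by
      have : x ^ 3 = x * x ^ 2 := by ring
      rw [this]
      exact mul_le_mul_of_nonneg_left (pow_le_pow_left₀ (by norm_num) hx 2) x0
    have h4 : x ^ 5 ≤ x ^ 2 * x ^ 3 := by ring_nf; rfl
    by_cases h5 : x ≤ 0.1
    · have h6 : x ^ 2 ≤ 0.01 := by nlinarith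
      have h7 : x ^ 2 * x ^ 3 ≤ 0.01 * x ^ 3 := mul_le_mul_of_nonneg_right h6 (by positivity)
      norm_num at *; linarith
    · push Not at h5
      have h8 : x * 0.1 ^ 2 ≤ x ^ 3 := by
        have : x ^ 3 = x * x ^ 2 := by ring
        rw [this]
        exact mul_le_mul_of_nonneg_left (pow_le_pow_left₀ (by norm_num) h5.le 2) x0
      norm_num at *; linarith
  · rcases le_total x 2 with h2 | h2
    · have hb := Real.sin_bound (x := 1) (by simp)
      have h3 := (abs_le.1 hb).2
      have h4 := Real.abs_sin_sub_sin_le x 1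
      rw [abs_of_nonneg (show 0 ≤ x - 1 by linarith)] at h4
      have h5 := (abs_le.1 h4).2
      have hs : 0 ≤ Real.sin x := Real.sin_nonneg_of_nonneg_of_le_pi (by linarith) (by linarith [Real.pi_gt_three])
      rw [abs_of_nonneg hs]
      norm_num at *
      linarith
    · refine (Real.abs_sin_le_one x).trans ?_
      norm_num at *; linarith

section
variable {n : ℕ} (hn : (n:ℝ) = 63015)
include hn

lemma abs_J_le_Z (c : ℝ) (s : ℝ → ℝ) (hs : Continuous s) (hb : ∀ y, 0 ≤ y → y ≤ 1 → |Real.sin (c * y)| ≤ s y) :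
    |Jc n c| ≤ ∫ y in (0:ℝ)..1, E n y * s y := by
  have hEc := E_cont n
  have hn0 := n_pos hn
  unfold Jc
  refine (intervalIntegral.abs_integral_le_integral_abs zero_le_one).trans ?_
  refine intervalIntegral.integral_mono_on zero_le_one (Continuous.intervalIntegrable (by fun_prop) _ _)
      (Continuous.intervalIntegrable (by fun_prop) _ _) fun y hy => ?_
  rw [abs_mul, abs_of_nonneg (E_nonneg hn0 hy.1 hy.2)]
  exact mul_le_mul_of_nonneg_left (hb y hy.1 hy.2) (E_nonneg hn0 hy.1 hy.2)

lemma C2a {c : ℝ} (h0 : 4.29 ≤ c) (h1 : c ≤ 5.7) : |Jc n c| ≤ 0.995 * Zt n := by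
  have hEc := E_cont n
  have p1 := Real.pi_gt_d6
  have p2 := Real.pi_lt_d6
  have hs : |Real.sin (c * (72 / 91))| ≤ 0.981 := by
    obtain ⟨t, ht⟩ : ∃ t, t = 3 * Real.pi / 2 - c * (72 / 91) := ⟨_, rfl⟩
    have e : Real.sin (c * (72 / 91)) = - Real.cos t := by
      rw [ht, show 3 * Real.pi / 2 - c * (72 / 91) = (Real.pi / 2 - c * (72 / 91)) + Real.pi by ring,
        Real.cos_add_pi, Real.cos_pi_div_two_sub]
      ring
    have t0 : 0.2 ≤ t := by rw [ht]; norm_num at *; linarith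
    have t1 : t ≤ Real.pi / 2 := by rw [ht]; norm_num at *; linarith
    have hc0 : 0 ≤ Real.cos t := Real.cos_nonneg_of_mem_Icc ⟨by norm_num at *; linarith, t1⟩
    have hc1 : Real.cos t ≤ Real.cos 0.2 := Real.cos_le_cos_of_nonneg_of_le_pi (by norm_num) (by linarith) t0
    have hb := Real.cos_bound (x := 0.2) (by rw [abs_of_nonneg] <;> norm_num)
    have := (abs_le.1 hb).2
    rw [e, abs_neg, abs_of_nonneg hc0]
    rw [abs_of_nonneg (by norm_num)] at this
    norm_num at *
    linarith
  have hb := abs_J_le_Z hn c (fun y => 0.981 + 5.7 * (0.0009 + (y - 72 / 91) ^ 2 / 0.0036)) (by fun_prop) (by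
    intro y _ _
    have h3 := Real.abs_sin_sub_sin_le (c * y) (c * (72 / 91))
    rw [← mul_sub, abs_mul, abs_of_nonneg (show 0 ≤ c by norm_num at *; linarith)] at h3
    have h4 : |y - 72 / 91| ≤ 0.0009 + (y - 72 / 91) ^ 2 / 0.0036 := by
      have hq := sq_abs (y - 72 / 91)
      have := sq_nonneg (|y - 72 / 91| - 0.0018)
      rw [← hq]
      generalize |y - 72 / 91| = v at *
      have : (0.0009 + v ^ 2 / 0.0036 : ℝ) - v = (v - 0.0018) ^ 2 / 0.0036 := by ring
      have : 0 ≤ (v - 0.0018) ^ 2 / 0.0036 := by positivity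
      linarith
    have h5 : c * |y - 72 / 91| ≤ 5.7 * (0.0009 + (y - 72 / 91) ^ 2 / 0.0036) := by
      apply mul_le_mul h1 h4 (abs_nonneg _) (by norm_num)
    have h6 := abs_sub_abs_le_abs_sub (Real.sin (c * y)) (Real.sin (c * (72 / 91)))
    linarith)
  refine hb.trans ?_
  have e : ∀ y : ℝ, E n y * (0.981 + 5.7 * (0.0009 + (y - 72 / 91) ^ 2 / 0.0036)) =
    (0.981 + 5.7 * 0.0009) * E n y + 5.7 / 0.0036 * (E n y * (y - 72 / 91) ^ 2) := by intro y; ring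
  simp only [e]
  rw [intervalIntegral.integral_add (Continuous.intervalIntegrable (by fun_prop) _ _) (Continuous.intervalIntegrable (by fun_prop) _ _),
    intervalIntegral.integral_const_mul, intervalIntegral.integral_const_mul]
  have hM := M2' hn
  have hZ := Z_nonneg hn
  unfold Zt at *
  norm_num at *
  linarith

lemma C2b {c : ℝ} (h0 : 5.69 ≤ c) : |Jc n c| ≤ (1 - 0.45 / 63015) * Zt n := by
  have hEc := E_cont n
  have hn0 := n_pos hn
  have hc0 : 0 < c := lt_of_lt_of_le (by norm_num) h0
  set e := E n (72 / 91) / 4.96 with he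
  have he0 : 0 ≤ e := div_nonneg (E_nonneg hn0 (by norm_num) (by norm_num)) (by norm_num)
  have key : |Jc n c| ≤ Zt n - e * (0.00608 - 2 * |Real.sin (c * 0.00304)| / c) := by
    have split : ∀ f : ℝ → ℝ, Continuous f → ∫ y in (0:ℝ)..1, f y = (∫ y in (0:ℝ)..(72 / 91 - 0.00304), f y) +
        ((∫ y in (72 / 91 - 0.00304 : ℝ)..(72 / 91 + 0.00304), f y) + ∫ y in (72 / 91 + 0.00304 : ℝ)..1, f y) := by
      intro f hf
      rw [intervalIntegral.integral_add_adjacent_intervals (hf.intervalIntegrable _ _) (hf.intervalIntegrable _ _),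
        intervalIntegral.integral_add_adjacent_intervals (hf.intervalIntegrable _ _) (hf.intervalIntegrable _ _)]
    have hfc : Continuous fun y => E n y * Real.sin (c * y) := by fun_prop
    have s1 := split _ hEc
    have s2 := split _ hfc
    have gen : ∀ a b : ℝ, 0 ≤ a → a ≤ b → b ≤ 1 → |∫ y in a..b, E n y * Real.sin (c * y)| ≤ ∫ y in a..b, E n y := by
      intro a b ha hab hb
      refine (intervalIntegral.abs_integral_le_integral_abs hab).trans ?_
      refine intervalIntegral.integral_mono_on hab (Continuous.intervalIntegrable (by fun_prop) _ _)
          (Continuous.intervalIntegrable (by fun_prop) _ _) fun y hy => ?_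
      have := E_nonneg hn0 (ha.trans hy.1) (hy.2.trans hb)
      rw [abs_mul, abs_of_nonneg this]
      exact mul_le_of_le_one_right this (Real.abs_sin_le_one _)
    have g1 := gen 0 (72 / 91 - 0.00304) le_rfl (by norm_num) (by norm_num)
    have g3 := gen (72 / 91 + 0.00304) 1 (by norm_num) (by norm_num) le_rfl
    have hsin : ∫ y in (72 / 91 - 0.00304 : ℝ)..(72 / 91 + 0.00304), Real.sin (c * y) =
        2 * Real.sin (c * (72 / 91)) * Real.sin (c * 0.00304) / c := by
      rw [intervalIntegral.integral_comp_mul_left (fun x => Real.sin x) hc0.ne', integral_sin, smul_eq_mul, mul_sub c, mul_add c,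
        Real.cos_sub, Real.cos_add]
      field_simp
      ring
    have g2 : |∫ y in (72 / 91 - 0.00304 : ℝ)..(72 / 91 + 0.00304), E n y * Real.sin (c * y)| ≤
        (∫ y in (72 / 91 - 0.00304 : ℝ)..(72 / 91 + 0.00304), E n y) - e * 0.00608 + e * (2 * |Real.sin (c * 0.00304)| / c) := by
      have e1 : ∫ y in (72 / 91 - 0.00304 : ℝ)..(72 / 91 + 0.00304), E n y * Real.sin (c * y) =
          (∫ y in (72 / 91 - 0.00304 : ℝ)..(72 / 91 + 0.00304), (E n y - e) * Real.sin (c * y)) +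
          e * ∫ y in (72 / 91 - 0.00304 : ℝ)..(72 / 91 + 0.00304), Real.sin (c * y) := by
        rw [← intervalIntegral.integral_const_mul, ← intervalIntegral.integral_add (Continuous.intervalIntegrable (by fun_prop) _ _)
          (Continuous.intervalIntegrable (by fun_prop) _ _)]
        congr 1; funext y; ring
      have e2 : |∫ y in (72 / 91 - 0.00304 : ℝ)..(72 / 91 + 0.00304), (E n y - e) * Real.sin (c * y)| ≤
          ∫ y in (72 / 91 - 0.00304 : ℝ)..(72 / 91 + 0.00304), (E n y - e) := by
        refine (intervalIntegral.abs_integral_le_integral_abs (by norm_num)).trans ?_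
        refine intervalIntegral.integral_mono_on (by norm_num) (Continuous.intervalIntegrable (by fun_prop) _ _)
          (Continuous.intervalIntegrable (by fun_prop) _ _) fun y hy => ?_
        have h3 : 0 ≤ E n y - e := by
          have := E_local hn hy.1 hy.2
          rw [he, sub_nonneg, div_le_iff₀ (by norm_num)]; linarith
        rw [abs_mul, abs_of_nonneg h3]
        exact mul_le_of_le_one_right h3 (Real.abs_sin_le_one _)
      rw [intervalIntegral.integral_sub (Continuous.intervalIntegrable (by fun_prop) _ _)
          (Continuous.intervalIntegrable (by fun_prop) _ _), intervalIntegral.integral_const, smul_eq_mul] at e2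
      have e3 : |e * ∫ y in (72 / 91 - 0.00304 : ℝ)..(72 / 91 + 0.00304), Real.sin (c * y)| ≤ e * (2 * |Real.sin (c * 0.00304)| / c) := by
        rw [abs_mul, abs_of_nonneg he0, hsin]
        apply mul_le_mul_of_nonneg_left _ he0
        rw [abs_div, abs_of_pos hc0, abs_mul, abs_mul, abs_of_pos (by norm_num : (0:ℝ) < 2)]
        have := Real.abs_sin_le_one (c * (72 / 91))
        gcongr
        nlinarith [abs_nonneg (Real.sin (c * 0.00304))]
      rw [e1]
      refine (abs_add_le _ _).trans ?_
      have e4 : (72 / 91 + 0.00304 - (72 / 91 - 0.00304) : ℝ) * e = e * 0.00608 := by ring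
      rw [e4] at e2
      linarith
    unfold Jc Zt
    rw [s1, s2]
    refine (abs_add_le _ _).trans ?_
    have := abs_add_le (∫ y in (72 / 91 - 0.00304 : ℝ)..(72 / 91 + 0.00304), E n y * Real.sin (c * y)) (∫ y in (72 / 91 + 0.00304 : ℝ)..1, E n y * Real.sin (c * y))
    linarith
  have hr := sin_rel (x := c * 0.00304) (by norm_num at *; linarith)
  have h2 : 2 * |Real.sin (c * 0.00304)| / c ≤ 0.00608 * (1 - 0.0000484) := by
    rw [div_le_iff₀ hc0]; norm_num at *; linarith
  have hB := bathtub hn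
  have h3 : E n (72 / 91) = 4.96 * e := by rw [he]; field_simp
  rw [h3] at hB
  have h4 : e * (0.00608 * 0.0000484) ≤ e * (0.00608 - 2 * |Real.sin (c * 0.00304)| / c) := by
    apply mul_le_mul_of_nonneg_left _ he0
    linarith
  have hZ := Z_nonneg hn
  norm_num at *
  linarith

noncomputable def Wt (n : ℕ) : ℝ := ∫ y in (0:ℝ)..1, E n y * wt y

lemma W_lower : 0.8 / 63015 * Zt n ≤ Wt n := by
  have hEc := E_cont n
  have hn0 := n_pos hn
  have hwc := wt_cont
  have h : ∫ y in (0:ℝ)..1, (2 / 63015 * (1 / 2) * E n y - 2 / 63015 * (E n y * (y - 72 / 91) ^ 2)) ≤ Wt n := by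
    refine intervalIntegral.integral_mono_on zero_le_one (Continuous.intervalIntegrable (by fun_prop) _ _)
      (Continuous.intervalIntegrable (by fun_prop) _ _) fun y hy => ?_
    have hE := E_nonneg hn0 hy.1 hy.2
    have hw : 2 / 63015 * y ≤ wt y := by
      have := Real.mul_le_sin (x := Real.pi * (y / 63015)) (by have := Real.pi_pos; have := hy.1; positivity) (by
        have := Real.pi_pos; have := hy.2; have : y / 63015 ≤ 1 / 2 := by linarith
        nlinarith)
      unfold wt
      refine le_trans (le_of_eq ?_) this
      have := Real.pi_pos
      field_simp
    have h3 : 2 / 63015 * (1 / 2 - (y - 72 / 91) ^ 2) ≤ wt y := by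
      refine le_trans ?_ hw
      apply mul_le_mul_of_nonneg_left _ (by norm_num)
      nlinarith [sq_nonneg (y - 72 / 91 + 1 / 2)]
    have := mul_le_mul_of_nonneg_left h3 hE
    linarith
  rw [intervalIntegral.integral_sub (Continuous.intervalIntegrable (by fun_prop) _ _) (Continuous.intervalIntegrable (by fun_prop) _ _),
    intervalIntegral.integral_const_mul, intervalIntegral.integral_const_mul] at h
  have hM := M2' hn
  have hZ := Z_nonneg hn
  unfold Zt at *
  norm_num at *
  linarith

lemma Z_lower : 0.001 * E n (72 / 91) ≤ Zt n := by
  have hEc := E_cont n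
  have hn0 := n_pos hn
  have h1 : ∫ y in (72 / 91 - 0.00304 : ℝ)..(72 / 91 + 0.00304), E n (72 / 91) / 4.96 ≤ ∫ y in (72 / 91 - 0.00304 : ℝ)..(72 / 91 + 0.00304), E n y := by
    refine intervalIntegral.integral_mono_on (by norm_num) (Continuous.intervalIntegrable (by fun_prop) _ _)
          (Continuous.intervalIntegrable (by fun_prop) _ _) fun y hy => ?_
    have := E_local hn hy.1 hy.2
    rw [div_le_iff₀ (by norm_num)]; linarith
  rw [intervalIntegral.integral_const, smul_eq_mul] at h1
  have a1 : 0 ≤ ∫ y in (0:ℝ)..(72 / 91 - 0.00304), E n y :=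
    intervalIntegral.integral_nonneg (by norm_num) fun y hy => E_nonneg hn0 hy.1 (hy.2.trans (by norm_num))
  have a2 : 0 ≤ ∫ y in (72 / 91 + 0.00304 : ℝ)..1, E n y :=
    intervalIntegral.integral_nonneg (by norm_num) fun y hy => E_nonneg hn0 (le_trans (by norm_num) hy.1) hy.2
  have s : Zt n = (∫ y in (0:ℝ)..(72 / 91 - 0.00304), E n y) +
        ((∫ y in (72 / 91 - 0.00304 : ℝ)..(72 / 91 + 0.00304), E n y) + ∫ y in (72 / 91 + 0.00304 : ℝ)..1, E n y) := by
    unfold Zt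
    rw [intervalIntegral.integral_add_adjacent_intervals (hEc.intervalIntegrable _ _) (hEc.intervalIntegrable _ _),
        intervalIntegral.integral_add_adjacent_intervals (hEc.intervalIntegrable _ _) (hEc.intervalIntegrable _ _)]
  have hp := E_nonneg hn0 (y := 72 / 91) (by norm_num) (by norm_num)
  rw [s]
  generalize E n (72 / 91) = x at *
  norm_num at h1 ⊢
  linarith

end
end QP

namespace QP

lemma prod_sin (m : ℕ) : ∏ k ∈ Finset.range m, (2 * Real.sin (Real.pi * (((k:ℝ) + 1) / (m + 1)))) = m + 1 := by
  have hμ := Complex.isPrimitiveRoot_exp (m + 1) (by omega)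
  have h := hμ.prod_one_sub_pow_eq_order
  have h2 := congrArg norm h
  rw [norm_prod] at h2
  have e : ∀ k ∈ Finset.range m, ‖1 - Complex.exp (2 * Real.pi * Complex.I / ((m + 1 : ℕ) : ℂ)) ^ (k + 1)‖ =
      2 * Real.sin (Real.pi * (((k:ℝ) + 1) / (m + 1))) := by
    intro k hk
    have hk' : (k:ℝ) + 1 ≤ m := by exact_mod_cast Finset.mem_range.1 hk
    rw [← Complex.exp_nat_mul, norm_sub_rev]
    have e1 : ((k + 1 : ℕ) : ℂ) * (2 * Real.pi * Complex.I / ((m + 1 : ℕ) : ℂ)) =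
        Complex.I * ((2 * (Real.pi * (((k:ℝ) + 1) / (m + 1))) : ℝ) : ℂ) := by
      push_cast; ring
    rw [e1, Complex.norm_exp_I_mul_ofReal_sub_one, mul_div_cancel_left₀ _ (by norm_num : (2:ℝ) ≠ 0), Real.norm_of_nonneg]
    have h0 : 0 ≤ ((k:ℝ) + 1) / (m + 1) := by positivity
    have h1 : ((k:ℝ) + 1) / (m + 1) ≤ 1 := by rw [div_le_one (by positivity)]; linarith
    have := Real.sin_nonneg_of_nonneg_of_le_pi (x := Real.pi * (((k:ℝ) + 1) / (m + 1))) (by have := Real.pi_pos; positivity)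
      (mul_le_of_le_one_right Real.pi_pos.le h1)
    positivity
  rw [Finset.prod_congr rfl e] at h2
  rw [h2]
  have : ((m:ℂ) + 1) = ((m + 1 : ℝ) : ℂ) := by push_cast; ring
  rw [this, Complex.norm_of_nonneg (by positivity)]

lemma fact_le {J : ℕ} (hJ : 0 < J) : (J.factorial : ℝ) ≤ 3 * J * (J / Real.exp 1) ^ J := by
  obtain ⟨j, rfl⟩ : ∃ j, J = j + 1 := ⟨J - 1, by omega⟩
  have h := Stirling.stirlingSeq'_antitone (Nat.zero_le j)
  simp only [Function.comp, Nat.succ_eq_add_one, zero_add, Stirling.stirlingSeq_one] at h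
  unfold Stirling.stirlingSeq at h
  generalize hJ : ((j + 1 : ℕ) : ℝ) = x at *
  have hx : 1 ≤ x := by rw [← hJ]; push_cast; have : (0:ℝ) ≤ j := by positivity
                        linarith
  rw [div_le_iff₀ (by positivity)] at h
  refine h.trans ?_
  rw [← mul_assoc]
  apply mul_le_mul_of_nonneg_right _ (by positivity)
  rw [Real.sqrt_mul (by norm_num)]
  have : Real.exp 1 / √2 * (√2 * √x) = Real.exp 1 * √x := by
    have : √2 ≠ 0 := by positivity
    field_simp
  rw [this]
  have h1 : √x ≤ x := by rw [Real.sqrt_le_left (by linarith)]; nlinarith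
  have h2 := Real.exp_one_lt_d9
  exact mul_le_mul (by linarith) h1 (by positivity) (by norm_num)

lemma E_tail {n J : ℕ} (hn : 0 < n) : ((n + J + 1 : ℕ) : ℝ) ≤
    E n (n / ((n + J + 1 : ℕ) : ℝ)) * ((2 * Real.pi / ((n + J + 1 : ℕ) : ℝ)) ^ J * J.factorial) := by
  have hp := prod_sin (n + J)
  rw [Finset.prod_range_add] at hp
  have hn' : (0:ℝ) < n := by exact_mod_cast hn
  have hm : (0:ℝ) < ((n + J + 1 : ℕ) : ℝ) := by positivity
  have e1 : ∏ k ∈ Finset.range n, (2 * Real.sin (Real.pi * (((k:ℝ) + 1) / ((n + J : ℕ) + 1)))) = E n (n / ((n + J + 1 : ℕ) : ℝ)) := by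
    rw [E_eq hn]
    refine Finset.prod_congr rfl fun k _ => ?_
    congr 3
    push_cast
    field_simp
  rw [e1] at hp
  have hE : 0 ≤ E n (n / ((n + J + 1 : ℕ) : ℝ)) := by
    apply E_nonneg hn (by positivity)
    rw [div_le_one hm]; push_cast; have : (0:ℝ) ≤ J := by positivity
    linarith
  have e2 : ((n + J + 1 : ℕ) : ℝ) = ((n + J : ℕ) : ℝ) + 1 := by push_cast; ring
  conv_lhs => rw [e2]
  rw [← hp]
  refine mul_le_mul_of_nonneg_left ?_ hE
  rw [← Finset.prod_range_reflect, ← Finset.prod_range_add_one_eq_factorial]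
  push_cast
  have hc : (2 * Real.pi / ((n:ℝ) + J + 1)) ^ J = ∏ k ∈ Finset.range J, (2 * Real.pi / ((n:ℝ) + J + 1)) := by rw [Finset.prod_const, Finset.card_range]
  rw [hc, ← Finset.prod_mul_distrib]
  have key : ∀ k ∈ Finset.range J, Real.sin (Real.pi * (((n:ℝ) + ((J - 1 - k : ℕ) : ℝ) + 1) / ((n:ℝ) + J + 1))) =
      Real.sin (Real.pi * (((k:ℝ) + 1) / ((n:ℝ) + J + 1))) := by
    intro k hk
    have hk' := Finset.mem_range.1 hk
    have : ((J - 1 - k : ℕ) : ℝ) = J - 1 - k := by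
      rw [Nat.sub_sub, Nat.cast_sub (by omega)]; push_cast; ring
    rw [this, ← Real.sin_pi_sub]
    congr 1
    field_simp
    ring
  refine Finset.prod_le_prod (fun k hk => ?_) fun k hk => ?_
  · rw [key k hk]
    have hk' : (k:ℝ) + 1 ≤ J := by exact_mod_cast Finset.mem_range.1 hk
    have h1 : ((k:ℝ) + 1) / ((n:ℝ) + J + 1) ≤ 1 := by rw [div_le_one (by positivity)]; linarith
    have := Real.sin_nonneg_of_nonneg_of_le_pi (x := Real.pi * (((k:ℝ) + 1) / ((n:ℝ) + J + 1))) (by have := Real.pi_pos; positivity)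
      (mul_le_of_le_one_right Real.pi_pos.le h1)
    positivity
  · rw [key k hk]
    have := Real.sin_le (x := Real.pi * (((k:ℝ) + 1) / ((n:ℝ) + J + 1))) (by have := Real.pi_pos; positivity)
    refine (mul_le_mul_of_nonneg_left this (by norm_num : (0:ℝ) ≤ 2)).trans (le_of_eq ?_)
    ring

lemma exp07 : Real.exp 0.7 ≤ 2.05 := by
  have h : Real.exp 0.7 ^ 10 ≤ 2.05 ^ 10 := by
    rw [← Real.exp_nat_mul]
    have : ((10:ℕ):ℝ) * 0.7 = ((7:ℕ):ℝ) * 1 := by norm_num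
    rw [this, Real.exp_nat_mul]
    refine (pow_le_pow_left₀ (Real.exp_pos _).le Real.exp_one_lt_d9.le 7).trans ?_
    norm_num
  exact le_of_pow_le_pow_left₀ (by norm_num) (by norm_num) h

lemma E_big {n : ℕ} (hn : (n:ℝ) = 63015) : Real.exp 11638 ≤ 1.01 * E n (72 / 91) := by
  have hn0 := n_pos hn
  obtain ⟨J, hJ⟩ : ∃ J : ℕ, J = 16628 := ⟨_, rfl⟩
  have hJr : (J:ℝ) = 16628 := by rw [hJ]; norm_num
  have h1 := E_tail (J := J) hn0
  have h2 := fact_le (J := J) (by omega)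
  have hm : ((n + J + 1 : ℕ) : ℝ) = 79644 := by push_cast; rw [hn, hJr]; norm_num
  rw [hm] at h1
  have hmx := E_max hn (y := n / 79644) (by positivity) (by rw [hn]; norm_num)
  have hE0 := E_nonneg hn0 (y := n / 79644) (by positivity) (by rw [hn]; norm_num)
  refine le_trans ?_ hmx
  generalize E n (n / 79644) = e at *
  have h3 : (2 * Real.pi / 79644) ^ J * (J.factorial : ℝ) ≤ 49884 * Real.exp (-11638) := by
    have hp := Real.pi_pos
    calc (2 * Real.pi / 79644) ^ J * (J.factorial : ℝ) ≤ (2 * Real.pi / 79644) ^ J * (3 * J * (J / Real.exp 1) ^ J) :=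
          mul_le_mul_of_nonneg_left h2 (by positivity)
      _ = 49884 * ((2 * Real.pi / 79644) * (J / Real.exp 1)) ^ J := by rw [mul_pow]; simp only [hJr]; ring
      _ ≤ 49884 * (Real.exp (-0.7)) ^ J := by
          apply mul_le_mul_of_nonneg_left _ (by norm_num)
          apply pow_le_pow_left₀ (by positivity)
          rw [hJr, Real.exp_neg]
          have a1 : (2.05:ℝ)⁻¹ ≤ (Real.exp 0.7)⁻¹ := by
            rw [inv_le_inv₀ (by norm_num) (Real.exp_pos _)]; exact exp07
          refine le_trans ?_ a1
          have a2 : (16628:ℝ) / Real.exp 1 ≤ 16628 / 2.7 := by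
            apply div_le_div_of_nonneg_left (by norm_num) (by norm_num)
            have := Real.exp_one_gt_d9
            norm_num at *; linarith
          have a3 : 2 * Real.pi / 79644 ≤ 2 * 3.1416 / 79644 := by have := Real.pi_lt_d4; gcongr
          refine (mul_le_mul a3 a2 (by positivity) (by norm_num)).trans ?_
          norm_num
      _ ≤ 49884 * Real.exp (-11638) := by
          rw [← Real.exp_nat_mul, hJr]
          gcongr
          norm_num
  have h4 := h1.trans (mul_le_mul_of_nonneg_left h3 hE0)
  have h5 : Real.exp (-11638) * Real.exp 11638 = 1 := by rw [← Real.exp_add]; norm_num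
  have h6 := Real.exp_pos 11638
  have h7 := mul_le_mul_of_nonneg_right h4 h6.le
  rw [show e * (49884 * Real.exp (-11638)) * Real.exp 11638 = 49884 * e * (Real.exp (-11638) * Real.exp 11638) by ring, h5] at h7
  linarith

end QP

namespace QP

noncomputable def JJ (n d : ℕ) : ℝ := Jc n (2 * Real.pi * d / 63015)

lemma cos_cmp {a b : ℝ} (h0 : 0 ≤ a) (h1 : a ≤ b) (h2 : a + b ≤ 2 * Real.pi) : Real.cos b ≤ Real.cos a := by
  have h := Real.cos_sub_cos b a
  have s1 := Real.sin_nonneg_of_nonneg_of_le_pi (x := (b + a) / 2) (by linarith) (by linarith)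
  have s2 := Real.sin_nonneg_of_nonneg_of_le_pi (x := (b - a) / 2) (by linarith) (by linarith)
  have := mul_nonneg s1 s2
  linarith

lemma JJ_step (n d : ℕ) : JJ n (d + 1) - JJ n d =
    2 * ∫ y in (0:ℝ)..1, E n y * (wt y * Real.cos (Real.pi * ((2 * d + 1) / 63015) * y)) := by
  have hEc := E_cont n
  unfold JJ Jc
  rw [← intervalIntegral.integral_sub (Continuous.intervalIntegrable (by fun_prop) _ _) (Continuous.intervalIntegrable (by fun_prop) _ _),
    ← intervalIntegral.integral_const_mul]
  congr 1
  funext y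
  rw [← mul_sub, Real.sin_sub_sin]
  unfold wt
  push_cast
  have e1 : (2 * Real.pi * ((d:ℝ) + 1) / 63015 * y - 2 * Real.pi * d / 63015 * y) / 2 = Real.pi * (y / 63015) := by ring
  have e2 : (2 * Real.pi * ((d:ℝ) + 1) / 63015 * y + 2 * Real.pi * d / 63015 * y) / 2 = Real.pi * ((2 * d + 1) / 63015) * y := by ring
  rw [e1, e2]
  ring

lemma wt_nonneg {y : ℝ} (h0 : 0 ≤ y) (h1 : y ≤ 1) : 0 ≤ wt y := by
  unfold wt
  have hp := Real.pi_pos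
  apply Real.sin_nonneg_of_nonneg_of_le_pi (by positivity)
  apply mul_le_of_le_one_right hp.le
  linarith

section
variable {n : ℕ} (hn : (n:ℝ) = 63015)
include hn

lemma A1' : 0.1 / 63015 * Wt n ≤ ∫ y in (0:ℝ)..1, E n y * (wt y * Real.cos (Real.pi * (39821 / 63015) * y)) := by
  have hEc := E_cont n
  have hwc := wt_cont
  have h := A1 hn
  have e : ∀ y : ℝ, E n y * (wt y * (Real.cos (Real.pi * (39821 / 63015) * y) - 0.1 / 63015)) =
    E n y * (wt y * Real.cos (Real.pi * (39821 / 63015) * y)) - 0.1 / 63015 * (E n y * wt y) := by intro y; ring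
  simp only [e] at h
  rw [intervalIntegral.integral_sub (Continuous.intervalIntegrable (by fun_prop) _ _) (Continuous.intervalIntegrable (by fun_prop) _ _),
    intervalIntegral.integral_const_mul] at h
  unfold Wt
  linarith

lemma A2' : ∫ y in (0:ℝ)..1, E n y * (wt y * Real.cos (Real.pi * (39823 / 63015) * y)) ≤ -(0.1 / 63015 * Wt n) := by
  have hEc := E_cont n
  have hwc := wt_cont
  have h := A2 hn
  have e : ∀ y : ℝ, E n y * (wt y * (-Real.cos (Real.pi * (39823 / 63015) * y) - 0.1 / 63015)) =
    (-1) * (E n y * (wt y * Real.cos (Real.pi * (39823 / 63015) * y))) - 0.1 / 63015 * (E n y * wt y) := by intro y; ring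
  simp only [e] at h
  rw [intervalIntegral.integral_sub (Continuous.intervalIntegrable (by fun_prop) _ _) (Continuous.intervalIntegrable (by fun_prop) _ _),
    intervalIntegral.integral_const_mul, intervalIntegral.integral_const_mul] at h
  unfold Wt
  linarith

lemma cos_int_mono {a b : ℝ} (h0 : 0 ≤ a) (h1 : a ≤ b) (h2 : a + b ≤ 126030) :
    ∫ y in (0:ℝ)..1, E n y * (wt y * Real.cos (Real.pi * (b / 63015) * y)) ≤
    ∫ y in (0:ℝ)..1, E n y * (wt y * Real.cos (Real.pi * (a / 63015) * y)) := by
  have hEc := E_cont n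
  have hwc := wt_cont
  have hn0 := n_pos hn
  refine intervalIntegral.integral_mono_on zero_le_one (Continuous.intervalIntegrable (by fun_prop) _ _)
      (Continuous.intervalIntegrable (by fun_prop) _ _) fun y hy => ?_
  have hp := Real.pi_pos
  have hy0 := hy.1
  refine mul_le_mul_of_nonneg_left (mul_le_mul_of_nonneg_left ?_ (wt_nonneg hy.1 hy.2)) (E_nonneg hn0 hy.1 hy.2)
  apply cos_cmp (by positivity) (by gcongr)
  have h3 : Real.pi * (a / 63015) * y + Real.pi * (b / 63015) * y = Real.pi * ((a + b) / 63015 * y) := by ring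
  rw [h3, mul_comm 2]
  apply mul_le_mul_of_nonneg_left _ hp.le
  have h4 : (a + b) / 63015 ≤ 2 := by linarith
  calc (a + b) / 63015 * y ≤ 2 * 1 := mul_le_mul h4 hy.2 hy0 (by norm_num)
    _ = 2 := by norm_num

lemma up_step {d : ℕ} (hd : d ≤ 19910) : JJ n d + 0.2 / 63015 * Wt n ≤ JJ n (d + 1) := by
  have hs := JJ_step n d
  have hd' : (d:ℝ) ≤ 19910 := by exact_mod_cast hd
  have h := cos_int_mono hn (a := 2 * d + 1) (b := 39821) (by positivity) (by linarith) (by linarith)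
  have h2 := A1' hn
  have e : (0.2 / 63015 * Wt n : ℝ) = 2 * (0.1 / 63015 * Wt n) := by ring
  linarith

lemma down_step {d : ℕ} (hd0 : 19911 ≤ d) (hd : d ≤ 43102) : JJ n (d + 1) ≤ JJ n d - 0.2 / 63015 * Wt n := by
  have hs := JJ_step n d
  have hd' : (d:ℝ) ≤ 43102 := by exact_mod_cast hd
  have hd0' : (19911:ℝ) ≤ d := by exact_mod_cast hd0
  have h := cos_int_mono hn (a := 39823) (b := 2 * d + 1) (by positivity) (by linarith) (by linarith)
  have h2 := A2' hn
  have e : (0.2 / 63015 * Wt n : ℝ) = 2 * (0.1 / 63015 * Wt n) := by ring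
  linarith

lemma W_nonneg : 0 ≤ 0.2 / 63015 * Wt n := by
  have h := W_lower hn
  have hZ := Z_nonneg hn
  have : 0 ≤ Wt n := le_trans (by positivity) h
  positivity

lemma up_chain {d e : ℕ} (hde : d ≤ e) (he : e ≤ 19911) : JJ n d ≤ JJ n e := by
  have hW := W_nonneg hn
  induction e, hde using Nat.le_induction with
  | base => exact le_rfl
  | succ k hk ih =>
    have := up_step hn (d := k) (by omega)
    have := ih (by omega)
    linarith

lemma down_chain {d e : ℕ} (hd : 19911 ≤ d) (hde : d ≤ e) (he : e ≤ 43103) : JJ n e ≤ JJ n d := by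
  have hW := W_nonneg hn
  induction e, hde using Nat.le_induction with
  | base => exact le_rfl
  | succ k hk ih =>
    have := down_step hn (d := k) (by omega) (by omega)
    have := ih (by omega)
    linarith

lemma JJ_star : (1 - 0.415 / 63015) * Zt n ≤ JJ n 19911 := by
  have h := C1 hn
  unfold JJ Jc Zt
  refine h.trans (le_of_eq ?_)
  congr 1
  funext y
  congr 2
  push_cast
  ring

lemma main_gap {d : ℕ} (hd : d ≠ 19911) : |JJ n d| ≤ JJ n 19911 - 0.16 / 63015 ^ 2 * Zt n := by
  have hZ := Z_nonneg hn
  have hS := JJ_star hn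
  have hW := W_lower hn
  have hW0 := W_nonneg hn
  have p1 := Real.pi_gt_d6
  have p2 := Real.pi_lt_d6
  have hg : 0.16 / 63015 ^ 2 * Zt n ≤ 0.2 / 63015 * Wt n := by
    have := mul_le_mul_of_nonneg_left hW (show (0:ℝ) ≤ 0.2 / 63015 by norm_num)
    refine le_trans (le_of_eq ?_) this
    ring
  have big : ∀ d : ℕ, 43103 ≤ d → |JJ n d| ≤ (1 - 0.45 / 63015) * Zt n := by
    intro d hd
    have hd' : (43103:ℝ) ≤ d := by exact_mod_cast hd
    rcases le_total d 57100 with h | h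
    · have h' : (d:ℝ) ≤ 57100 := by exact_mod_cast h
      have := C2a hn (c := 2 * Real.pi * d / 63015) (by
        rw [le_div_iff₀ (by norm_num)]
        have : 2 * 3.141592 * (43103:ℝ) ≤ 2 * Real.pi * d := by gcongr
        norm_num at *; linarith) (by
        rw [div_le_iff₀ (by norm_num)]
        have : 2 * Real.pi * d ≤ 2 * 3.141593 * (57100:ℝ) := by gcongr
        norm_num at *; linarith)
      refine this.trans ?_
      apply mul_le_mul_of_nonneg_right (by norm_num) hZ
    · have h' : (57100:ℝ) ≤ d := by exact_mod_cast h
      exact C2b hn (c := 2 * Real.pi * d / 63015) (by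
        rw [le_div_iff₀ (by norm_num)]
        have : 2 * 3.141592 * (57100:ℝ) ≤ 2 * Real.pi * d := by gcongr
        norm_num at *; linarith)
  have hz : (1 - 0.45 / 63015) * Zt n ≤ JJ n 19911 - 0.16 / 63015 ^ 2 * Zt n := by
    have : (1 - 0.45 / 63015) * Zt n + 0.16 / 63015 ^ 2 * Zt n ≤ (1 - 0.415 / 63015) * Zt n := by
      rw [← add_mul]
      exact mul_le_mul_of_nonneg_right (by norm_num) hZ
    linarith
  rcases le_total 43103 d with h | h
  · exact (big d h).trans hz
  · rcases lt_or_gt_of_ne hd with h2 | h2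
    · have h3 := up_chain hn (d := 0) (e := d) (by omega) (by omega)
      have h4 : JJ n 0 = 0 := by simp [JJ, Jc]
      rw [abs_of_nonneg (by linarith)]
      have h5 := up_chain hn (d := d) (e := 19910) (by omega) (by omega)
      have h6 := up_step hn (d := 19910) (by omega)
      norm_num only at h6
      norm_num at *
      linarith
    · have h3 := down_chain hn (d := d) (e := 43103) (by omega) h le_rfl
      have h4 := (abs_le.1 (big 43103 le_rfl)).1
      have h5 := down_chain hn (d := 19912) (e := d) (by omega) (by omega) h
      have h6 := down_step hn (d := 19911) (by omega) (by omega)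
      rw [show 19911 + 1 = 19912 from rfl] at h6
      rw [abs_le]
      constructor <;> linarith

lemma Z_big : 63015 * Real.exp 11468 < 0.16 / 63015 ^ 2 * Zt n := by
  have h1 := E_big hn
  have h2 := Z_lower hn
  have h3 : Real.exp 11638 = Real.exp 170 * Real.exp 11468 := by rw [← Real.exp_add]; norm_num
  have h4 : (2:ℝ) ^ 170 ≤ Real.exp 170 := by
    have : Real.exp 170 = Real.exp 1 ^ 170 := by rw [← Real.exp_nat_mul]; norm_num
    rw [this]
    apply pow_le_pow_left₀ (by norm_num)
    have := Real.exp_one_gt_d9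
    norm_num at *; linarith
  have h5 := Real.exp_pos 11468
  rw [h3] at h1
  have h6 := mul_le_mul_of_nonneg_right h4 h5.le
  generalize Real.exp 11468 = x at *
  generalize Real.exp 170 * x = z at *
  norm_num at *
  linarith

noncomputable def II (n : ℕ) (d : ℝ) : ℝ := ∫ θ in (0:ℝ)..Real.pi, S n θ * Real.sin (d * θ)

lemma II_approx (d : ℕ) : |II n d - 2 * Real.pi / 63015 * JJ n d| ≤ Real.pi * Real.exp 11468 := by
  have hp := Real.pi_pos
  have hSc := S_cont n
  have hfc : Continuous fun θ => S n θ * Real.sin (d * θ) := by fun_prop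
  have hle : 2 * Real.pi / 63015 ≤ Real.pi := by linarith
  have e1 : 2 * Real.pi / 63015 * JJ n d = ∫ θ in (0:ℝ)..(2 * Real.pi / 63015), S n θ * Real.sin (d * θ) := by
    have h := intervalIntegral.integral_comp_mul_left (a := 0) (b := 1) (fun θ => S n θ * Real.sin (d * θ))
      (show (2 * Real.pi / 63015) ≠ 0 by positivity)
    rw [mul_zero, mul_one, smul_eq_mul] at h
    have h2 : JJ n d = ∫ y in (0:ℝ)..1, S n (2 * Real.pi / 63015 * y) * Real.sin (d * (2 * Real.pi / 63015 * y)) := by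
      unfold JJ Jc E
      congr 1
      funext y
      rw [hn]
      congr 2 <;> ring
    rw [h2, h, ← mul_assoc, mul_inv_cancel₀ (by positivity), one_mul]
  have e2 : II n d - 2 * Real.pi / 63015 * JJ n d = ∫ θ in (2 * Real.pi / 63015)..Real.pi, S n θ * Real.sin (d * θ) := by
    rw [e1]
    unfold II
    rw [intervalIntegral.integral_interval_sub_left (hfc.intervalIntegrable _ _) (hfc.intervalIntegrable _ _)]
  rw [e2]
  have h := intervalIntegral.norm_integral_le_of_norm_le_const (a := 2 * Real.pi / 63015) (b := Real.pi)
    (f := fun θ => S n θ * Real.sin (d * θ)) (C := Real.exp 11468) (by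
      intro θ hθ
      rw [Set.uIoc_of_le hle] at hθ
      rw [Real.norm_eq_abs, abs_mul]
      have h1 := minor_arc hn (by rw [hn]; exact hθ.1.le) hθ.2
      calc |S n θ| * |Real.sin (d * θ)| ≤ Real.exp 11468 * 1 :=
            mul_le_mul h1 (Real.abs_sin_le_one _) (abs_nonneg _) (Real.exp_pos _).le
        _ = _ := mul_one _)
  rw [Real.norm_eq_abs, abs_of_nonneg (show 0 ≤ Real.pi - 2 * Real.pi / 63015 by linarith), mul_comm (Real.exp 11468)] at h
  refine h.trans ?_
  apply mul_le_mul_of_nonneg_right _ (Real.exp_pos _).le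
  have : 0 < 2 * Real.pi / 63015 := by positivity
  linarith

lemma II_lt {d : ℕ} (hd : d ≠ 19911) : |II n d| < |II n (19911 : ℕ)| := by
  have hp := Real.pi_pos
  have h1 := II_approx hn d
  have h2 := II_approx hn 19911
  have h3 := main_gap hn hd
  have h4 := Z_big hn
  generalize II n (19911 : ℕ) = A at *
  have h5 : |II n d| ≤ 2 * Real.pi / 63015 * |JJ n d| + Real.pi * Real.exp 11468 := by
    have := abs_add_le (II n d - 2 * Real.pi / 63015 * JJ n d) (2 * Real.pi / 63015 * JJ n d)
    rw [sub_add_cancel, abs_mul, abs_of_pos (show 0 < 2 * Real.pi / 63015 by positivity)] at this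
    linarith
  have h6 : 2 * Real.pi / 63015 * JJ n 19911 - Real.pi * Real.exp 11468 ≤ |A| := by
    have := (abs_le.1 h2).1
    have := le_abs_self A
    linarith
  have h7 : |JJ n d| + 63015 * Real.exp 11468 < JJ n 19911 := by linarith
  have h8 := mul_lt_mul_of_pos_left h7 (show 0 < 2 * Real.pi / 63015 by positivity)
  have h9 : 2 * Real.pi / 63015 * (|JJ n d| + 63015 * Real.exp 11468) =
    2 * Real.pi / 63015 * |JJ n d| + 2 * (Real.pi * Real.exp 11468) := by ring
  linarith

lemma a_abs (i : ℕ) : Real.pi * ((a n i).natAbs : ℝ) = |II n ((992738310 - (i:ℤ)).natAbs : ℕ)| := by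
  have hn' : n = 63015 := by exact_mod_cast hn
  have h := coeff_int n 992738310 (by omega) (by rw [hn']) i
  have e : Real.pi * ((a n i).natAbs : ℝ) = |Real.pi * (a n i : ℝ)| := by
    rw [abs_mul, abs_of_pos Real.pi_pos, Nat.cast_natAbs, Int.cast_abs]
  rw [e, h, abs_neg]
  unfold II
  have hr : (((992738310 - (i:ℤ)).natAbs : ℕ) : ℝ) = |((992738310 : ℕ) : ℝ) - (i:ℝ)| := by
    rw [Nat.cast_natAbs, Int.cast_abs]; push_cast; rfl
  rw [hr]
  rcases abs_choice (((992738310 : ℕ) : ℝ) - (i:ℝ)) with h2 | h2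
  · rw [h2]
  · rw [h2]
    simp only [neg_mul, Real.sin_neg, mul_neg]
    rw [intervalIntegral.integral_neg, abs_neg]

lemma a_lt {i : ℕ} (hi : (992738310 - (i:ℤ)).natAbs ≠ 19911) : (a n i).natAbs < (a n 992718399).natAbs := by
  have h1 := a_abs hn i
  have h2 := a_abs hn 992718399
  have h3 := II_lt hn hi
  have e : (992738310 - ((992718399 : ℕ):ℤ)).natAbs = 19911 := by norm_num
  rw [e] at h2
  rw [← h1, ← h2] at h3
  have := lt_of_mul_lt_mul_left h3 Real.pi_pos.le
  exact_mod_cast this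

lemma a_le (i : ℕ) : (a n i).natAbs ≤ (a n 992718399).natAbs := by
  by_cases hi : (992738310 - (i:ℤ)).natAbs = 19911
  · have h1 := a_abs hn i
    have h2 := a_abs hn 992718399
    have e : (992738310 - ((992718399 : ℕ):ℤ)).natAbs = 19911 := by norm_num
    rw [e] at h2
    rw [hi, ← h2] at h1
    have := mul_left_cancel₀ Real.pi_pos.ne' h1
    have : (a n i).natAbs = (a n 992718399).natAbs := by exact_mod_cast this
    exact this.le
  · exact (a_lt hn hi).le

lemma L_eq : L n = 992718399 := by
  have hn' : n = 63015 := by exact_mod_cast hn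
  have hM : M n = (a n 992718399).natAbs := by
    unfold M
    apply le_antisymm
    · exact Finset.sup_le fun i _ => a_le hn i
    · exact Finset.le_sup (f := fun i => (a n i).natAbs) (Finset.mem_range.2 (by rw [hn']; norm_num))
  unfold L
  rw [hM]
  apply le_antisymm
  · exact Nat.sInf_le rfl
  · apply le_csInf (Set.nonempty_of_mem (x := 992718399) (by simp))
    intro i hi
    by_contra hlt
    have := a_lt hn (i := i) (by omega)
    have hi' : (a n i).natAbs = (a n 992718399).natAbs := hi
    omega

end

end QP

/-- `L(63015) = 63015·63016/4 - 124 - 19787`, where `63015 = 391 + 62624`. -/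
theorem stmt_17 : L 63015 = 63015 * 63016 / 4 - 124 - 19787 := by
  rw [QP.L_eq (by norm_num)]
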